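/- Let (C,p,Q) be a Brascamp–Lieb datum with BL(C,p,Q) < +∞, and suppose it is extremizable: there exist nonnegative functions f_i ∈ L¹(ℝ^{n_i}), not almost everywhere zero, each more log-convex than g_{Q_i}, such that ∫_{ℝⁿ} ∏_{i=1}^m f_i(C_i x)^{p_i} dx = BL(C,p,Q) · ∏_{i=1}^m (∫_{ℝ^{n_i}} f_i)^{p_i}. Then it is Gaussian-extremizable: there exist symmetric matrices B_i with 0 < B_i ≤ Q_i such that BL(C,p,Q)² = ∏_{i=1}^m det(B_i)^{p_i} / det(∑_{i=1}^m p_i C_iᵀ B_i C_i). -/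

import Mathlib

open MeasureTheory Matrix
open scoped ENNReal

noncomputable section

/-- The centered Gaussian function attached to a matrix `Q` : `g_Q(x) = exp(-π⟨Qx,x⟩)`. -/
def gaussFn {k : ℕ} (Q : Matrix (Fin k) (Fin k) ℝ) (x : Fin k → ℝ) : ℝ :=
  Real.exp (-Real.pi * (Q.mulVec x ⬝ᵥ x))

/-- A nonnegative log-convex function. -/
def LogConvexFun {k : ℕ} (h : (Fin k → ℝ) → ℝ) : Prop :=
  (∀ x, 0 ≤ h x) ∧
    ∀ x y : Fin k → ℝ, ∀ a b : ℝ, 0 ≤ a → 0 ≤ b → a + b = 1 →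
      h (a • x + b • y) ≤ h x ^ a * h y ^ b

/-- `f` is more log-convex than `g_Q`, i.e. `f = g_Q · h` with `h` log-convex. -/
def MoreLogConvex {k : ℕ} (f : (Fin k → ℝ) → ℝ) (Q : Matrix (Fin k) (Fin k) ℝ) : Prop :=
  ∃ h : (Fin k → ℝ) → ℝ, LogConvexFun h ∧ f = fun x => gaussFn Q x * h x

/-- The regularized Brascamp–Lieb constant of a datum `(C, p, Q)`. -/
def BLconst {n m : ℕ} {ni : Fin m → ℕ} (C : ∀ i, Matrix (Fin (ni i)) (Fin n) ℝ)
    (p : Fin m → ℝ) (Q : ∀ i, Matrix (Fin (ni i)) (Fin (ni i)) ℝ) : ℝ≥0∞ :=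
  ⨆ (B : ∀ i, Matrix (Fin (ni i)) (Fin (ni i)) ℝ)
    (_ : ∀ i, (B i).PosDef ∧ (Q i - B i).PosSemidef),
    ((∏ i, ENNReal.ofReal ((B i).det) ^ p i) /
        ENNReal.ofReal ((∑ i, p i • ((C i)ᵀ * B i * C i)).det)) ^ ((2 : ℝ)⁻¹)

open ProbabilityTheory Filter Topology

/-! ### Second-order expansion of weighted geometric means -/

lemma log_one_add_le_cubic {t : ℝ} (ht : -1 < t) :
    Real.log (1 + t) ≤ t - t ^ 2 / 2 + 2 * |t| ^ 3 := by
  by_cases h : |t| ≤ 1 / 2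
  · have h1 : |(-t)| < 1 := by rw [abs_neg]; linarith
    have := Real.abs_log_sub_add_sum_range_le h1 2
    simp only [Finset.sum_range_succ, Finset.sum_range_zero, sub_neg_eq_add, abs_neg] at this
    have h2 : |t| ^ (2 + 1) / (1 - |t|) ≤ 2 * |t| ^ 3 := by
      rw [div_le_iff₀ (by linarith)]
      have h0 : 0 ≤ |t| ^ 3 * (1 / 2 - |t|) := mul_nonneg (by positivity) (sub_nonneg.2 h)
      change |t| ^ 3 ≤ _
      linarith
    have h3 := (abs_le.1 (this.trans h2)).2
    norm_num at h3
    linarith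
  · have h1 : Real.log (1 + t) ≤ t := by
      have := Real.log_le_sub_one_of_pos (show 0 < 1 + t by linarith)
      linarith
    have h2 : t ^ 2 = |t| ^ 2 := (sq_abs t).symm
    rw [h2]
    push Not at h
    nlinarith [sq_nonneg |t|, mul_nonneg (sq_nonneg |t|) (sub_nonneg.2 h.le)]

lemma exp_le_quadratic_add_cubic (s : ℝ) :
    Real.exp s ≤ 1 + s + s ^ 2 / 2 + |s| ^ 3 * Real.exp |s| := by
  have := Complex.norm_exp_sub_sum_le_norm_mul_exp (s : ℂ) 3
  rw [Complex.norm_real, Real.norm_eq_abs] at this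
  have h2 : Complex.exp (s : ℂ) - ∑ m ∈ Finset.range 3, (s : ℂ) ^ m / (m.factorial : ℂ)
      = ((Real.exp s - (1 + s + s ^ 2 / 2) : ℝ) : ℂ) := by
    simp [Finset.sum_range_succ, Nat.factorial]
  rw [h2, Complex.norm_real, Real.norm_eq_abs] at this
  linarith [(abs_le.1 this).2]

/-- A weighted geometric mean is bounded by its second-order Taylor polynomial, up to a cubic
error, uniformly on bounded sets. -/
lemma exists_prod_one_add_rpow_le {ι : Type*} [Fintype ι] (q : ι → ℝ) (hq : ∀ i, 0 ≤ q i)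
    (R : ℝ) :
    ∃ A : ℝ, 0 ≤ A ∧ ∀ t : ι → ℝ, ∀ τ : ℝ, (∀ i, -1 < t i) → (∀ i, |t i| ≤ τ) → τ ≤ R →
      ∏ i, (1 + t i) ^ q i ≤
        1 + ∑ i, q i * t i + ((∑ i, q i * t i) ^ 2 - ∑ i, q i * t i ^ 2) / 2 + A * τ ^ 3 := by
  set S := ∑ i, q i with hS
  have hS0 : 0 ≤ S := Finset.sum_nonneg fun i _ => hq i
  set a := S + S * |R| / 2 + 2 * S * |R| ^ 2 with ha
  set b := S / 2 + 2 * S * |R| with hb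
  have ha0 : 0 ≤ a := by positivity
  have hb0 : 0 ≤ b := by positivity
  refine ⟨2 * S + S * b + b ^ 2 * |R| / 2 + a ^ 3 * Real.exp (a * |R|), by positivity, ?_⟩
  intro t τ ht hτ hR
  rcases isEmpty_or_nonempty ι with hι | ⟨⟨i0⟩⟩
  · simp [hS, ha, hb]
  have hτ0 : 0 ≤ τ := (abs_nonneg _).trans (hτ i0)
  have hτR : τ ≤ |R| := hR.trans (le_abs_self R)
  set σ := ∑ i, q i * t i with hσ
  set κ := ∑ i, q i * t i ^ 2 with hκ
  set c := ∑ i, q i * |t i| ^ 3 with hc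
  have hσb : |σ| ≤ S * τ := by
    calc |σ| ≤ ∑ i, |q i * t i| := Finset.abs_sum_le_sum_abs _ _
      _ ≤ ∑ i, q i * τ := Finset.sum_le_sum fun i _ => by
          rw [abs_mul, abs_of_nonneg (hq i)]; exact mul_le_mul_of_nonneg_left (hτ i) (hq i)
      _ = S * τ := by rw [hS, Finset.sum_mul]
  have hκ0 : 0 ≤ κ := Finset.sum_nonneg fun i _ => mul_nonneg (hq i) (sq_nonneg _)
  have hκb : κ ≤ S * τ ^ 2 := by
    rw [hS, Finset.sum_mul]
    refine Finset.sum_le_sum fun i _ => mul_le_mul_of_nonneg_left ?_ (hq i)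
    rw [← sq_abs]; exact pow_le_pow_left₀ (abs_nonneg _) (hτ i) 2
  have hc0 : 0 ≤ c := Finset.sum_nonneg fun i _ => mul_nonneg (hq i) (by positivity)
  have hcb : c ≤ S * τ ^ 3 := by
    rw [hS, Finset.sum_mul]
    refine Finset.sum_le_sum fun i _ => mul_le_mul_of_nonneg_left ?_ (hq i)
    exact pow_le_pow_left₀ (abs_nonneg _) (hτ i) 3
  set ρ := -κ / 2 + 2 * c with hρ
  have hρb : |ρ| ≤ b * τ ^ 2 := by
    have h1 : S * τ ^ 3 ≤ S * |R| * τ ^ 2 := by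
      have : τ ^ 3 ≤ |R| * τ ^ 2 := by
        rw [pow_succ' τ 2]; exact mul_le_mul_of_nonneg_right hτR (by positivity)
      nlinarith
    have h2 : 0 ≤ S * |R| * τ ^ 2 := by positivity
    rw [abs_le]; constructor <;> rw [hb, hρ] <;> nlinarith
  have hsb : |σ + ρ| ≤ a * τ := by
    have h1 : b * τ ^ 2 ≤ b * |R| * τ := by
      have : τ ^ 2 ≤ |R| * τ := by rw [sq]; exact mul_le_mul_of_nonneg_right hτR hτ0
      nlinarith
    calc |σ + ρ| ≤ |σ| + |ρ| := abs_add_le _ _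
      _ ≤ S * τ + b * |R| * τ := by linarith
      _ = a * τ := by rw [ha, hb]; ring
  have hlog : ∏ i, (1 + t i) ^ q i ≤ Real.exp (σ + ρ) := by
    have h1 : ∏ i, (1 + t i) ^ q i = Real.exp (∑ i, q i * Real.log (1 + t i)) := by
      rw [Real.exp_sum]
      refine Finset.prod_congr rfl fun i _ => ?_
      rw [Real.rpow_def_of_pos (by linarith [ht i]), mul_comm]
    rw [h1, Real.exp_le_exp]
    have h2 : σ + ρ = ∑ i, q i * (t i - t i ^ 2 / 2 + 2 * |t i| ^ 3) := by
      rw [hσ, hρ, hκ, hc, Finset.mul_sum, neg_div, Finset.sum_div, ← Finset.sum_neg_distrib,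
        ← Finset.sum_add_distrib, ← Finset.sum_add_distrib]
      exact Finset.sum_congr rfl fun i _ => by ring
    rw [h2]
    exact Finset.sum_le_sum fun i _ =>
      mul_le_mul_of_nonneg_left (log_one_add_le_cubic (ht i)) (hq i)
  refine hlog.trans ((exp_le_quadratic_add_cubic _).trans ?_)
  have h3 : |σ + ρ| ^ 3 * Real.exp |σ + ρ| ≤ a ^ 3 * Real.exp (a * |R|) * τ ^ 3 := by
    have h31 : |σ + ρ| ^ 3 ≤ (a * τ) ^ 3 := pow_le_pow_left₀ (abs_nonneg _) hsb 3
    have h32 : Real.exp |σ + ρ| ≤ Real.exp (a * |R|) :=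
      Real.exp_le_exp.2 (hsb.trans (mul_le_mul_of_nonneg_left hτR ha0))
    calc _ ≤ (a * τ) ^ 3 * Real.exp (a * |R|) :=
          mul_le_mul h31 h32 (Real.exp_pos _).le (by positivity)
      _ = _ := by ring
  have h4 : σ * ρ ≤ S * b * τ ^ 3 := by
    calc σ * ρ ≤ |σ * ρ| := le_abs_self _
      _ = |σ| * |ρ| := abs_mul _ _
      _ ≤ (S * τ) * (b * τ ^ 2) := mul_le_mul hσb hρb (abs_nonneg _) (by positivity)
      _ = _ := by ring
  have h5 : ρ ^ 2 ≤ b ^ 2 * |R| * τ ^ 3 := by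
    calc ρ ^ 2 = |ρ| ^ 2 := (sq_abs _).symm
      _ ≤ (b * τ ^ 2) ^ 2 := pow_le_pow_left₀ (abs_nonneg _) hρb 2
      _ = b ^ 2 * τ * τ ^ 3 := by ring
      _ ≤ _ := by gcongr
  have h6 : (σ + ρ) ^ 2 = σ ^ 2 + 2 * (σ * ρ) + ρ ^ 2 := by ring
  rw [h6]
  have h7 : 1 + (σ + ρ) + (σ ^ 2 + 2 * (σ * ρ) + ρ ^ 2) / 2 =
    1 + σ + (σ ^ 2 - κ) / 2 + 2 * c + σ * ρ + ρ ^ 2 / 2 := by rw [hρ]; ring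
  rw [h7]
  nlinarith

/-! ### The heat semigroup and a Gaussian Jensen inequality -/

section GaussianJensen

variable {E : Type*} [NormedAddCommGroup E] [InnerProductSpace ℝ E] [FiniteDimensional ℝ E]
  [MeasurableSpace E] [BorelSpace E]

/-- The heat semigroup on a Euclidean space. -/
def heat {F : Type*} [NormedAddCommGroup F] [NormedSpace ℝ F] (s : ℝ) (K : E → F) (x : E) : F :=
  ∫ w, K (x + √s • w) ∂(stdGaussian E)

section HeatBasics

lemma integrable_heat {F : Type*} [NormedAddCommGroup F] {K : E → F} (hK : Continuous K) {D : ℝ}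
    (hD : ∀ x, ‖K x‖ ≤ D) (s : ℝ)
    (x : E) : Integrable (fun w => K (x + √s • w)) (stdGaussian E) := by
  refine Integrable.of_bound (C := D) ?_ (ae_of_all _ fun w => hD _)
  exact (by fun_prop : Continuous fun w => K (x + √s • w)).aestronglyMeasurable

variable {F : Type*} [NormedAddCommGroup F] [NormedSpace ℝ F]

lemma continuous_heat {K : E → F} (hK : Continuous K) {D : ℝ} (hD : ∀ x, ‖K x‖ ≤ D) (s : ℝ) :
    Continuous (heat s K) := by
  unfold heat
  refine continuous_of_dominated (bound := fun _ => D) ?_ ?_ (integrable_const _) ?_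
  · intro x
    exact (by fun_prop : Continuous fun w => K (x + √s • w)).aestronglyMeasurable
  · exact fun x => ae_of_all _ fun w => hD _
  · exact ae_of_all _ fun w => by fun_prop

lemma norm_heat_le {K : E → F} {D : ℝ} (hD : ∀ x, ‖K x‖ ≤ D) (s : ℝ) (x : E) :
    ‖heat s K x‖ ≤ D := by
  unfold heat
  refine (norm_integral_le_of_norm_le_const (ae_of_all _ fun w => hD _)).trans ?_
  simp

lemma heat_zero [CompleteSpace F] (K : E → F) : heat 0 K = K := by
  ext x; simp [heat]

lemma heat_heat [CompleteSpace F] {K : E → F} (hK : Continuous K) {D : ℝ}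
    (hD : ∀ x, ‖K x‖ ≤ D) {s t : ℝ}
    (hs : 0 ≤ s) (ht : 0 ≤ t) (x : E) : heat s (heat t K) x = heat (s + t) K x := by
  set γ := stdGaussian E
  set r := √(s + t)
  obtain ⟨θ, hθs, hθt⟩ : ∃ θ : ℝ, r * Real.cos θ = √s ∧ r * Real.sin θ = √t := by
    set z : ℂ := ⟨√s, √t⟩ with hz
    have hr : ‖z‖ = r := by
      rw [Complex.norm_def, Complex.normSq_mk, Real.mul_self_sqrt hs, Real.mul_self_sqrt ht]
    refine ⟨Complex.arg z, ?_, ?_⟩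
    · rw [← hr, Complex.norm_mul_cos_arg]
    · rw [← hr, Complex.norm_mul_sin_arg]
  have hrot := IsGaussian.map_rotation_eq_self (μ := γ) (by simp [γ]) θ
  set G : E × E → F := fun p => K (x + r • p.1) with hG
  have hGc : Continuous G := by fun_prop
  have h1 : ∫ p, G p ∂(γ.prod γ) = heat (s + t) K x := by
    have hi : Integrable G (γ.prod γ) :=
      Integrable.of_bound (C := D) hGc.aestronglyMeasurable (ae_of_all _ fun w => hD _)
    rw [integral_prod _ hi]
    simp [hG, heat, γ, r]
  rw [← h1, ← hrot, integral_map (by fun_prop) hGc.aestronglyMeasurable]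
  have hi : Integrable (fun p : E × E => G (ContinuousLinearMap.rotation θ p)) (γ.prod γ) :=
    Integrable.of_bound (C := D) (by
      exact (hGc.comp (ContinuousLinearMap.continuous _)).aestronglyMeasurable)
      (ae_of_all _ fun w => hD _)
  rw [integral_prod _ hi]
  unfold heat
  refine integral_congr_ae (ae_of_all _ fun w => ?_)
  refine integral_congr_ae (ae_of_all _ fun w' => ?_)
  simp only [hG, ContinuousLinearMap.rotation_apply]
  rw [smul_add, smul_smul, smul_smul, hθs, hθt, add_assoc]

end HeatBasics

/-- Functions bounded between positive constants, with bounded Lipschitz gradient `v` taking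
values in the subspace `S`. -/
structure RegularPositive {E : Type*} [NormedAddCommGroup E] [InnerProductSpace ℝ E]
    (S : Submodule ℝ E) (c D : ℝ) (K : E → ℝ) (v : E → E) : Prop where
  cont : Continuous K
  contGrad : Continuous v
  lower : ∀ x, c ≤ K x
  upper : ∀ x, K x ≤ D
  mem : ∀ x, v x ∈ S
  bound : ∀ x, ‖v x‖ ≤ D
  taylor : ∀ x y, |K (x + y) - K x - inner ℝ (v x) y| ≤ D * ‖y‖ ^ 2

variable {S : Submodule ℝ E} {c D : ℝ} {K : E → ℝ} {v : E → E}

lemma RegularPositive.norm_le {E : Type*} [NormedAddCommGroup E] [InnerProductSpace ℝ E]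
    {S : Submodule ℝ E} {K : E → ℝ} {v : E → E} (h : RegularPositive S c D K v) (hc : 0 < c) (x : E) :
    ‖K x‖ ≤ D := by
  rw [Real.norm_eq_abs, abs_of_nonneg (hc.le.trans (h.lower x))]
  exact h.upper x

lemma RegularPositive.heat (h : RegularPositive S c D K v) (hc : 0 < c) (s : ℝ) :
    RegularPositive S c D (heat s K) (heat s v) where
  cont := continuous_heat h.cont (h.norm_le hc) s
  contGrad := continuous_heat h.contGrad h.bound s
  lower x := by
    have := integral_mono (μ := stdGaussian E) (integrable_const c)
      (integrable_heat h.cont (h.norm_le hc) s x) (fun w => h.lower _)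
    simpa [_root_.heat] using this
  upper x := by
    have := integral_mono (μ := stdGaussian E) (integrable_heat h.cont (h.norm_le hc) s x)
      (integrable_const D) (fun w => h.upper _)
    simpa [_root_.heat] using this
  mem x := S.convex.integral_mem S.closed_of_finiteDimensional
      (ae_of_all _ fun w => h.mem _) (integrable_heat h.contGrad h.bound s x)
  bound := norm_heat_le h.bound s
  taylor x y := by
    have i1 := integrable_heat h.cont (h.norm_le hc) s x
    have i2 := integrable_heat h.cont (h.norm_le hc) s (x + y)
    have i3 := integrable_heat h.contGrad h.bound s x
    have e : _root_.heat s K (x + y) - _root_.heat s K x - inner ℝ (_root_.heat s v x) y =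
        ∫ w, (K ((x + √s • w) + y) - K (x + √s • w) - inner ℝ (v (x + √s • w)) y)
          ∂(stdGaussian E) := by
      have i2' : Integrable (fun w => K ((x + √s • w) + y)) (stdGaussian E) := by
        simpa only [add_right_comm] using i2
      have i21 : Integrable (fun w => K (x + √s • w + y) - K (x + √s • w)) (stdGaussian E) :=
        i2'.sub i1
      rw [integral_sub i21 (i3.inner_const y), integral_sub i2' i1]
      congr 1
      · simp only [_root_.heat, add_right_comm]
      · simp only [_root_.heat]
        rw [real_inner_comm, ← integral_inner i3]
        simp only [real_inner_comm]
    rw [e, ← Real.norm_eq_abs]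
    refine (norm_integral_le_of_norm_le_const
      (ae_of_all _ fun w => by simpa using h.taylor (x + √s • w) y)).trans ?_
    simp

lemma integral_inner_sq_stdGaussian (u : E) :
    ∫ w, inner ℝ u w ^ 2 ∂(stdGaussian E) = ‖u‖ ^ 2 := by
  have := covarianceBilin_apply (μ := stdGaussian E) IsGaussian.memLp_two_id u u
  rw [covarianceBilin_stdGaussian] at this
  simp only [id_eq, integral_id_stdGaussian, sub_zero] at this
  simp only [sq]
  rw [← this]
  exact (real_inner_self_eq_norm_mul_norm u)

lemma integral_inner_stdGaussian (u : E) : ∫ w, inner ℝ u w ∂(stdGaussian E) = 0 := by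
  have := integral_strongDual_stdGaussian (E := E) (innerSL ℝ u)
  simpa using this

lemma integrable_norm_pow_stdGaussian (k : ℕ) :
    Integrable (fun w : E => ‖w‖ ^ k) (stdGaussian E) := by
  rcases Nat.eq_zero_or_pos k with rfl | hk
  · simp
  · exact (IsGaussian.memLp_id (stdGaussian E) k (by simp)).integrable_norm_pow hk.ne'

end GaussianJensen

section GaussianJensenSmooth

variable {ι : Type*} [Fintype ι]

lemma exists_prod_one_add_rpow_le_of_approx (q : ι → ℝ) (hq : ∀ i, 0 ≤ q i) (R : ℝ) (hR : 0 ≤ R) :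
    ∃ C, 0 ≤ C ∧ ∀ (t l : ι → ℝ) (σ A : ℝ), 0 ≤ σ → σ ≤ 1 → 1 ≤ A → (∀ i, -1 < t i) →
      (∀ i, |t i| ≤ R) → (∀ i, |l i| ≤ R * σ * A) → (∀ i, |t i - l i| ≤ R * σ ^ 2 * A) →
      ∏ i, (1 + t i) ^ q i ≤
        1 + ∑ i, q i * t i + ((∑ i, q i * l i) ^ 2 - ∑ i, q i * l i ^ 2) / 2 + C * σ ^ 3 * A ^ 3 := by
  obtain ⟨A₀, hA₀, H⟩ := exists_prod_one_add_rpow_le q hq R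
  set s := ∑ i, q i with hs
  have hs0 : 0 ≤ s := Finset.sum_nonneg fun i _ => hq i
  refine ⟨3 * R ^ 2 * (s ^ 2 + s) / 2 + A₀ * (2 * R) ^ 3, by positivity, ?_⟩
  intro t l σ A hσ0 hσ1 hA ht htR hl hr
  have hA0 : 0 ≤ A := by linarith
  have hrσ : ∀ i, |t i - l i| ≤ R * σ * A := fun i => (hr i).trans (by
    gcongr; nlinarith)
  have hsum : ∀ i, |t i + l i| ≤ 3 * R * σ * A := fun i => by
    have h1 := abs_le.1 (hl i)
    have h2 := abs_le.1 (hrσ i)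
    rw [abs_le]; constructor <;> linarith
  have htt : ∀ i, |t i| ≤ min (2 * R * σ * A) R := fun i => by
    refine le_min ?_ (htR i)
    have h1 := abs_le.1 (hl i)
    have h2 := abs_le.1 (hrσ i)
    rw [abs_le]; constructor <;> linarith
  have key := H t (min (2 * R * σ * A) R) ht htt (min_le_right _ _)
  have e1 : (∑ i, q i * t i) ^ 2 - (∑ i, q i * l i) ^ 2 ≤ 3 * R ^ 2 * s ^ 2 * σ ^ 3 * A ^ 3 := by
    have h1 : |∑ i, q i * (t i - l i)| ≤ s * (R * σ ^ 2 * A) := by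
      refine (Finset.abs_sum_le_sum_abs _ _).trans ?_
      rw [hs, Finset.sum_mul]
      refine Finset.sum_le_sum fun i _ => ?_
      rw [abs_mul, abs_of_nonneg (hq i)]
      exact mul_le_mul_of_nonneg_left (hr i) (hq i)
    have h2 : |∑ i, q i * (t i + l i)| ≤ s * (3 * R * σ * A) := by
      refine (Finset.abs_sum_le_sum_abs _ _).trans ?_
      rw [hs, Finset.sum_mul]
      refine Finset.sum_le_sum fun i _ => ?_
      rw [abs_mul, abs_of_nonneg (hq i)]
      exact mul_le_mul_of_nonneg_left (hsum i) (hq i)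
    calc _ = (∑ i, q i * (t i - l i)) * ∑ i, q i * (t i + l i) := by
          simp only [mul_sub, mul_add, Finset.sum_sub_distrib, Finset.sum_add_distrib]; ring
      _ ≤ |(∑ i, q i * (t i - l i)) * ∑ i, q i * (t i + l i)| := le_abs_self _
      _ = |∑ i, q i * (t i - l i)| * |∑ i, q i * (t i + l i)| := abs_mul _ _
      _ ≤ (s * (R * σ ^ 2 * A)) * (s * (3 * R * σ * A)) :=
          mul_le_mul h1 h2 (abs_nonneg _) (by positivity)
      _ = 3 * R ^ 2 * s ^ 2 * σ ^ 3 * A ^ 2 := by ring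
      _ ≤ _ := by
        apply mul_le_mul_of_nonneg_left _ (by positivity)
        exact pow_le_pow_right₀ hA (by norm_num)
  have e2 : ∑ i, q i * l i ^ 2 - ∑ i, q i * t i ^ 2 ≤ 3 * R ^ 2 * s * σ ^ 3 * A ^ 3 := by
    rw [← Finset.sum_sub_distrib]
    calc _ ≤ ∑ i, q i * (3 * R ^ 2 * σ ^ 3 * A ^ 3) := by
          refine Finset.sum_le_sum fun i _ => ?_
          rw [← mul_sub]
          refine mul_le_mul_of_nonneg_left ?_ (hq i)
          calc l i ^ 2 - t i ^ 2 ≤ |l i ^ 2 - t i ^ 2| := le_abs_self _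
            _ = |(t i - l i) * (t i + l i)| := by
                rw [abs_sub_comm]; congr 1; ring
            _ = |t i - l i| * |t i + l i| := abs_mul _ _
            _ ≤ (R * σ ^ 2 * A) * (3 * R * σ * A) :=
                mul_le_mul (hr i) (hsum i) (abs_nonneg _) (by positivity)
            _ = 3 * R ^ 2 * σ ^ 3 * A ^ 2 := by ring
            _ ≤ _ := by
              apply mul_le_mul_of_nonneg_left _ (by positivity)
              exact pow_le_pow_right₀ hA (by norm_num)
      _ = _ := by rw [← Finset.sum_mul]; ring
  have e3 : A₀ * (min (2 * R * σ * A) R) ^ 3 ≤ A₀ * (2 * R) ^ 3 * σ ^ 3 * A ^ 3 := by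
    calc _ ≤ A₀ * (2 * R * σ * A) ^ 3 := by
          apply mul_le_mul_of_nonneg_left _ hA₀
          exact pow_le_pow_left₀ (le_min (by positivity) hR) (min_le_left _ _) 3
      _ = _ := by ring
  linarith

variable {E : Type*} [NormedAddCommGroup E] [InnerProductSpace ℝ E] [FiniteDimensional ℝ E]
  [MeasurableSpace E] [BorelSpace E]

lemma integrable_inner_sq_stdGaussian (u : E) :
    Integrable (fun w => inner ℝ u w ^ 2) (stdGaussian E) := by
  refine ((integrable_norm_pow_stdGaussian (E := E) 2).const_mul (‖u‖ ^ 2)).mono' (by fun_prop)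
    (ae_of_all _ fun w => ?_)
  rw [Real.norm_eq_abs, abs_pow, ← mul_pow]
  exact pow_le_pow_left₀ (abs_nonneg _) (abs_real_inner_le_norm u w) 2

lemma integrable_inner_stdGaussian (u : E) :
    Integrable (fun w => inner ℝ u w) (stdGaussian E) := by
  refine ((integrable_norm_pow_stdGaussian (E := E) 1).const_mul (‖u‖)).mono' (by fun_prop)
    (ae_of_all _ fun w => ?_)
  rw [pow_one]
  exact abs_real_inner_le_norm u w

lemma RegularPositive.abs_sub_heat_le {S : Submodule ℝ E} {c D : ℝ} {K : E → ℝ} {v : E → E}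
    (h : RegularPositive S c D K v) (hc : 0 < c) {s : ℝ} (hs : 0 ≤ s) (x w : E) :
    |K (x + √s • w) - _root_.heat s K x - √s * inner ℝ (v x) w| ≤
      D * s * (‖w‖ ^ 2 + ∫ y, ‖y‖ ^ 2 ∂(stdGaussian E)) := by
  have T : ∀ w : E, |K (x + √s • w) - K x - √s * inner ℝ (v x) w| ≤ D * s * ‖w‖ ^ 2 := fun w => by
    have := h.taylor x (√s • w)
    rw [inner_smul_right, norm_smul, mul_pow, Real.norm_eq_abs, sq_abs, Real.sq_sqrt hs] at this
    linarith
  have i1 := integrable_heat h.cont (h.norm_le hc) s x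
  have i2 : Integrable (fun w => K (x + √s • w) - K x) (stdGaussian E) :=
    i1.sub (integrable_const _)
  have i3 := (integrable_inner_stdGaussian (v x)).const_mul (√s)
  have e : _root_.heat s K x - K x =
      ∫ w, (K (x + √s • w) - K x - √s * inner ℝ (v x) w) ∂(stdGaussian E) := by
    rw [integral_sub i2 i3, integral_sub i1 (integrable_const _), integral_const_mul,
      integral_inner_stdGaussian]
    simp [_root_.heat]
  have hm : |_root_.heat s K x - K x| ≤ D * s * ∫ y, ‖y‖ ^ 2 ∂(stdGaussian E) := by
    rw [e, ← integral_const_mul, ← Real.norm_eq_abs]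
    exact norm_integral_le_of_norm_le ((integrable_norm_pow_stdGaussian 2).const_mul _)
      (ae_of_all _ fun w => T w)
  have h1 := abs_le.1 (T w)
  have h2 := abs_le.1 hm
  rw [mul_add, abs_le]
  constructor <;> linarith

lemma exists_heat_prod_rpow_le (q : ι → ℝ) (hq : ∀ i, 0 ≤ q i) (S : ι → Submodule ℝ E)
    (hS : ∀ u : ι → E, (∀ i, u i ∈ S i) → ‖∑ i, q i • u i‖ ^ 2 ≤ ∑ i, q i * ‖u i‖ ^ 2)
    {c : ℝ} (hc : 0 < c) (D : ℝ) :
    ∃ C, 0 ≤ C ∧ ∀ (K : ι → E → ℝ) (v : ι → E → E), (∀ i, RegularPositive (S i) c D (K i) (v i)) →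
      ∀ s, 0 ≤ s → s ≤ 1 → ∀ x, heat s (fun y => ∏ i, K i y ^ q i) x ≤
        ∏ i, (heat s (K i) x) ^ q i + C * √s ^ 3 := by
  rcases isEmpty_or_nonempty ι with hι | ⟨⟨i₀⟩⟩
  · exact ⟨0, le_rfl, fun K v _ s _ _ x => by simp [heat]⟩
  by_cases hcD : c ≤ D
  swap
  · exact ⟨0, le_rfl, fun K v h => absurd (((h i₀).lower 0).trans ((h i₀).upper 0)) hcD⟩
  have hD : 0 < D := hc.trans_le hcD
  have hR : 0 ≤ D / c := by positivity
  have hR1 : 1 ≤ D / c := (one_le_div hc).2 hcD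
  obtain ⟨C₁, hC₁, H⟩ := exists_prod_one_add_rpow_le_of_approx q hq (D / c) hR
  set κ := ∫ y : E, ‖y‖ ^ 2 ∂(stdGaussian E) with hκ
  have hκ0 : 0 ≤ κ := integral_nonneg fun y => by positivity
  set A : E → ℝ := fun w => 1 + ‖w‖ ^ 2 + κ with hA
  have hAi : Integrable (fun w => A w ^ 3) (stdGaussian E) := by
    have e : (fun w => A w ^ 3) = fun w : E => ‖w‖ ^ 6 + 3 * (1 + κ) * ‖w‖ ^ 4 +
        3 * (1 + κ) ^ 2 * ‖w‖ ^ 2 + (1 + κ) ^ 3 := by ext w; simp only [hA]; ring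
    rw [e]
    exact ((((integrable_norm_pow_stdGaussian 6).add
      ((integrable_norm_pow_stdGaussian 4).const_mul _)).add
      ((integrable_norm_pow_stdGaussian 2).const_mul _)).add (integrable_const _))
  set α := ∫ w, A w ^ 3 ∂(stdGaussian E) with hα
  have hα0 : 0 ≤ α := integral_nonneg fun y => by simp only [hA]; positivity
  refine ⟨(∏ i, D ^ q i) * (C₁ * α), by positivity, ?_⟩
  intro K v hK s hs0 hs1 x
  set σ := √s
  have hσ0 : 0 ≤ σ := Real.sqrt_nonneg _
  have hσ1 : σ ≤ 1 := Real.sqrt_le_one.2 hs1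
  have hσs : σ ^ 2 = s := Real.sq_sqrt hs0
  set m : ι → ℝ := fun i => heat s (K i) x with hm
  have hmc : ∀ i, c ≤ m i := fun i => ((hK i).heat hc s).lower x
  have hmD : ∀ i, m i ≤ D := fun i => ((hK i).heat hc s).upper x
  have hm0 : ∀ i, 0 < m i := fun i => hc.trans_le (hmc i)
  set u : ι → E := fun i => (m i)⁻¹ • v i x with hu
  set t : ι → E → ℝ := fun i w => K i (x + σ • w) / m i - 1 with ht
  have hnu : ∀ i, ‖u i‖ ≤ D / c := fun i => by
    simp only [hu, norm_smul, norm_inv, Real.norm_eq_abs, abs_of_pos (hm0 i)]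
    rw [div_eq_inv_mul]
    exact mul_le_mul (inv_anti₀ hc (hmc i)) ((hK i).bound x) (norm_nonneg _) (by positivity)
  have hAw : ∀ w, ‖w‖ ≤ A w := fun w => by simp only [hA]; nlinarith [sq_nonneg (‖w‖ - 1)]
  have hA1 : ∀ w, 1 ≤ A w := fun w => by simp only [hA]; nlinarith [sq_nonneg (‖w‖)]
  have hpt : ∀ w, ∏ i, (1 + t i w) ^ q i ≤ 1 + ∑ i, q i * t i w +
      ((∑ i, q i * (σ * inner ℝ (u i) w)) ^ 2 - ∑ i, q i * (σ * inner ℝ (u i) w) ^ 2) / 2 +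
      C₁ * σ ^ 3 * A w ^ 3 := fun w => by
    refine H (fun i => t i w) _ σ (A w) hσ0 hσ1 (hA1 w) ?_ ?_ ?_ ?_
    · intro i
      have := div_pos (hc.trans_le ((hK i).lower (x + σ • w))) (hm0 i)
      simp only [ht]; linarith
    · intro i
      have h1 := div_pos (hc.trans_le ((hK i).lower (x + σ • w))) (hm0 i)
      have h2 : K i (x + σ • w) / m i ≤ D / c :=
        div_le_div₀ hD.le ((hK i).upper _) hc (hmc i)
      simp only [ht, abs_le]; constructor <;> linarith
    · intro i
      rw [abs_mul, abs_of_nonneg hσ0]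
      calc σ * |inner ℝ (u i) w| ≤ σ * (‖u i‖ * ‖w‖) := by
            gcongr; exact abs_real_inner_le_norm _ _
        _ ≤ σ * (D / c * A w) := by gcongr; exacts [hnu i, hAw w]
        _ = _ := by ring
    · intro i
      have h1 := (hK i).abs_sub_heat_le hc hs0 x w
      have h2 : t i w - σ * inner ℝ (u i) w =
          (K i (x + σ • w) - m i - σ * inner ℝ (v i x) w) / m i := by
        simp only [ht, hu, inner_smul_left]
        have := (hm0 i).ne'
        simp only [map_inv₀, conj_trivial]
        field_simp
      rw [h2, abs_div, abs_of_pos (hm0 i)]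
      calc _ ≤ (D * s * (‖w‖ ^ 2 + κ)) / c := by
            exact div_le_div₀ (by positivity) h1 hc (hmc i)
        _ ≤ (D * s * A w) / c := by gcongr; simp only [hA]; linarith
        _ = _ := by rw [hσs]; ring
  have hti : ∀ i, Integrable (t i) (stdGaussian E) := fun i =>
    ((integrable_heat (hK i).cont ((hK i).norm_le hc) s x).div_const _).sub (integrable_const _)
  have ht0 : ∀ i, ∫ w, t i w ∂(stdGaussian E) = 0 := fun i => by
    simp only [ht]
    rw [integral_sub ((integrable_heat (hK i).cont ((hK i).norm_le hc) s x).div_const _)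
      (integrable_const _), integral_div]
    have : ∫ w, K i (x + σ • w) ∂(stdGaussian E) = m i := rfl
    rw [this, div_self (hm0 i).ne']; simp
  set U : E := ∑ i, q i • u i with hU
  set g : E → ℝ := fun w => 1 + ∑ i, q i * t i w +
      s / 2 * (inner ℝ U w ^ 2 - ∑ i, q i * inner ℝ (u i) w ^ 2) + C₁ * σ ^ 3 * A w ^ 3 with hg
  have hpt' : ∀ w, ∏ i, (1 + t i w) ^ q i ≤ g w := fun w => by
    refine (hpt w).trans_eq ?_
    have e1 : ∑ i, q i * (σ * inner ℝ (u i) w) = σ * inner ℝ U w := by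
      simp only [hU, sum_inner, inner_smul_left, Finset.mul_sum, conj_trivial]
      exact Finset.sum_congr rfl fun i _ => by ring
    have e2 : ∑ i, q i * (σ * inner ℝ (u i) w) ^ 2 = s * ∑ i, q i * inner ℝ (u i) w ^ 2 := by
      rw [Finset.mul_sum]
      exact Finset.sum_congr rfl fun i _ => by rw [mul_pow, hσs]; ring
    rw [e1, e2, mul_pow, hσs]
    simp only [hg]; ring
  have j1 : Integrable (fun w => ∑ i, q i * t i w) (stdGaussian E) :=
    integrable_finsetSum _ fun i _ => (hti i).const_mul _
  have j2 : Integrable (fun w => ∑ i, q i * inner ℝ (u i) w ^ 2) (stdGaussian E) :=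
    integrable_finsetSum _ fun i _ => (integrable_inner_sq_stdGaussian _).const_mul _
  have j3 : Integrable (fun w => s / 2 * (inner ℝ U w ^ 2 - ∑ i, q i * inner ℝ (u i) w ^ 2))
      (stdGaussian E) := ((integrable_inner_sq_stdGaussian U).sub j2).const_mul _
  have j4 : Integrable (fun w => 1 + ∑ i, q i * t i w) (stdGaussian E) :=
    (integrable_const _).add j1
  have j5 : Integrable (fun w => 1 + ∑ i, q i * t i w +
      s / 2 * (inner ℝ U w ^ 2 - ∑ i, q i * inner ℝ (u i) w ^ 2)) (stdGaussian E) := j4.add j3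
  have j6 : Integrable (fun w => C₁ * σ ^ 3 * A w ^ 3) (stdGaussian E) := hAi.const_mul _
  have hgi : Integrable g (stdGaussian E) := j5.add j6
  have hgint : ∫ w, g w ∂(stdGaussian E) ≤ 1 + C₁ * σ ^ 3 * α := by
    simp only [hg]
    rw [integral_add j5 j6, integral_add j4 j3, integral_add (integrable_const _) j1,
      integral_const_mul, integral_const_mul, integral_sub (integrable_inner_sq_stdGaussian U) j2,
      integral_inner_sq_stdGaussian, integral_finsetSum _ fun i _ => (hti i).const_mul _,
      integral_finsetSum _ fun i _ => (integrable_inner_sq_stdGaussian _).const_mul _]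
    simp only [integral_const_mul, ht0, integral_inner_sq_stdGaussian, mul_zero,
      Finset.sum_const_zero, add_zero]
    have := hS u fun i => (S i).smul_mem _ ((hK i).mem x)
    have h3 : s / 2 * (‖U‖ ^ 2 - ∑ i, q i * ‖u i‖ ^ 2) ≤ 0 :=
      mul_nonpos_of_nonneg_of_nonpos (by positivity) (by linarith)
    simp
    linarith
  have hfac : ∀ w, ∏ i, K i (x + σ • w) ^ q i = (∏ i, m i ^ q i) * ∏ i, (1 + t i w) ^ q i := by
    intro w
    rw [← Finset.prod_mul_distrib]
    refine Finset.prod_congr rfl fun i _ => ?_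
    have h1 := div_pos (hc.trans_le ((hK i).lower (x + σ • w))) (hm0 i)
    rw [← Real.mul_rpow (hm0 i).le (by simp only [ht]; linarith)]
    congr 1
    simp only [ht]
    have := (hm0 i).ne'
    field_simp; ring
  have hP0 : 0 ≤ ∏ i, m i ^ q i := Finset.prod_nonneg fun i _ => Real.rpow_nonneg (hm0 i).le _
  calc heat s (fun y => ∏ i, K i y ^ q i) x
      = ∫ w, ∏ i, K i (x + σ • w) ^ q i ∂(stdGaussian E) := rfl
    _ ≤ ∫ w, (∏ i, m i ^ q i) * g w ∂(stdGaussian E) := by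
        refine integral_mono_of_nonneg (ae_of_all _ fun w => ?_) (hgi.const_mul _)
          (ae_of_all _ fun w => ?_)
        · exact Finset.prod_nonneg fun i _ =>
            Real.rpow_nonneg (hc.le.trans ((hK i).lower _)) _
        · simp only
          rw [hfac w]
          exact mul_le_mul_of_nonneg_left (hpt' w) hP0
    _ = (∏ i, m i ^ q i) * ∫ w, g w ∂(stdGaussian E) := integral_const_mul _ _
    _ ≤ (∏ i, m i ^ q i) * (1 + C₁ * σ ^ 3 * α) := mul_le_mul_of_nonneg_left hgint hP0
    _ = ∏ i, m i ^ q i + (∏ i, m i ^ q i) * (C₁ * σ ^ 3 * α) := by ring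
    _ ≤ ∏ i, m i ^ q i + (∏ i, D ^ q i) * (C₁ * σ ^ 3 * α) := by
        gcongr with i
        · exact fun i _ => Real.rpow_nonneg (hm0 i).le _
        · exact (hm0 i).le
        · exact hq i
        · exact hmD i
    _ = _ := by ring

/-- A Jensen-type inequality for Gaussian averages of products of powers of regular functions. -/
lemma integral_prod_rpow_le_of_regularPositive (q : ι → ℝ) (hq : ∀ i, 0 ≤ q i)
    (S : ι → Submodule ℝ E)
    (hS : ∀ u : ι → E, (∀ i, u i ∈ S i) → ‖∑ i, q i • u i‖ ^ 2 ≤ ∑ i, q i * ‖u i‖ ^ 2)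
    {c : ℝ} (hc : 0 < c) {D : ℝ} {K : ι → E → ℝ} {v : ι → E → E}
    (hK : ∀ i, RegularPositive (S i) c D (K i) (v i)) :
    ∫ w, ∏ i, K i w ^ q i ∂(stdGaussian E) ≤ ∏ i, (∫ w, K i w ∂(stdGaussian E)) ^ q i := by
  obtain ⟨C, hC, H⟩ := exists_heat_prod_rpow_le q hq S hS hc D
  set U : E → ℝ := fun y => ∏ i, K i y ^ q i with hU
  have hUc : Continuous U := continuous_finsetProd _ fun i _ =>
    (hK i).cont.rpow_const fun x => Or.inl (hc.trans_le ((hK i).lower x)).ne'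
  have hUb : ∀ x, ‖U x‖ ≤ ∏ i, D ^ q i := fun x => by
    rw [Real.norm_eq_abs, abs_of_nonneg (Finset.prod_nonneg fun i _ =>
      Real.rpow_nonneg (hc.le.trans ((hK i).lower _)) _)]
    exact Finset.prod_le_prod (fun i _ => Real.rpow_nonneg (hc.le.trans ((hK i).lower _)) _)
      fun i _ => Real.rpow_le_rpow (hc.le.trans ((hK i).lower _)) ((hK i).upper x) (hq i)
  have step : ∀ δ, 0 ≤ δ → δ ≤ 1 → ∀ j : ℕ, ∀ x, heat (j * δ) U x ≤
      ∏ i, (heat (j * δ) (K i) x) ^ q i + j * (C * √δ ^ 3) := by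
    intro δ hδ0 hδ1 j
    induction j with
    | zero => intro x; simp [heat_zero, hU]
    | succ j ih =>
      intro x
      have hj : (0 : ℝ) ≤ j * δ := by positivity
      have e1 : ((j + 1 : ℕ) : ℝ) * δ = δ + j * δ := by push_cast; ring
      have hKj := fun i => (hK i).heat hc (j * δ)
      rw [e1, ← heat_heat hUc hUb hδ0 hj]
      simp_rw [← fun i => heat_heat (hK i).cont ((hK i).norm_le hc) hδ0 hj x]
      have h2 := H _ _ hKj δ hδ0 hδ1 x
      have hVc : Continuous fun y => ∏ i, heat (j * δ) (K i) y ^ q i :=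
        continuous_finsetProd _ fun i _ =>
          (hKj i).cont.rpow_const fun x => Or.inl (hc.trans_le ((hKj i).lower x)).ne'
      have hVb : ∀ x, ‖∏ i, heat (j * δ) (K i) x ^ q i‖ ≤ ∏ i, D ^ q i := fun x => by
        rw [Real.norm_eq_abs, abs_of_nonneg (Finset.prod_nonneg fun i _ =>
          Real.rpow_nonneg (hc.le.trans ((hKj i).lower _)) _)]
        exact Finset.prod_le_prod
          (fun i _ => Real.rpow_nonneg (hc.le.trans ((hKj i).lower _)) _)
          fun i _ => Real.rpow_le_rpow (hc.le.trans ((hKj i).lower _)) ((hKj i).upper x) (hq i)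
      have iV := integrable_heat hVc hVb δ x
      have h1 : heat δ (heat (j * δ) U) x ≤
          heat δ (fun y => ∏ i, heat (j * δ) (K i) y ^ q i) x + j * (C * √δ ^ 3) := by
        have := integral_mono (μ := stdGaussian E)
          (integrable_heat (continuous_heat hUc hUb (j * δ)) (norm_heat_le hUb _) δ x)
          (iV.add (integrable_const (j * (C * √δ ^ 3)))) fun w => ih (x + √δ • w)
        rw [integral_add' iV (integrable_const _)] at this
        simpa [heat] using this
      push_cast
      linarith
  have lim : ∀ N : ℕ, ∫ w, U w ∂(stdGaussian E) ≤
      ∏ i, (∫ w, K i w ∂(stdGaussian E)) ^ q i + C * √((1 : ℝ) / ((N : ℝ) + 1)) := by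
    intro N
    have hN : (0 : ℝ) < (N : ℝ) + 1 := by positivity
    have := step (1 / ((N : ℝ) + 1)) (by positivity)
      ((div_le_one hN).2 (by linarith [(Nat.cast_nonneg N : (0 : ℝ) ≤ N)])) (N + 1) 0
    have e : ((N + 1 : ℕ) : ℝ) * (1 / ((N : ℝ) + 1)) = 1 := by push_cast; field_simp
    rw [e] at this
    have e2 : ((N + 1 : ℕ) : ℝ) * (C * √(1 / ((N : ℝ) + 1)) ^ 3) =
        C * √(1 / ((N : ℝ) + 1)) := by
      rw [pow_succ, Real.sq_sqrt (by positivity)]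
      push_cast
      field_simp
    rw [e2] at this
    simpa [heat] using this
  have ht : Tendsto (fun N : ℕ => ∏ i, (∫ w, K i w ∂(stdGaussian E)) ^ q i +
      C * √((1 : ℝ) / ((N : ℝ) + 1))) atTop
      (𝓝 (∏ i, (∫ w, K i w ∂(stdGaussian E)) ^ q i + C * √0)) :=
    ((tendsto_one_div_add_atTop_nhds_zero_nat.sqrt).const_mul C).const_add _
  have := ge_of_tendsto' ht lim
  simpa using this

end GaussianJensenSmooth

section GaussianJensenGeneral

lemma RegularPositive.mono {E : Type*} [NormedAddCommGroup E] [InnerProductSpace ℝ E]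
    {S : Submodule ℝ E} {c D D' : ℝ} {K : E → ℝ} {v : E → E} (h : RegularPositive S c D K v)
    (hD : D ≤ D') : RegularPositive S c D' K v where
  cont := h.cont
  contGrad := h.contGrad
  lower := h.lower
  upper x := (h.upper x).trans hD
  mem := h.mem
  bound x := (h.bound x).trans hD
  taylor x y := (h.taylor x y).trans (by gcongr)

variable {G : Type*} [NormedAddCommGroup G] [NormedSpace ℝ G]

/-- First-order Taylor estimate for compactly supported smooth functions. -/
lemma exists_taylor_bound_of_hasCompactSupport {φ : G → ℝ} (hφ : HasCompactSupport φ)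
    (hφ' : ContDiff ℝ 2 φ) :
    ∃ D, 0 ≤ D ∧ (∀ x, |φ x| ≤ D) ∧ (∀ x, ‖fderiv ℝ φ x‖ ≤ D) ∧
      ∀ x y, |φ (x + y) - φ x - fderiv ℝ φ x y| ≤ D * ‖y‖ ^ 2 := by
  obtain ⟨D₁, h₁⟩ := hφ.exists_bound_of_continuous hφ'.continuous
  obtain ⟨D₂, h₂⟩ := (hφ.fderiv ℝ).exists_bound_of_continuous
    (hφ'.continuous_fderiv (by norm_num))
  obtain ⟨D₃, h₃⟩ := (hφ'.fderiv_right (m := 1) (by norm_num)).lipschitzWith_of_hasCompactSupport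
    (hφ.fderiv ℝ) (by norm_num)
  have h₁0 : 0 ≤ D₁ := (norm_nonneg _).trans (h₁ 0)
  have h₂0 : 0 ≤ D₂ := (norm_nonneg _).trans (h₂ 0)
  have h₃0 : (0 : ℝ) ≤ D₃ := D₃.2
  refine ⟨D₁ + D₂ + D₃, by positivity, fun x => (h₁ x).trans (by linarith),
    fun x => (h₂ x).trans (by linarith), fun x y => ?_⟩
  have hd : Differentiable ℝ φ := hφ'.differentiable (by norm_num)
  have key := (convex_closedBall x ‖y‖).norm_image_sub_le_of_norm_hasFDerivWithin_le'
    (f := φ) (f' := fderiv ℝ φ) (φ := fderiv ℝ φ x) (C := D₃ * ‖y‖) (x := x) (y := x + y)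
    (fun z _ => (hd z).hasFDerivAt.hasFDerivWithinAt) (fun z hz => by
      rw [← dist_eq_norm]
      exact (h₃.dist_le_mul z x).trans (by gcongr; exact hz))
    (by simp) (by simp)
  rw [add_sub_cancel_left, Real.norm_eq_abs] at key
  refine key.trans ?_
  nlinarith [sq_nonneg ‖y‖, mul_nonneg (add_nonneg h₁0 h₂0) (sq_nonneg ‖y‖)]

variable {E : Type*} [NormedAddCommGroup E] [InnerProductSpace ℝ E] [FiniteDimensional ℝ E]

lemma exists_regularPositive_comp {φ : G → ℝ} (hφ : HasCompactSupport φ) (hφ' : ContDiff ℝ 2 φ)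
    (hφ0 : ∀ x, 0 ≤ φ x) {c : ℝ} (hc : 0 < c) (L : E →L[ℝ] G) :
    ∃ D v, 0 ≤ D ∧ RegularPositive (L.ker)ᗮ c D (fun x => c + φ (L x)) v := by
  obtain ⟨D, hD0, hb, hd, ht⟩ := exists_taylor_bound_of_hasCompactSupport hφ hφ'
  have hL : 0 ≤ ‖L‖ := norm_nonneg _
  set D' := c + D + D * ‖L‖ + D * ‖L‖ ^ 2
  have hi : ∀ x y, inner ℝ ((InnerProductSpace.toDual ℝ E).symm ((fderiv ℝ φ (L x)).comp L)) y =
      fderiv ℝ φ (L x) (L y) := fun x y => by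
    rw [InnerProductSpace.toDual_symm_apply]; rfl
  refine ⟨D', fun x => (InnerProductSpace.toDual ℝ E).symm ((fderiv ℝ φ (L x)).comp L),
    by positivity, ?_, ?_, ?_, ?_, ?_, ?_, ?_⟩
  · have := hφ'.continuous
    fun_prop
  · have := hφ'.continuous_fderiv (by norm_num)
    refine (LinearIsometryEquiv.continuous _).comp ?_
    exact (this.comp L.continuous).clm_comp continuous_const
  · intro x; linarith [hφ0 (L x)]
  · intro x
    have := (le_abs_self _).trans (hb (L x))
    have : 0 ≤ D * ‖L‖ + D * ‖L‖ ^ 2 := by positivity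
    linarith
  · intro x
    rw [Submodule.mem_orthogonal']
    intro y hy
    have hy : L y = 0 := hy
    rw [hi, hy, map_zero]
  · intro x
    rw [LinearIsometryEquiv.norm_map]
    refine (ContinuousLinearMap.opNorm_comp_le _ _).trans ?_
    have : ‖fderiv ℝ φ (L x)‖ * ‖L‖ ≤ D * ‖L‖ := by gcongr; exact hd _
    have : 0 ≤ D * ‖L‖ ^ 2 := by positivity
    linarith
  · intro x y
    rw [hi, map_add]
    have h1 := ht (L x) (L y)
    have h2 : ‖L y‖ ^ 2 ≤ ‖L‖ ^ 2 * ‖y‖ ^ 2 := by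
      rw [← mul_pow]; gcongr; exact L.le_opNorm y
    calc _ = |φ (L x + L y) - φ (L x) - (fderiv ℝ φ (L x)) (L y)| := by congr 1; ring
      _ ≤ D * (‖L‖ ^ 2 * ‖y‖ ^ 2) := h1.trans (by gcongr)
      _ = (D * ‖L‖ ^ 2) * ‖y‖ ^ 2 := by ring
      _ ≤ _ := by
        gcongr
        have : 0 ≤ D * ‖L‖ := by positivity
        linarith

variable [FiniteDimensional ℝ G] [MeasurableSpace G] [BorelSpace G]

lemma exists_smooth_approx (ν : Measure G) [IsProbabilityMeasure ν] {k : G → ℝ≥0∞}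
    (hk : Measurable k) (hfin : ∫⁻ y, k y ∂ν ≠ ⊤) {c : ℝ} (hc : 0 < c) :
    ∃ φ : G → ℝ, HasCompactSupport φ ∧ ContDiff ℝ 2 φ ∧ (∀ x, 0 ≤ φ x) ∧
      ∫⁻ y, ‖(k y).toReal - (c + φ y)‖ₑ ∂ν ≤ ENNReal.ofReal (2 * c) := by
  have hm : MemLp (fun y => (k y).toReal) 1 ν := by
    rw [memLp_one_iff_integrable]
    exact integrable_toReal_of_lintegral_ne_top hk.aemeasurable hfin
  obtain ⟨g, hg1, hg2, hg3⟩ := hm.exist_eLpNorm_sub_le (by simp) le_rfl hc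
  have hpos : ∀ y, 0 < g y ^ 2 + c ^ 2 := fun y => by positivity
  refine ⟨fun y => √(g y ^ 2 + c ^ 2) - c, ?_, ?_, ?_, ?_⟩
  · refine hg1.mono fun y hy => ?_
    contrapose! hy
    have : g y = 0 := by simpa using hy
    simp [this, Real.sqrt_sq hc.le]
  · refine ContDiff.sub (ContDiff.sqrt ?_ fun y => (hpos y).ne') contDiff_const
    exact ((hg2.of_le (WithTop.coe_le_coe.2 le_top)).pow 2).add contDiff_const
  · intro y
    have : √(c ^ 2) ≤ √(g y ^ 2 + c ^ 2) := Real.sqrt_le_sqrt (by nlinarith [sq_nonneg (g y)])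
    rw [Real.sqrt_sq hc.le] at this
    linarith
  · have hgc := hg2.continuous
    calc _ ≤ ∫⁻ y, (‖(k y).toReal - g y‖ₑ + ENNReal.ofReal c) ∂ν := by
          refine lintegral_mono fun y => ?_
          simp only [add_sub_cancel]
          rw [← ofReal_norm, ← ofReal_norm, ← ENNReal.ofReal_add (norm_nonneg _) hc.le]
          refine ENNReal.ofReal_le_ofReal ?_
          rw [Real.norm_eq_abs, Real.norm_eq_abs]
          have hk0 : 0 ≤ (k y).toReal := ENNReal.toReal_nonneg
          have h1 : |g y| ≤ √(g y ^ 2 + c ^ 2) := Real.abs_le_sqrt (by nlinarith)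
          have h2 : √(g y ^ 2 + c ^ 2) ≤ |g y| + c := by
            rw [Real.sqrt_le_left (by positivity)]
            nlinarith [sq_abs (g y), mul_nonneg (abs_nonneg (g y)) hc.le]
          have h3 : |(k y).toReal - abs (g y)| ≤ |(k y).toReal - g y| := by
            have := abs_abs_sub_abs_le_abs_sub (k y).toReal (g y)
            rwa [abs_of_nonneg hk0] at this
          have h4 := abs_le.1 h3
          rw [abs_le]; constructor <;> linarith
      _ = eLpNorm ((fun y => (k y).toReal) - g) 1 ν + ENNReal.ofReal c := by
          rw [lintegral_add_right _ measurable_const, eLpNorm_one_eq_lintegral_enorm]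
          simp
      _ ≤ ENNReal.ofReal c + ENNReal.ofReal c := by gcongr
      _ = _ := by rw [← ENNReal.ofReal_add hc.le hc.le]; congr 1; ring

end GaussianJensenGeneral

section GaussianJensenGeneral

variable {ι : Type*} [Fintype ι]
  {E : Type*} [NormedAddCommGroup E] [InnerProductSpace ℝ E] [FiniteDimensional ℝ E]
  [MeasurableSpace E] [BorelSpace E]
  {G : ι → Type*} [∀ i, NormedAddCommGroup (G i)] [∀ i, NormedSpace ℝ (G i)]
  [∀ i, FiniteDimensional ℝ (G i)] [∀ i, MeasurableSpace (G i)] [∀ i, BorelSpace (G i)]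

/-- A Jensen-type inequality for Gaussian averages of products of powers of functions of
linear images of a standard Gaussian vector. -/
lemma lintegral_prod_rpow_le_of_stdGaussian (q : ι → ℝ) (hq : ∀ i, 0 ≤ q i)
    (L : ∀ i, E →L[ℝ] G i)
    (hL : ∀ u : ι → E, (∀ i, u i ∈ ((L i).ker)ᗮ) →
      ‖∑ i, q i • u i‖ ^ 2 ≤ ∑ i, q i * ‖u i‖ ^ 2)
    (k : ∀ i, G i → ℝ≥0∞) (hk : ∀ i, Measurable (k i))
    (hfin : ∀ i, ∫⁻ w, k i (L i w) ∂(stdGaussian E) ≠ ⊤) :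
    ∫⁻ w, ∏ i, k i (L i w) ^ q i ∂(stdGaussian E) ≤
      ∏ i, (∫⁻ w, k i (L i w) ∂(stdGaussian E)) ^ q i := by
  set c : ℕ → ℝ := fun n => (1 / 2) ^ n with hc
  have hc0 : ∀ n, 0 < c n := fun n => by positivity
  have hex : ∀ i n, ∃ φ : G i → ℝ, HasCompactSupport φ ∧ ContDiff ℝ 2 φ ∧ (∀ x, 0 ≤ φ x) ∧
      ∫⁻ w, ‖(k i (L i w)).toReal - (c n + φ (L i w))‖ₑ ∂(stdGaussian E) ≤
        ENNReal.ofReal (2 * c n) := fun i n => by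
    have hLm : Measurable (L i) := (L i).continuous.measurable
    have : IsProbabilityMeasure ((stdGaussian E).map (L i)) :=
      Measure.isProbabilityMeasure_map hLm.aemeasurable
    obtain ⟨φ, h1, h2, h3, h4⟩ := exists_smooth_approx ((stdGaussian E).map (L i)) (hk i)
      (by rw [lintegral_map (hk i) hLm]; exact hfin i) (hc0 n)
    refine ⟨φ, h1, h2, h3, ?_⟩
    have := h2.continuous.measurable
    have := hk i
    rwa [lintegral_map (by fun_prop) hLm] at h4
  choose φ hφ1 hφ2 hφ3 hφ4 using hex
  set K : ℕ → ι → E → ℝ := fun n i w => c n + φ i n (L i w) with hKdef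
  have hK0 : ∀ n i w, 0 ≤ K n i w := fun n i w => add_nonneg (hc0 n).le (hφ3 i n _)
  have hKc : ∀ n i, Continuous (K n i) := fun n i => by
    have := (hφ2 i n).continuous
    fun_prop
  -- the inequality for the approximants
  have hsm : ∀ n, ∫⁻ w, ∏ i, ENNReal.ofReal (K n i w) ^ q i ∂(stdGaussian E) ≤
      ∏ i, (∫⁻ w, ENNReal.ofReal (K n i w) ∂(stdGaussian E)) ^ q i := fun n => by
    choose D v hD0 hR using fun i =>
      exists_regularPositive_comp (hφ1 i n) (hφ2 i n) (hφ3 i n) (hc0 n) (L i)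
    set D' := ∑ i, D i
    have hR' : ∀ i, RegularPositive ((L i).ker)ᗮ (c n) D' (K n i) (v i) := fun i =>
      (hR i).mono (Finset.single_le_sum (fun i _ => hD0 i) (Finset.mem_univ i))
    have main := integral_prod_rpow_le_of_regularPositive q hq _ hL (hc0 n) hR'
    have hintegral : ∀ i, Integrable (K n i) (stdGaussian E) := fun i =>
      Integrable.of_bound (C := D') (hKc n i).aestronglyMeasurable
        (ae_of_all _ fun w => (hR' i).norm_le (hc0 n) w)
    have hprod : ∀ w, ∏ i, ENNReal.ofReal (K n i w) ^ q i =
        ENNReal.ofReal (∏ i, K n i w ^ q i) := fun w => by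
      rw [ENNReal.ofReal_prod_of_nonneg fun i _ => Real.rpow_nonneg (hK0 n i w) _]
      exact Finset.prod_congr rfl fun i _ => ENNReal.ofReal_rpow_of_nonneg (hK0 n i w) (hq i)
    have hi0 : ∀ i, 0 ≤ ∫ w, K n i w ∂(stdGaussian E) := fun i => integral_nonneg (hK0 n i)
    have hprodint : ∏ i, (∫⁻ w, ENNReal.ofReal (K n i w) ∂(stdGaussian E)) ^ q i =
        ENNReal.ofReal (∏ i, (∫ w, K n i w ∂(stdGaussian E)) ^ q i) := by
      rw [ENNReal.ofReal_prod_of_nonneg fun i _ => Real.rpow_nonneg (hi0 i) _]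
      refine Finset.prod_congr rfl fun i _ => ?_
      rw [← ofReal_integral_eq_lintegral_ofReal (hintegral i) (ae_of_all _ (hK0 n i)),
        ENNReal.ofReal_rpow_of_nonneg (hi0 i) (hq i)]
    simp_rw [hprod]
    rw [hprodint, ← ofReal_integral_eq_lintegral_ofReal]
    · exact ENNReal.ofReal_le_ofReal main
    · refine Integrable.of_bound (C := ∏ i, D' ^ q i) ?_ (ae_of_all _ fun w => ?_)
      · exact (continuous_finsetProd _ fun i _ =>
          (hKc n i).rpow_const fun x => Or.inr (hq i)).aestronglyMeasurable
      · rw [Real.norm_eq_abs, abs_of_nonneg (Finset.prod_nonneg fun i _ =>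
          Real.rpow_nonneg (hK0 n i w) _)]
        exact Finset.prod_le_prod (fun i _ => Real.rpow_nonneg (hK0 n i w) _)
          fun i _ => Real.rpow_le_rpow (hK0 n i w) ((hR' i).upper w) (hq i)
    · exact ae_of_all _ fun w => Finset.prod_nonneg fun i _ => Real.rpow_nonneg (hK0 n i w) _
  -- convergence of the approximants
  have hae : ∀ i, ∀ᵐ w ∂(stdGaussian E),
      Tendsto (fun n => ENNReal.ofReal (K n i w)) atTop (𝓝 (k i (L i w))) := fun i => by
    have hkm : Measurable fun w => k i (L i w) := (hk i).comp (L i).continuous.measurable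
    have hs : ∫⁻ w, ∑' n, ‖(k i (L i w)).toReal - K n i w‖ₑ ∂(stdGaussian E) ≠ ⊤ := by
      rw [lintegral_tsum fun n => by
        have := (hKc n i).measurable
        exact (hkm.ennreal_toReal.sub this).enorm.aemeasurable]
      refine ne_top_of_le_ne_top ?_ (ENNReal.tsum_le_tsum fun n => hφ4 i n)
      rw [← ENNReal.ofReal_tsum_of_nonneg (fun n => by positivity)
        ((summable_geometric_of_lt_one (by norm_num) (by norm_num)).mul_left 2)]
      exact ENNReal.ofReal_ne_top
    have h1 := ae_lt_top' (by
      refine AEMeasurable.tsum fun n => ?_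
      have := (hKc n i).measurable
      exact (hkm.ennreal_toReal.sub this).enorm.aemeasurable) hs
    filter_upwards [h1, ae_lt_top hkm (hfin i)] with w hw hw'
    have h2 := ENNReal.tendsto_atTop_zero_of_tsum_ne_top hw.ne
    have h3 : Tendsto (fun n => K n i w) atTop (𝓝 (k i (L i w)).toReal) := by
      rw [tendsto_iff_edist_tendsto_0]
      refine h2.congr fun n => ?_
      rw [edist_comm, edist_eq_enorm_sub]
    have := ENNReal.tendsto_ofReal h3
    rwa [ENNReal.ofReal_toReal hw'.ne] at this
  have hle : ∀ n i, ∫⁻ w, ENNReal.ofReal (K n i w) ∂(stdGaussian E) ≤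
      ∫⁻ w, k i (L i w) ∂(stdGaussian E) + ENNReal.ofReal (2 * c n) := fun n i => by
    have hkm : Measurable fun w => k i (L i w) := (hk i).comp (L i).continuous.measurable
    refine le_trans ?_ (add_le_add_right (hφ4 i n) _)
    rw [← lintegral_add_left hkm]
    refine lintegral_mono fun w => ?_
    calc ENNReal.ofReal (K n i w)
        ≤ ENNReal.ofReal ((k i (L i w)).toReal + ‖(k i (L i w)).toReal - K n i w‖) := by
          refine ENNReal.ofReal_le_ofReal ?_
          have := neg_abs_le ((k i (L i w)).toReal - K n i w)
          rw [Real.norm_eq_abs]; linarith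
      _ ≤ _ := by
          rw [ENNReal.ofReal_add ENNReal.toReal_nonneg (norm_nonneg _), ofReal_norm]
          gcongr
          exact ENNReal.ofReal_toReal_le
  have hct : Tendsto (fun n => ENNReal.ofReal (2 * c n)) atTop (𝓝 0) := by
    have : Tendsto (fun n => 2 * c n) atTop (𝓝 (2 * 0)) :=
      (tendsto_pow_atTop_nhds_zero_of_lt_one (by norm_num) (by norm_num)).const_mul 2
    simpa using ENNReal.tendsto_ofReal this
  have hlim : Tendsto (fun n => ∏ i, (∫⁻ w, k i (L i w) ∂(stdGaussian E) +
      ENNReal.ofReal (2 * c n)) ^ q i) atTop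
      (𝓝 (∏ i, (∫⁻ w, k i (L i w) ∂(stdGaussian E)) ^ q i)) := by
    refine ENNReal.tendsto_finsetProd_of_ne_top _ (fun i _ => ?_)
      fun i _ => ENNReal.rpow_ne_top_of_nonneg (hq i) (hfin i)
    refine (ENNReal.continuous_rpow_const.tendsto _).comp ?_
    simpa using hct.const_add (∫⁻ w, k i (L i w) ∂(stdGaussian E))
  calc ∫⁻ w, ∏ i, k i (L i w) ^ q i ∂(stdGaussian E)
      ≤ ∫⁻ w, liminf (fun n => ∏ i, ENNReal.ofReal (K n i w) ^ q i) atTop ∂(stdGaussian E) := by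
        refine lintegral_mono_ae ?_
        have hfa : ∀ i, ∀ᵐ w ∂(stdGaussian E), k i (L i w) < ⊤ := fun i =>
          ae_lt_top ((hk i).comp (L i).continuous.measurable) (hfin i)
        filter_upwards [ae_all_iff.2 hae, ae_all_iff.2 hfa] with w hw hw'
        refine (Tendsto.liminf_eq ?_).ge
        exact ENNReal.tendsto_finsetProd_of_ne_top _
          (fun i _ => (ENNReal.continuous_rpow_const.tendsto _).comp (hw i))
          fun i _ => ENNReal.rpow_ne_top_of_nonneg (hq i) (hw' i).ne
    _ ≤ liminf (fun n => ∫⁻ w, ∏ i, ENNReal.ofReal (K n i w) ^ q i ∂(stdGaussian E)) atTop := by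
        refine lintegral_liminf_le fun n => ?_
        exact Finset.measurable_prod _ fun i _ =>
          ((hKc n i).measurable.ennreal_ofReal).pow_const _
    _ ≤ liminf (fun n => ∏ i, (∫⁻ w, k i (L i w) ∂(stdGaussian E) +
          ENNReal.ofReal (2 * c n)) ^ q i) atTop := by
        refine liminf_le_liminf (Eventually.of_forall fun n => (hsm n).trans ?_)
        exact Finset.prod_le_prod' fun i _ => ENNReal.rpow_le_rpow (hle n i) (hq i)
    _ = _ := hlim.liminf_eq

end GaussianJensenGeneral

section GaussianLaws

open scoped MatrixOrder Matrix.Norms.L2Operator in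
lemma Matrix.PosSemidef.exists_transpose_mul_self {κ : Type*} [Fintype κ] [DecidableEq κ]
    {A : Matrix κ κ ℝ} (hA : A.PosSemidef) : ∃ F : Matrix κ κ ℝ, A = Fᵀ * F := by
  obtain ⟨F, hF⟩ := CStarAlgebra.nonneg_iff_eq_star_mul_self.mp hA.nonneg
  exact ⟨F, by rw [hF, star_eq_conjTranspose, conjTranspose_eq_transpose_of_trivial]⟩

variable {κ : Type*} [Fintype κ]

lemma charFun_stdGaussian_map_mulVec {k : ℕ} (T : Matrix (Fin k) κ ℝ) (r : ℝ)
    (t : EuclideanSpace ℝ (Fin k)) :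
    charFun ((stdGaussian (EuclideanSpace ℝ κ)).map
      fun w => WithLp.toLp 2 (r • (T *ᵥ w.ofLp))) t =
      Complex.exp (-(r ^ 2 * (t.ofLp ⬝ᵥ (T * Tᵀ) *ᵥ t.ofLp) : ℝ) / 2) := by
  rw [charFun_apply, integral_map (by fun_prop) (by fun_prop)]
  have h : ∀ w : EuclideanSpace ℝ κ, inner ℝ (WithLp.toLp 2 (r • (T *ᵥ w.ofLp))) t =
      inner ℝ w (WithLp.toLp 2 (r • (Tᵀ *ᵥ t.ofLp))) := fun w => by
    rw [EuclideanSpace.inner_eq_star_dotProduct, EuclideanSpace.inner_eq_star_dotProduct]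
    simp only [star_trivial, smul_dotProduct, dotProduct_smul]
    rw [dotProduct_mulVec, mulVec_transpose]
  simp_rw [h]
  rw [← charFun_apply, charFun_stdGaussian]
  congr 2
  rw [← Complex.ofReal_pow, EuclideanSpace.real_norm_sq_eq, ← Complex.ofReal_neg,
    ← Complex.ofReal_neg]
  congr 2
  rw [← mulVec_mulVec, dotProduct_mulVec t.ofLp, ← mulVec_transpose]
  simp [dotProduct, Finset.mul_sum, sq]
  exact Finset.sum_congr rfl fun i _ => by ring

lemma charFun_withDensity_gaussian_map_mulVec {k : ℕ} (P : Matrix (Fin k) (Fin k) ℝ)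
    (t : EuclideanSpace ℝ (Fin k)) :
    charFun (((volume : Measure (EuclideanSpace ℝ (Fin k))).withDensity
      fun x => ENNReal.ofReal (Real.exp (-Real.pi * ‖x‖ ^ 2))).map
      fun w => WithLp.toLp 2 (P *ᵥ w.ofLp)) t =
      Complex.exp (-((2 * Real.pi)⁻¹ * (t.ofLp ⬝ᵥ (P * Pᵀ) *ᵥ t.ofLp) : ℝ) / 2) := by
  rw [charFun_apply, integral_map (by fun_prop) (by fun_prop)]
  have h : ∀ w : EuclideanSpace ℝ (Fin k), inner ℝ (WithLp.toLp 2 (P *ᵥ w.ofLp)) t =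
      inner ℝ w (WithLp.toLp 2 (Pᵀ *ᵥ t.ofLp)) := fun w => by
    rw [EuclideanSpace.inner_eq_star_dotProduct, EuclideanSpace.inner_eq_star_dotProduct]
    simp only [star_trivial]
    rw [dotProduct_mulVec, mulVec_transpose]
  simp_rw [h]
  set s := WithLp.toLp 2 (Pᵀ *ᵥ t.ofLp) with hs
  rw [integral_withDensity_eq_integral_toReal_smul (by fun_prop) (by simp)]
  have e : ∀ x : EuclideanSpace ℝ (Fin k),
      (ENNReal.ofReal (Real.exp (-Real.pi * ‖x‖ ^ 2))).toReal •
        Complex.exp ((inner ℝ x s : ℝ) * Complex.I) =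
      Complex.exp (-(Real.pi : ℂ) * ‖x‖ ^ 2 + Complex.I * (inner ℝ s x : ℝ)) := fun x => by
    rw [ENNReal.toReal_ofReal (Real.exp_pos _).le, Complex.real_smul, Complex.ofReal_exp,
      ← Complex.exp_add, real_inner_comm]
    push_cast
    congr 1; ring
  simp_rw [e]
  rw [GaussianFourier.integral_cexp_neg_mul_sq_norm_add (by simpa using Real.pi_pos)]
  have hpi : (Real.pi : ℂ) ≠ 0 := by exact_mod_cast Real.pi_ne_zero
  rw [div_self hpi, Complex.one_cpow, one_mul]
  congr 1
  have e2 : ‖s‖ ^ 2 = t.ofLp ⬝ᵥ (P * Pᵀ) *ᵥ t.ofLp := by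
    rw [EuclideanSpace.real_norm_sq_eq, ← mulVec_mulVec, dotProduct_mulVec t.ofLp,
      ← mulVec_transpose]
    simp [dotProduct, hs, sq]
  rw [← Complex.ofReal_pow, e2, Complex.I_sq]
  push_cast
  field_simp
  ring

/-- The law of a linear image of a standard Gaussian vector. -/
lemma lintegral_stdGaussian_mulVec {k : ℕ} {A : Matrix (Fin k) (Fin k) ℝ} (hA : A.PosDef)
    {T : Matrix (Fin k) κ ℝ} (hT : T * Tᵀ = A⁻¹) {φ : (Fin k → ℝ) → ℝ≥0∞} (hφ : Measurable φ) :
    ∫⁻ w, φ ((√(2 * Real.pi))⁻¹ • (T *ᵥ w.ofLp)) ∂(stdGaussian (EuclideanSpace ℝ κ)) =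
      ENNReal.ofReal (√A.det) * ∫⁻ y, φ y * ENNReal.ofReal (gaussFn A y) := by
  obtain ⟨F, hF⟩ := hA.posSemidef.exists_transpose_mul_self
  have hdet : A.det = F.det ^ 2 := by rw [hF, det_mul, det_transpose, sq]
  have hFdet : F.det ≠ 0 := fun h => hA.det_pos.ne' (by rw [hdet, h]; simp)
  have hFu : IsUnit F.det := hFdet.isUnit
  have hFF : F⁻¹ * (F⁻¹)ᵀ = A⁻¹ := by
    rw [hF, Matrix.mul_inv_rev, transpose_nonsing_inv]
  have hfinite : IsFiniteMeasure ((volume : Measure (EuclideanSpace ℝ (Fin k))).withDensity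
      fun x => ENNReal.ofReal (Real.exp (-Real.pi * ‖x‖ ^ 2))) := by
    refine isFiniteMeasure_withDensity_ofReal ?_
    have := GaussianFourier.integrable_cexp_neg_mul_sq_norm_add
      (V := EuclideanSpace ℝ (Fin k)) (b := (Real.pi : ℂ)) (by simpa using Real.pi_pos) 0 0
    refine HasFiniteIntegral.congr' this.2 (ae_of_all _ fun x => ?_)
    simp [Complex.norm_exp, ← Complex.ofReal_pow, abs_of_pos (Real.exp_pos _)]
  have key : (stdGaussian (EuclideanSpace ℝ κ)).map
      (fun w => WithLp.toLp 2 ((√(2 * Real.pi))⁻¹ • (T *ᵥ w.ofLp))) =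
      ((volume : Measure (EuclideanSpace ℝ (Fin k))).withDensity
        fun x => ENNReal.ofReal (Real.exp (-Real.pi * ‖x‖ ^ 2))).map
        fun w => WithLp.toLp 2 (F⁻¹ *ᵥ w.ofLp) := by
    refine Measure.ext_of_charFun (funext fun t => ?_)
    rw [charFun_stdGaussian_map_mulVec, charFun_withDensity_gaussian_map_mulVec, hT, hFF,
      inv_pow, Real.sq_sqrt (by positivity)]
  have h1 : ∫⁻ w, φ ((√(2 * Real.pi))⁻¹ • (T *ᵥ w.ofLp)) ∂(stdGaussian (EuclideanSpace ℝ κ)) =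
      ∫⁻ x : EuclideanSpace ℝ (Fin k), φ x.ofLp ∂((stdGaussian (EuclideanSpace ℝ κ)).map
      (fun w => WithLp.toLp 2 ((√(2 * Real.pi))⁻¹ • (T *ᵥ w.ofLp)))) := by
    rw [lintegral_map (by fun_prop) (by fun_prop)]
  rw [h1, key, lintegral_map (by fun_prop) (by fun_prop),
    lintegral_withDensity_eq_lintegral_mul _ (by fun_prop) (by fun_prop)]
  have h2 := (PiLp.volume_preserving_toLp (Fin k)).lintegral_comp_emb
    (MeasurableEquiv.toLp 2 (Fin k → ℝ)).measurableEmbedding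
    ((fun x : EuclideanSpace ℝ (Fin k) => ENNReal.ofReal (Real.exp (-Real.pi * ‖x‖ ^ 2))) *
      fun x => φ (F⁻¹ *ᵥ x.ofLp))
  rw [← h2]
  set H : (Fin k → ℝ) → ℝ≥0∞ := fun x =>
    ENNReal.ofReal (Real.exp (-Real.pi * (x ⬝ᵥ x))) * φ (F⁻¹ *ᵥ x) with hH
  have hHm : Measurable H := by
    have : Measurable fun x : Fin k → ℝ => x ⬝ᵥ x := by unfold dotProduct; fun_prop
    fun_prop
  have h3 : ∫⁻ x, H x ∂((volume : Measure (Fin k → ℝ)).map (toLin' F)) =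
      ∫⁻ y, H (F *ᵥ y) := by
    rw [lintegral_map hHm (LinearMap.continuous_of_finiteDimensional _).measurable]
    rfl
  rw [Real.map_matrix_volume_pi_eq_smul_volume_pi hFdet, lintegral_smul_measure] at h3
  have h4 : ∀ y, H (F *ᵥ y) = φ y * ENNReal.ofReal (gaussFn A y) := fun y => by
    simp only [hH, gaussFn]
    rw [mulVec_mulVec, nonsing_inv_mul _ hFu, one_mulVec, mul_comm, hF, ← mulVec_mulVec,
      mulVec_transpose, ← dotProduct_mulVec]
  simp_rw [← h4]
  rw [← h3, hdet, Real.sqrt_sq_eq_abs, smul_eq_mul, ← mul_assoc, ← ENNReal.ofReal_mul (abs_nonneg _),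
    ← abs_mul, mul_inv_cancel₀ hFdet, abs_one, ENNReal.ofReal_one, one_mul]
  refine lintegral_congr fun x => ?_
  simp only [hH, Pi.mul_apply]
  congr 4
  rw [EuclideanSpace.real_norm_sq_eq]
  simp [dotProduct, sq]

end GaussianLaws

section GaussianJensenMatrix

variable {ι : Type*} [Fintype ι] {κ : Type*} [Fintype κ]

lemma lintegral_prod_rpow_le_of_mulVec (q : ι → ℝ) (hq : ∀ i, 0 ≤ q i) {k : ι → ℕ}
    (T : ∀ i, Matrix (Fin (k i)) κ ℝ)
    (hT : ∀ w : ∀ i, Fin (k i) → ℝ,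
      (∑ i, q i • ((T i)ᵀ *ᵥ w i)) ⬝ᵥ (∑ i, q i • ((T i)ᵀ *ᵥ w i)) ≤
        ∑ i, q i * (((T i)ᵀ *ᵥ w i) ⬝ᵥ ((T i)ᵀ *ᵥ w i)))
    (h : ∀ i, (Fin (k i) → ℝ) → ℝ≥0∞) (hh : ∀ i, Measurable (h i))
    (hfin : ∀ i, ∫⁻ w, h i (T i *ᵥ w.ofLp) ∂(stdGaussian (EuclideanSpace ℝ κ)) ≠ ⊤) :
    ∫⁻ w, ∏ i, h i (T i *ᵥ w.ofLp) ^ q i ∂(stdGaussian (EuclideanSpace ℝ κ)) ≤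
      ∏ i, (∫⁻ w, h i (T i *ᵥ w.ofLp) ∂(stdGaussian (EuclideanSpace ℝ κ))) ^ q i := by
  classical
  set L : ∀ i, EuclideanSpace ℝ κ →L[ℝ] EuclideanSpace ℝ (Fin (k i)) := fun i =>
    LinearMap.toContinuousLinearMap (toEuclideanLin (T i)) with hLdef
  have hL : ∀ i w, (L i w).ofLp = T i *ᵥ w.ofLp := fun i w => rfl
  refine lintegral_prod_rpow_le_of_stdGaussian q hq L ?_ (fun i x => h i x.ofLp)
    (fun i => by have := hh i; fun_prop) hfin
  intro u hu
  have hex : ∀ i, ∃ w : Fin (k i) → ℝ, u i = WithLp.toLp 2 ((T i)ᵀ *ᵥ w) := fun i => by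
    have h1 := hu i
    rw [ContinuousLinearMap.orthogonal_ker,
      (Submodule.closed_of_finiteDimensional _).submodule_topologicalClosure_eq] at h1
    obtain ⟨y, hy⟩ := h1
    refine ⟨y.ofLp, ?_⟩
    rw [← hy]
    refine ext_inner_right ℝ fun z => ?_
    have : inner ℝ ((ContinuousLinearMap.adjoint (L i)) y) z = inner ℝ y (L i z) :=
      ContinuousLinearMap.adjoint_inner_left _ _ _
    refine this.trans ?_
    rw [EuclideanSpace.inner_eq_star_dotProduct, EuclideanSpace.inner_eq_star_dotProduct, hL]
    simp only [star_trivial]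
    rw [mulVec_transpose, dotProduct_comm, dotProduct_mulVec, dotProduct_comm]
  choose w hw using hex
  have e : ∀ v : κ → ℝ, ‖WithLp.toLp 2 v‖ ^ 2 = v ⬝ᵥ v := fun v => by
    rw [EuclideanSpace.real_norm_sq_eq]; simp [dotProduct, sq]
  have h2 := hT w
  have h3 : ∑ i, q i • u i = WithLp.toLp 2 (∑ i, q i • ((T i)ᵀ *ᵥ w i)) := by
    simp [hw]
  rw [h3, e]
  refine h2.trans_eq (Finset.sum_congr rfl fun i _ => ?_)
  rw [hw, e]

end GaussianJensenMatrix

section CriticalPoint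

/-- The midpoint form of being more log-convex than `g_Q`. -/
def MidLogConvex {k : ℕ} (f : (Fin k → ℝ) → ℝ≥0∞) (Q : Matrix (Fin k) (Fin k) ℝ) : Prop :=
  ∀ y z, f y ^ 2 ≤ f (y + z) * f (y - z) * ENNReal.ofReal (Real.exp (2 * Real.pi * (Q *ᵥ z ⬝ᵥ z)))

lemma measurable_dotProduct_mulVec {k : ℕ} (A : Matrix (Fin k) (Fin k) ℝ) :
    Measurable fun y : Fin k → ℝ => A *ᵥ y ⬝ᵥ y := by
  unfold dotProduct mulVec dotProduct
  fun_prop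

lemma MidLogConvex.mul_exp_sq_le {k : ℕ} {f : (Fin k → ℝ) → ℝ≥0∞} {Q : Matrix (Fin k) (Fin k) ℝ}
    (hf : MidLogConvex f Q) (B : Matrix (Fin k) (Fin k) ℝ) {z : Fin k → ℝ}
    (hz : Q *ᵥ z = B *ᵥ z) (y : Fin k → ℝ) :
    (f y * ENNReal.ofReal (Real.exp (Real.pi * (B *ᵥ y ⬝ᵥ y)))) ^ 2 ≤
      (f (y + z) * ENNReal.ofReal (Real.exp (Real.pi * (B *ᵥ (y + z) ⬝ᵥ (y + z))))) *
      (f (y - z) * ENNReal.ofReal (Real.exp (Real.pi * (B *ᵥ (y - z) ⬝ᵥ (y - z))))) := by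
  have e : ENNReal.ofReal (Real.exp (Real.pi * (B *ᵥ (y + z) ⬝ᵥ (y + z)))) *
      ENNReal.ofReal (Real.exp (Real.pi * (B *ᵥ (y - z) ⬝ᵥ (y - z)))) =
      ENNReal.ofReal (Real.exp (2 * Real.pi * (Q *ᵥ z ⬝ᵥ z))) *
      ENNReal.ofReal (Real.exp (Real.pi * (B *ᵥ y ⬝ᵥ y))) ^ 2 := by
    rw [← ENNReal.ofReal_mul (Real.exp_pos _).le, ← Real.exp_add,
      ← ENNReal.ofReal_pow (Real.exp_pos _).le, ← Real.exp_nat_mul,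
      ← ENNReal.ofReal_mul (Real.exp_pos _).le, ← Real.exp_add, hz]
    congr 2
    simp only [mulVec_add, mulVec_sub, dotProduct_add, dotProduct_sub, add_dotProduct,
      sub_dotProduct]
    push_cast
    ring
  calc _ = f y ^ 2 * ENNReal.ofReal (Real.exp (Real.pi * (B *ᵥ y ⬝ᵥ y))) ^ 2 := mul_pow _ _ _
    _ ≤ f (y + z) * f (y - z) * ENNReal.ofReal (Real.exp (2 * Real.pi * (Q *ᵥ z ⬝ᵥ z))) *
        ENNReal.ofReal (Real.exp (Real.pi * (B *ᵥ y ⬝ᵥ y))) ^ 2 := by gcongr; exact hf y z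
    _ = f (y + z) * f (y - z) * (ENNReal.ofReal (Real.exp (2 * Real.pi * (Q *ᵥ z ⬝ᵥ z))) *
        ENNReal.ofReal (Real.exp (Real.pi * (B *ᵥ y ⬝ᵥ y))) ^ 2) := by ring
    _ = _ := by rw [← e]; ring

variable {ι : Type*} [Fintype ι] {n : ℕ} {k : ι → ℕ}

lemma dotProduct_sum_mulVec_eq (C : ∀ i, Matrix (Fin (k i)) (Fin n) ℝ) (p : ι → ℝ)
    (B : ∀ i, Matrix (Fin (k i)) (Fin (k i)) ℝ) (x : Fin n → ℝ) :
    (∑ i, p i • ((C i)ᵀ * B i * C i)) *ᵥ x ⬝ᵥ x =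
      ∑ i, p i * (B i *ᵥ (C i *ᵥ x) ⬝ᵥ (C i *ᵥ x)) := by
  rw [sum_mulVec, sum_dotProduct]
  refine Finset.sum_congr rfl fun i _ => ?_
  rw [smul_mulVec, smul_dotProduct, smul_eq_mul, ← mulVec_mulVec, ← mulVec_mulVec,
    mulVec_transpose, ← dotProduct_mulVec]

lemma dotProduct_inv_sum_le (C : ∀ i, Matrix (Fin (k i)) (Fin n) ℝ) {p : ι → ℝ}
    (hp : ∀ i, 0 < p i) {B : ∀ i, Matrix (Fin (k i)) (Fin (k i)) ℝ} (hB : ∀ i, (B i).PosDef)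
    (hM : (∑ i, p i • ((C i)ᵀ * B i * C i)).PosDef) (s : ∀ i, Fin (k i) → ℝ) :
    (∑ i, p i • ((C i)ᵀ *ᵥ s i)) ⬝ᵥ (∑ i, p i • ((C i)ᵀ * B i * C i))⁻¹ *ᵥ
        (∑ i, p i • ((C i)ᵀ *ᵥ s i)) ≤
      ∑ i, p i * (s i ⬝ᵥ (B i)⁻¹ *ᵥ s i) := by
  set z := ∑ i, p i • ((C i)ᵀ *ᵥ s i) with hz
  set M := ∑ i, p i • ((C i)ᵀ * B i * C i) with hMdef
  set x := M⁻¹ *ᵥ z with hx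
  have hMx : M *ᵥ x = z := by
    rw [hx, mulVec_mulVec, mul_nonsing_inv _ hM.det_pos.ne'.isUnit, one_mulVec]
  have h1 : z ⬝ᵥ x = ∑ i, p i * (s i ⬝ᵥ C i *ᵥ x) := by
    rw [hz, sum_dotProduct]
    refine Finset.sum_congr rfl fun i _ => ?_
    rw [smul_dotProduct, smul_eq_mul, mulVec_transpose, ← dotProduct_mulVec]
  have h2 : z ⬝ᵥ x = ∑ i, p i * (B i *ᵥ (C i *ᵥ x) ⬝ᵥ (C i *ᵥ x)) := by
    rw [← hMx, hMdef, dotProduct_sum_mulVec_eq]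
  have h3 : ∀ i, 0 ≤ s i ⬝ᵥ (B i)⁻¹ *ᵥ s i - 2 * (s i ⬝ᵥ C i *ᵥ x) +
      B i *ᵥ (C i *ᵥ x) ⬝ᵥ (C i *ᵥ x) := fun i => by
    have h4 := (hB i).inv.posSemidef.dotProduct_mulVec_nonneg (s i - B i *ᵥ (C i *ᵥ x))
    have h5 : (B i)⁻¹ *ᵥ (B i *ᵥ (C i *ᵥ x)) = C i *ᵥ x := by
      rw [mulVec_mulVec, nonsing_inv_mul _ (hB i).det_pos.ne'.isUnit, one_mulVec]
    have h6 : (B i *ᵥ (C i *ᵥ x)) ⬝ᵥ (B i)⁻¹ *ᵥ s i = s i ⬝ᵥ C i *ᵥ x := by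
      rw [dotProduct_mulVec, ← mulVec_transpose, transpose_nonsing_inv,
        (conjTranspose_eq_transpose_of_trivial (B i)).symm.trans (hB i).1, h5, dotProduct_comm]
    simp only [star_trivial, mulVec_sub, dotProduct_sub, sub_dotProduct, h5, h6] at h4
    linarith
  have h7 := Finset.sum_nonneg fun i (_ : i ∈ Finset.univ) => mul_nonneg (hp i).le (h3 i)
  simp only [mul_add, mul_sub, Finset.sum_add_distrib, Finset.sum_sub_distrib] at h7
  rw [← h2] at h7
  have h8 : ∑ i, p i * (2 * (s i ⬝ᵥ C i *ᵥ x)) = 2 * z ⬝ᵥ x := by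
    rw [h1, Finset.mul_sum]
    exact Finset.sum_congr rfl fun i _ => by ring
  linarith

end CriticalPoint

section CriticalPoint

lemma transpose_mulVec_dotProduct_self {α β : Type*} [Fintype α] [Fintype β] (A : Matrix α β ℝ)
    (v : α → ℝ) : (Aᵀ *ᵥ v) ⬝ᵥ (Aᵀ *ᵥ v) = v ⬝ᵥ (A * Aᵀ) *ᵥ v := by
  rw [← mulVec_mulVec, dotProduct_mulVec v, ← mulVec_transpose]

variable {ι : Type*} [Fintype ι] [DecidableEq ι] {n : ℕ} {k : ι → ℕ}

/-- The projection of `⊕ᵢ ℝ^{kᵢ}` onto a summand. -/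
def blockProj (k : ι → ℕ) (i : ι) : Matrix (Fin (k i)) (Σ j, Fin (k j)) ℝ :=
  (1 : Matrix (Σ j, Fin (k j)) (Σ j, Fin (k j)) ℝ).submatrix (fun a => ⟨i, a⟩) id

lemma blockProj_mul_transpose (i : ι) : blockProj k i * (blockProj k i)ᵀ = 1 := by
  ext a b
  simp [blockProj, mul_apply, one_apply]

lemma sum_blockProj_transpose_mulVec (v : ∀ i, Fin (k i) → ℝ) :
    ∑ i, (blockProj k i)ᵀ *ᵥ v i = fun a => v a.1 a.2 := by
  ext a
  simp only [Finset.sum_apply, mulVec, dotProduct, blockProj, transpose_apply, submatrix_apply,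
    id_eq, one_apply, ite_mul, one_mul, zero_mul]
  rw [← Fintype.sum_sigma' (f := fun i x => if (⟨i, x⟩ : Σ j, Fin (k j)) = a then v i x else 0)]
  simp

lemma dotProduct_sum_blockProj (v : ∀ i, Fin (k i) → ℝ) :
    (∑ i, (blockProj k i)ᵀ *ᵥ v i) ⬝ᵥ (∑ i, (blockProj k i)ᵀ *ᵥ v i) = ∑ i, v i ⬝ᵥ v i := by
  rw [sum_blockProj_transpose_mulVec]
  simp only [dotProduct]
  exact Fintype.sum_sigma _

/-- The matrices of the Gaussian coupling attached to a critical point. -/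
def couplingMatrix (C : ∀ i, Matrix (Fin (k i)) (Fin n) ℝ) (R : Matrix (Fin n) (Fin n) ℝ)
    (S : ∀ i, Matrix (Fin (k i)) (Fin (k i)) ℝ) (a : ι × Bool) :
    Matrix (Fin (k a.1)) (Fin n ⊕ Σ j, Fin (k j)) ℝ :=
  fromCols (C a.1 * R) ((if a.2 then (1 : ℝ) else -1) • (S a.1 * blockProj k a.1))

lemma couplingMatrix_mul_transpose (C : ∀ i, Matrix (Fin (k i)) (Fin n) ℝ)
    (R : Matrix (Fin n) (Fin n) ℝ) (S : ∀ i, Matrix (Fin (k i)) (Fin (k i)) ℝ) (a : ι × Bool) :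
    couplingMatrix C R S a * (couplingMatrix C R S a)ᵀ =
      C a.1 * (R * Rᵀ) * (C a.1)ᵀ + S a.1 * (S a.1)ᵀ := by
  have h : S a.1 * blockProj k a.1 * (S a.1 * blockProj k a.1)ᵀ = S a.1 * (S a.1)ᵀ := by
    rw [transpose_mul, Matrix.mul_assoc, ← Matrix.mul_assoc (blockProj k a.1),
      blockProj_mul_transpose, Matrix.one_mul]
  rw [couplingMatrix, transpose_fromCols, fromCols_mul_fromRows, transpose_smul, Matrix.smul_mul,
    Matrix.mul_smul, h, transpose_mul]
  congr 1
  · simp only [Matrix.mul_assoc]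
  · split_ifs <;> simp

lemma couplingMatrix_transpose_mulVec (C : ∀ i, Matrix (Fin (k i)) (Fin n) ℝ)
    (R : Matrix (Fin n) (Fin n) ℝ) (S : ∀ i, Matrix (Fin (k i)) (Fin (k i)) ℝ) (a : ι × Bool)
    (v : Fin (k a.1) → ℝ) :
    (couplingMatrix C R S a)ᵀ *ᵥ v =
      Sum.elim (Rᵀ *ᵥ ((C a.1)ᵀ *ᵥ v))
        ((blockProj k a.1)ᵀ *ᵥ ((S a.1)ᵀ *ᵥ ((if a.2 then (1 : ℝ) else -1) • v))) := by
  rw [couplingMatrix, transpose_fromCols, fromRows_mulVec, transpose_smul, transpose_mul,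
    transpose_mul, ← mulVec_mulVec, smul_mulVec, ← mulVec_mulVec, mulVec_smul, mulVec_smul]

lemma couplingMatrix_mulVec (C : ∀ i, Matrix (Fin (k i)) (Fin n) ℝ)
    (R : Matrix (Fin n) (Fin n) ℝ) (S : ∀ i, Matrix (Fin (k i)) (Fin (k i)) ℝ) (a : ι × Bool)
    (w : (Fin n ⊕ Σ j, Fin (k j)) → ℝ) :
    couplingMatrix C R S a *ᵥ w = C a.1 *ᵥ (R *ᵥ (w ∘ Sum.inl)) +
      (if a.2 then (1 : ℝ) else -1) • (S a.1 *ᵥ (blockProj k a.1 *ᵥ (w ∘ Sum.inr))) := by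
  rw [couplingMatrix, fromCols_mulVec, smul_mulVec, mulVec_mulVec, mulVec_mulVec]

lemma couplingMatrix_domination (C : ∀ i, Matrix (Fin (k i)) (Fin n) ℝ) {p : ι → ℝ}
    (hp : ∀ i, 0 < p i) (hp1 : ∀ i, p i ≤ 1) {B : ∀ i, Matrix (Fin (k i)) (Fin (k i)) ℝ}
    (hB : ∀ i, (B i).PosDef) (hM : (∑ i, p i • ((C i)ᵀ * B i * C i)).PosDef)
    {R : Matrix (Fin n) (Fin n) ℝ} (hR : R * Rᵀ = (∑ i, p i • ((C i)ᵀ * B i * C i))⁻¹)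
    {S : ∀ i, Matrix (Fin (k i)) (Fin (k i)) ℝ}
    (hS : ∀ i, C i * (R * Rᵀ) * (C i)ᵀ + S i * (S i)ᵀ = (B i)⁻¹)
    (w : ∀ a : ι × Bool, Fin (k a.1) → ℝ) :
    (∑ a, (p a.1 / 2) • ((couplingMatrix C R S a)ᵀ *ᵥ w a)) ⬝ᵥ
        (∑ a, (p a.1 / 2) • ((couplingMatrix C R S a)ᵀ *ᵥ w a)) ≤
      ∑ a, (p a.1 / 2) * (((couplingMatrix C R S a)ᵀ *ᵥ w a) ⬝ᵥ
        ((couplingMatrix C R S a)ᵀ *ᵥ w a)) := by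
  set s : ∀ i, Fin (k i) → ℝ := fun i => (2 : ℝ)⁻¹ • (w (i, true) + w (i, false)) with hs
  set d : ∀ i, Fin (k i) → ℝ := fun i => (2 : ℝ)⁻¹ • (w (i, true) - w (i, false)) with hd
  have hsum : ∑ a, (p a.1 / 2) • ((couplingMatrix C R S a)ᵀ *ᵥ w a) =
      Sum.elim (Rᵀ *ᵥ ∑ i, p i • ((C i)ᵀ *ᵥ s i))
        (∑ i, (blockProj k i)ᵀ *ᵥ (p i • ((S i)ᵀ *ᵥ d i))) := by
    have h1 : ∀ i, ∑ σ : Bool, (p i / 2) • ((couplingMatrix C R S (i, σ))ᵀ *ᵥ w (i, σ)) =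
        Sum.elim (Rᵀ *ᵥ (p i • ((C i)ᵀ *ᵥ s i)))
          ((blockProj k i)ᵀ *ᵥ (p i • ((S i)ᵀ *ᵥ d i))) := fun i => by
      rw [Fintype.sum_bool, couplingMatrix_transpose_mulVec, couplingMatrix_transpose_mulVec]
      funext j
      rcases j with j | j
      · simp only [Pi.add_apply, Pi.smul_apply, Sum.elim_inl, hs, mulVec_smul, mulVec_add,
          smul_eq_mul]
        ring
      · simp only [Pi.add_apply, Pi.smul_apply, Sum.elim_inr, hd, mulVec_smul, mulVec_sub,
          smul_eq_mul, if_true, Bool.false_eq_true, if_false, Pi.sub_apply]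
        ring
    rw [Fintype.sum_prod_type]
    simp only [h1]
    funext j
    rcases j with j | j
    · simp [Finset.sum_apply, mulVec_sum]
    · simp [Finset.sum_apply]
  rw [hsum, sumElim_dotProduct_sumElim, dotProduct_sum_blockProj, transpose_mulVec_dotProduct_self, hR]
  have hR' : ∀ i, ∑ σ : Bool, (p i / 2) * (((couplingMatrix C R S (i, σ))ᵀ *ᵥ w (i, σ)) ⬝ᵥ
      ((couplingMatrix C R S (i, σ))ᵀ *ᵥ w (i, σ))) =
      p i * (s i ⬝ᵥ (B i)⁻¹ *ᵥ s i) + p i * (d i ⬝ᵥ (B i)⁻¹ *ᵥ d i) := fun i => by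
    rw [Fintype.sum_bool, transpose_mulVec_dotProduct_self, transpose_mulVec_dotProduct_self,
      couplingMatrix_mul_transpose, couplingMatrix_mul_transpose]
    simp only [hS, hs, hd, mulVec_smul, mulVec_add, mulVec_sub, smul_dotProduct, dotProduct_smul,
      add_dotProduct, dotProduct_add, sub_dotProduct, dotProduct_sub, smul_eq_mul]
    ring
  rw [Fintype.sum_prod_type]
  simp only [hR', Finset.sum_add_distrib]
  refine add_le_add (dotProduct_inv_sum_le C hp hB hM s) (Finset.sum_le_sum fun i _ => ?_)
  have h2 : ((S i)ᵀ *ᵥ d i) ⬝ᵥ ((S i)ᵀ *ᵥ d i) ≤ d i ⬝ᵥ (B i)⁻¹ *ᵥ d i := by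
    rw [transpose_mulVec_dotProduct_self, ← hS, add_mulVec, dotProduct_add]
    have h3 : 0 ≤ ((C i * R)ᵀ *ᵥ d i) ⬝ᵥ ((C i * R)ᵀ *ᵥ d i) :=
      Finset.sum_nonneg fun _ _ => mul_self_nonneg _
    rw [transpose_mulVec_dotProduct_self, transpose_mul, ← Matrix.mul_assoc, Matrix.mul_assoc (C i)] at h3
    linarith
  have h3 : 0 ≤ ((S i)ᵀ *ᵥ d i) ⬝ᵥ ((S i)ᵀ *ᵥ d i) :=
    Finset.sum_nonneg fun _ _ => mul_self_nonneg _
  rw [smul_dotProduct, dotProduct_smul, smul_eq_mul, smul_eq_mul]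
  have h4 := mul_le_mul_of_nonneg_right (hp1 i) h3
  exact mul_le_mul_of_nonneg_left (by linarith) (hp i).le

end CriticalPoint

section CriticalInequality

lemma lintegral_prod_rpow_le_of_critical_of_le_one {ι : Type*} [Fintype ι] [DecidableEq ι]
    {n : ℕ} {k : ι → ℕ} (C : ∀ i, Matrix (Fin (k i)) (Fin n) ℝ) {p : ι → ℝ}
    (hp : ∀ i, 0 < p i) (hp1 : ∀ i, p i ≤ 1) {B Q : ∀ i, Matrix (Fin (k i)) (Fin (k i)) ℝ}
    (hB : ∀ i, (B i).PosDef) {M : Matrix (Fin n) (Fin n) ℝ}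
    (hMeq : M = ∑ i, p i • ((C i)ᵀ * B i * C i)) (hM : M.PosDef)
    (hΛ : ∀ i, ((B i)⁻¹ - C i * M⁻¹ * (C i)ᵀ).PosSemidef)
    (hQΛ : ∀ i, (Q i - B i) * ((B i)⁻¹ - C i * M⁻¹ * (C i)ᵀ) = 0)
    {f : ∀ i, (Fin (k i) → ℝ) → ℝ≥0∞} (hf : ∀ i, Measurable (f i))
    (hfQ : ∀ i, MidLogConvex (f i) (Q i)) (hfin : ∀ i, ∫⁻ y, f i y ≠ ⊤) :
    ENNReal.ofReal (√M.det) * ∫⁻ x, ∏ i, f i (C i *ᵥ x) ^ p i ≤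
      ∏ i, (ENNReal.ofReal (√(B i).det) * ∫⁻ y, f i y) ^ p i := by
  obtain ⟨F, hF⟩ := hM.inv.posSemidef.exists_transpose_mul_self
  choose G hG using fun i => (hΛ i).exists_transpose_mul_self
  set R := Fᵀ with hRdef
  have hR : R * Rᵀ = M⁻¹ := by rw [hF, hRdef, transpose_transpose]
  set S : ∀ i, Matrix (Fin (k i)) (Fin (k i)) ℝ := fun i => (G i)ᵀ with hSdef
  have hSS : ∀ i, S i * (S i)ᵀ = (B i)⁻¹ - C i * M⁻¹ * (C i)ᵀ := fun i => by
    rw [hG, hSdef, transpose_transpose]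
  have hQS : ∀ i v, Q i *ᵥ (S i *ᵥ v) = B i *ᵥ (S i *ᵥ v) := fun i v => by
    have h1 := hQΛ i
    rw [← hSS, ← conjTranspose_eq_transpose_of_trivial,
      mul_self_mul_conjTranspose_eq_zero] at h1
    rw [← sub_eq_zero, ← sub_mulVec, mulVec_mulVec, h1, zero_mulVec]
  have hS : ∀ i, C i * (R * Rᵀ) * (C i)ᵀ + S i * (S i)ᵀ = (B i)⁻¹ := fun i => by
    rw [hSS, hR]; abel
  set h : ∀ i, (Fin (k i) → ℝ) → ℝ≥0∞ := fun i y =>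
    f i y * ENNReal.ofReal (Real.exp (Real.pi * (B i *ᵥ y ⬝ᵥ y))) with hh
  have hhm : ∀ i, Measurable (h i) := fun i =>
    (hf i).mul (((measurable_dotProduct_mulVec (B i)).const_mul _).exp.ennreal_ofReal)
  have hcancel : ∀ t : ℝ, ENNReal.ofReal (Real.exp (Real.pi * t)) *
      ENNReal.ofReal (Real.exp (-Real.pi * t)) = 1 := fun t => by
    rw [← ENNReal.ofReal_mul (Real.exp_pos _).le, ← Real.exp_add]
    simp
  have hhf : ∀ i y, h i y * ENNReal.ofReal (gaussFn (B i) y) = f i y := fun i y => by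
    rw [hh, gaussFn]
    dsimp only
    rw [mul_assoc, hcancel, mul_one]
  set r : ℝ := (√(2 * Real.pi))⁻¹ with hr
  set γ := stdGaussian (EuclideanSpace ℝ (Fin n ⊕ Σ j, Fin (k j))) with hγ
  set T := couplingMatrix C R S with hTdef
  have hTT : ∀ a, T a * (T a)ᵀ = (B a.1)⁻¹ := fun a => by
    rw [hTdef, couplingMatrix_mul_transpose, hS]
  have hmarg : ∀ a : ι × Bool, ∫⁻ w, h a.1 (r • (T a *ᵥ w.ofLp)) ∂γ =
      ENNReal.ofReal (√(B a.1).det) * ∫⁻ y, f a.1 y := fun a => by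
    rw [hr, hγ, lintegral_stdGaussian_mulVec (hB a.1) (hTT a) (hhm a.1)]
    simp only [hhf]
  set D : Matrix (Fin n) (Fin n ⊕ Σ j, Fin (k j)) ℝ := fromCols R 0 with hD
  have hDD : D * Dᵀ = M⁻¹ := by
    rw [hD, transpose_fromCols, fromCols_mul_fromRows, hR]; simp
  have hprod : ∀ x, (∏ i, h i (C i *ᵥ x) ^ p i) * ENNReal.ofReal (gaussFn M x) =
      ∏ i, f i (C i *ᵥ x) ^ p i := fun x => by
    have e1 : ENNReal.ofReal (gaussFn M x) =
        ∏ i, ENNReal.ofReal (gaussFn (B i) (C i *ᵥ x)) ^ p i := by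
      have : ∀ i, ENNReal.ofReal (gaussFn (B i) (C i *ᵥ x)) ^ p i = ENNReal.ofReal
          (Real.exp (-Real.pi * (p i * (B i *ᵥ (C i *ᵥ x) ⬝ᵥ (C i *ᵥ x))))) := fun i => by
        rw [gaussFn, ENNReal.ofReal_rpow_of_pos (Real.exp_pos _), ← Real.exp_mul]
        congr 2; ring
      simp only [this]
      rw [← ENNReal.ofReal_prod_of_nonneg (fun i _ => (Real.exp_pos _).le), ← Real.exp_sum,
        gaussFn, hMeq, dotProduct_sum_mulVec_eq, Finset.mul_sum]
    rw [e1, ← Finset.prod_mul_distrib]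
    refine Finset.prod_congr rfl fun i _ => ?_
    rw [← ENNReal.mul_rpow_of_nonneg _ _ (hp i).le, hhf]
  have hleft : ∫⁻ w, ∏ i, h i (C i *ᵥ (r • (D *ᵥ w.ofLp))) ^ p i ∂γ =
      ENNReal.ofReal (√M.det) * ∫⁻ x, ∏ i, f i (C i *ᵥ x) ^ p i := by
    have hφ : Measurable fun x : Fin n → ℝ => ∏ i, h i (C i *ᵥ x) ^ p i :=
      Finset.measurable_fun_prod _ fun i _ => ((hhm i).comp (by fun_prop)).pow_const _
    rw [hr, hγ, lintegral_stdGaussian_mulVec (φ := fun x => ∏ i, h i (C i *ᵥ x) ^ p i) hM hDD hφ]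
    simp only [hprod]
  rw [← hleft]
  have hpt : ∀ w : EuclideanSpace ℝ (Fin n ⊕ Σ j, Fin (k j)),
      ∏ i, h i (C i *ᵥ (r • (D *ᵥ w.ofLp))) ^ p i ≤
        ∏ a : ι × Bool, h a.1 (r • (T a *ᵥ w.ofLp)) ^ (p a.1 / 2) := fun w => by
    rw [Fintype.prod_prod_type]
    refine Finset.prod_le_prod' fun i _ => ?_
    rw [Fintype.prod_bool]
    set y := C i *ᵥ (r • (D *ᵥ w.ofLp)) with hy
    set v := r • (blockProj k i *ᵥ (w.ofLp ∘ Sum.inr)) with hv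
    have hyp : ∀ σ, r • (T (i, σ) *ᵥ w.ofLp) =
        y + (if σ then (1 : ℝ) else -1) • (S i *ᵥ v) := fun σ => by
      rw [hTdef, couplingMatrix_mulVec, hy, hv, hD, fromCols_mulVec]
      simp only [zero_mulVec, add_zero, mulVec_smul, smul_add]
      rw [smul_comm]
    rw [hyp, hyp]
    simp only [if_true, Bool.false_eq_true, if_false, one_smul, neg_smul, ← sub_eq_add_neg]
    have h1 := (hfQ i).mul_exp_sq_le (B i) (hQS i v) y
    have h2 := ENNReal.rpow_le_rpow h1 (half_pos (hp i)).le
    rw [← ENNReal.rpow_natCast, ← ENNReal.rpow_mul,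
      ENNReal.mul_rpow_of_nonneg _ _ (half_pos (hp i)).le] at h2
    rwa [show ((2 : ℕ) : ℝ) * (p i / 2) = p i by push_cast; ring] at h2
  refine (lintegral_mono hpt).trans ?_
  have hJ := lintegral_prod_rpow_le_of_mulVec (fun a : ι × Bool => p a.1 / 2)
    (fun a => (half_pos (hp a.1)).le) T
    (couplingMatrix_domination C hp hp1 hB (hMeq ▸ hM) (hMeq ▸ hR) hS)
    (fun a y => h a.1 (r • y)) (fun a => (hhm a.1).comp (by fun_prop))
    (fun a => by
      rw [← hγ, hmarg]
      exact ENNReal.mul_ne_top ENNReal.ofReal_ne_top (hfin a.1))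
  refine hJ.trans_eq ?_
  rw [← hγ]
  simp only [hmarg]
  rw [Fintype.prod_prod_type]
  refine Finset.prod_congr rfl fun i _ => ?_
  rw [Fintype.prod_bool, ← ENNReal.rpow_add_of_nonneg _ _ (half_pos (hp i)).le (half_pos (hp i)).le,
    add_halves]

/-- The Brascamp–Lieb inequality with the Gaussian constant of a critical point. -/
lemma lintegral_prod_rpow_le_of_critical {ι : Type*} [Fintype ι] [DecidableEq ι]
    {n : ℕ} {k : ι → ℕ} (C : ∀ i, Matrix (Fin (k i)) (Fin n) ℝ) {p : ι → ℝ}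
    (hp : ∀ i, 0 < p i) {B Q : ∀ i, Matrix (Fin (k i)) (Fin (k i)) ℝ}
    (hB : ∀ i, (B i).PosDef) {M : Matrix (Fin n) (Fin n) ℝ}
    (hMeq : M = ∑ i, p i • ((C i)ᵀ * B i * C i)) (hM : M.PosDef)
    (hΛ : ∀ i, ((B i)⁻¹ - C i * M⁻¹ * (C i)ᵀ).PosSemidef)
    (hQΛ : ∀ i, (Q i - B i) * ((B i)⁻¹ - C i * M⁻¹ * (C i)ᵀ) = 0)
    {f : ∀ i, (Fin (k i) → ℝ) → ℝ≥0∞} (hf : ∀ i, Measurable (f i))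
    (hfQ : ∀ i, MidLogConvex (f i) (Q i)) (hfin : ∀ i, ∫⁻ y, f i y ≠ ⊤) :
    ENNReal.ofReal (√M.det) * ∫⁻ x, ∏ i, f i (C i *ᵥ x) ^ p i ≤
      ∏ i, (ENNReal.ofReal (√(B i).det) * ∫⁻ y, f i y) ^ p i := by
  obtain ⟨L, hL⟩ := exists_nat_gt (∑ i, p i)
  have hL0 : (0 : ℝ) < L := lt_of_le_of_lt (Finset.sum_nonneg fun i _ => (hp i).le) hL
  have hL1 : ∀ i, p i / L ≤ 1 := fun i => by
    rw [div_le_one hL0]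
    exact (Finset.single_le_sum (fun j _ => (hp j).le) (Finset.mem_univ i)).trans hL.le
  have hpow : ∀ (t : ℝ≥0∞) i, ∏ _l : Fin L, t ^ (p i / L) = t ^ p i := fun t i => by
    rw [Finset.prod_const, Finset.card_univ, Fintype.card_fin, ← ENNReal.rpow_natCast,
      ← ENNReal.rpow_mul, div_mul_cancel₀ _ hL0.ne']
  have key := lintegral_prod_rpow_le_of_critical_of_le_one (ι := ι × Fin L)
    (k := fun a => k a.1) (fun a => C a.1) (p := fun a => p a.1 / L)
    (fun a => div_pos (hp a.1) hL0) (fun a => hL1 a.1) (B := fun a => B a.1)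
    (Q := fun a => Q a.1) (fun a => hB a.1) (M := M)
    (by
      rw [hMeq, Fintype.sum_prod_type]
      refine Finset.sum_congr rfl fun i _ => ?_
      have h1 : ∑ _l : Fin L, (p i / L) • ((C i)ᵀ * B i * C i) = p i • ((C i)ᵀ * B i * C i) := by
        rw [Finset.sum_const, Finset.card_univ, Fintype.card_fin, ← Nat.cast_smul_eq_nsmul ℝ,
          smul_smul, mul_div_cancel₀ _ hL0.ne']
      exact h1.symm)
    hM (fun a => hΛ a.1) (fun a => hQΛ a.1) (f := fun a => f a.1) (fun a => hf a.1)
    (fun a => hfQ a.1) (fun a => hfin a.1)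
  simp only [Fintype.prod_prod_type, hpow] at key
  exact key.trans_eq (Finset.prod_congr rfl fun i _ =>
    hpow (ENNReal.ofReal (√(B i).det) * ∫⁻ y, f i y) i)

end CriticalInequality

section RankOne

lemma det_add_smul_vecMulVec {k : ℕ} {A : Matrix (Fin k) (Fin k) ℝ} (hA : A.det ≠ 0) (t : ℝ)
    (v : Fin k → ℝ) :
    (A + t • vecMulVec v v).det = A.det * (1 + t * (v ⬝ᵥ A⁻¹ *ᵥ v)) := by
  rw [← smul_vecMulVec, vecMulVec_eq Unit, det_add_replicateCol_mul_replicateRow hA.isUnit]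
  congr 1
  rw [det_unique]
  simp only [Matrix.add_apply, one_apply_eq]
  rw [Matrix.mul_assoc, mul_apply]
  simp only [replicateRow_apply, dotProduct]
  rw [Finset.mul_sum]
  congr 1
  refine Finset.sum_congr rfl fun i _ => ?_
  rw [mul_apply]
  simp only [replicateCol_apply, mulVec, dotProduct, Pi.smul_apply, smul_eq_mul, Finset.mul_sum]
  exact Finset.sum_congr rfl fun j _ => by ring

lemma dotProduct_vecMulVec_mulVec {k : ℕ} (v x : Fin k → ℝ) :
    x ⬝ᵥ vecMulVec v v *ᵥ x = (v ⬝ᵥ x) ^ 2 := by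
  rw [vecMulVec_mulVec, op_smul_eq_smul, dotProduct_smul, smul_eq_mul, dotProduct_comm x v, sq]

lemma isHermitian_smul_vecMulVec {k : ℕ} (t : ℝ) (v : Fin k → ℝ) :
    (t • vecMulVec v v).IsHermitian := by
  ext i j
  simp [vecMulVec_apply, mul_comm]

lemma Matrix.IsHermitian.mulVec_dotProduct {k : ℕ} {D : Matrix (Fin k) (Fin k) ℝ}
    (hD : D.IsHermitian) (x y : Fin k → ℝ) : D *ᵥ x ⬝ᵥ y = x ⬝ᵥ D *ᵥ y := by
  conv_rhs => rw [dotProduct_mulVec, ← mulVec_transpose,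
    (conjTranspose_eq_transpose_of_trivial D).symm.trans hD]

lemma posSemidef_sub_smul_vecMulVec {k : ℕ} {D : Matrix (Fin k) (Fin k) ℝ} (hD : D.PosSemidef)
    (x : Fin k → ℝ) {t : ℝ} (ht : 0 ≤ t) (htx : t * (x ⬝ᵥ D *ᵥ x) ≤ 1) :
    (D - t • vecMulVec (D *ᵥ x) (D *ᵥ x)).PosSemidef := by
  refine posSemidef_iff_dotProduct_mulVec.mpr
    ⟨hD.1.sub (isHermitian_smul_vecMulVec _ _), fun y => ?_⟩
  rw [star_trivial, sub_mulVec, dotProduct_sub, smul_mulVec, dotProduct_smul, smul_eq_mul,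
    dotProduct_vecMulVec_mulVec]
  set a := D *ᵥ x ⬝ᵥ y with ha
  have h1 := hD.dotProduct_mulVec_nonneg (y - (t * a) • x)
  have h2 : x ⬝ᵥ D *ᵥ y = a := by rw [ha, hD.1.mulVec_dotProduct]
  have h3 : y ⬝ᵥ D *ᵥ x = a := by rw [ha, dotProduct_comm]
  simp only [star_trivial, mulVec_sub, mulVec_smul, dotProduct_sub, sub_dotProduct,
    smul_dotProduct, dotProduct_smul, smul_eq_mul, h2, h3] at h1
  nlinarith [mul_nonneg (mul_nonneg ht (sq_nonneg a)) (sub_nonneg.mpr htx)]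

lemma le_of_eventually_rpow_le_left {a b q : ℝ} (hq : 0 < q)
    (h : ∀ᶠ t in 𝓝[<] (0 : ℝ), (1 + t * a) ^ q ≤ 1 + t * (q * b)) : b ≤ a := by
  have hd : HasDerivAt (fun t : ℝ => (1 + t * a) ^ q - (1 + t * (q * b))) (a * q - q * b) 0 := by
    have h1 : HasDerivAt (fun t : ℝ => 1 + t * a) a 0 := by
      simpa using ((hasDerivAt_id (0 : ℝ)).mul_const a).const_add 1
    have h2 : HasDerivAt (fun t : ℝ => 1 + t * (q * b)) (q * b) 0 := by
      simpa using ((hasDerivAt_id (0 : ℝ)).mul_const (q * b)).const_add 1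
    have h3 := (h1.rpow_const (p := q) (Or.inl (by simp))).sub h2
    rw [show (1 + (0 : ℝ) * a) ^ (q - 1) = 1 by simp, mul_one] at h3
    exact h3
  have h4 := (hasDerivAt_iff_tendsto_slope.mp hd).mono_left
    (nhdsWithin_mono 0 (fun t (ht : t ∈ Set.Iio 0) => ne_of_lt ht))
  have h5 : 0 ≤ a * q - q * b := by
    refine ge_of_tendsto h4 ?_
    filter_upwards [h, self_mem_nhdsWithin] with t ht ht0
    rw [slope_def_field]
    simp only [zero_mul, add_zero, Real.one_rpow, sub_self, sub_zero]
    exact div_nonneg_of_nonpos (by linarith) (le_of_lt ht0)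
  nlinarith

lemma le_of_eventually_rpow_le_right {a b q : ℝ} (hq : 0 < q)
    (h : ∀ᶠ t in 𝓝[>] (0 : ℝ), (1 + t * a) ^ q ≤ 1 + t * (q * b)) : a ≤ b := by
  have hneg : Tendsto (fun t : ℝ => -t) (𝓝[<] 0) (𝓝[>] 0) := by
    simpa using tendsto_neg_nhdsLT (a := (0 : ℝ))
  have h1 := le_of_eventually_rpow_le_left (a := -a) (b := -b) hq
    ((hneg.eventually h).mono fun t ht => by simpa using ht)
  linarith

end RankOne

section Critical

variable {ι : Type*} [Fintype ι] [DecidableEq ι] {n : ℕ} {k : ι → ℕ}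

/-- The matrix `∑ᵢ pᵢ Cᵢᵀ Bᵢ Cᵢ`. -/
def blMatrix (C : ∀ i, Matrix (Fin (k i)) (Fin n) ℝ) (p : ι → ℝ)
    (B : ∀ i, Matrix (Fin (k i)) (Fin (k i)) ℝ) : Matrix (Fin n) (Fin n) ℝ :=
  ∑ i, p i • ((C i)ᵀ * B i * C i)

lemma prod_det_rpow_update (q : ι → ℝ) (B : ∀ i, Matrix (Fin (k i)) (Fin (k i)) ℝ) (i : ι)
    (X : Matrix (Fin (k i)) (Fin (k i)) ℝ) :
    ∏ j, (Function.update B i X j).det ^ q j =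
      X.det ^ q i * ∏ j ∈ Finset.univ.erase i, (B j).det ^ q j := by
  rw [← Finset.mul_prod_erase _ _ (Finset.mem_univ i), Function.update_self]
  congr 1
  exact Finset.prod_congr rfl fun j hj => by rw [Function.update_of_ne (Finset.ne_of_mem_erase hj)]

lemma blMatrix_update_add (C : ∀ i, Matrix (Fin (k i)) (Fin n) ℝ) (q : ι → ℝ)
    (B : ∀ i, Matrix (Fin (k i)) (Fin (k i)) ℝ) (i : ι) (t : ℝ) (v : Fin (k i) → ℝ) :
    blMatrix C q (Function.update B i (B i + t • vecMulVec v v)) =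
      blMatrix C q B + (t * q i) • vecMulVec ((C i)ᵀ *ᵥ v) ((C i)ᵀ *ᵥ v) := by
  unfold blMatrix
  rw [← Finset.add_sum_erase _ _ (Finset.mem_univ i),
    ← Finset.add_sum_erase (a := i) _ (fun i => q i • ((C i)ᵀ * B i * C i)) (Finset.mem_univ i),
    Function.update_self]
  have h1 : ∑ j ∈ Finset.univ.erase i, q j • ((C j)ᵀ *
      (Function.update B i (B i + t • vecMulVec v v)) j * C j) =
      ∑ j ∈ Finset.univ.erase i, q j • ((C j)ᵀ * B j * C j) :=
    Finset.sum_congr rfl fun j hj => by rw [Function.update_of_ne (Finset.ne_of_mem_erase hj)]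
  rw [h1, Matrix.mul_add, Matrix.add_mul, smul_add, Matrix.mul_smul, Matrix.smul_mul,
    mul_vecMulVec, vecMulVec_mul, ← mulVec_transpose, smul_smul, mul_comm (q i) t]
  abel

/-- A maximizer of the Gaussian functional over `0 < B ≤ Q` is a critical point. -/
lemma critical_of_maximizer (C : ∀ i, Matrix (Fin (k i)) (Fin n) ℝ) {q : ι → ℝ}
    (hq : ∀ i, 0 < q i) {B Q : ∀ i, Matrix (Fin (k i)) (Fin (k i)) ℝ} (hB : ∀ i, (B i).PosDef)
    (hBQ : ∀ i, (Q i - B i).PosSemidef) (hM : (blMatrix C q B).PosDef)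
    (hmax : ∀ B' : ∀ i, Matrix (Fin (k i)) (Fin (k i)) ℝ,
      (∀ i, (B' i).PosDef ∧ (Q i - B' i).PosSemidef) →
      (∏ i, (B' i).det ^ q i) * (blMatrix C q B).det ≤
        (∏ i, (B i).det ^ q i) * (blMatrix C q B').det) (i : ι) :
    ((B i)⁻¹ - C i * (blMatrix C q B)⁻¹ * (C i)ᵀ).PosSemidef ∧
      (Q i - B i) * ((B i)⁻¹ - C i * (blMatrix C q B)⁻¹ * (C i)ᵀ) = 0 := by
  set M := blMatrix C q B with hMdef
  set Λ := (B i)⁻¹ - C i * M⁻¹ * (C i)ᵀ with hΛdef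
  have hΛv : ∀ v, v ⬝ᵥ Λ *ᵥ v =
      v ⬝ᵥ (B i)⁻¹ *ᵥ v - ((C i)ᵀ *ᵥ v) ⬝ᵥ M⁻¹ *ᵥ ((C i)ᵀ *ᵥ v) := fun v => by
    rw [hΛdef, sub_mulVec, dotProduct_sub, ← mulVec_mulVec, ← mulVec_mulVec,
      dotProduct_mulVec v (C i), ← mulVec_transpose]
  have hvar : ∀ v t, (B i + t • vecMulVec v v).PosDef →
      (Q i - (B i + t • vecMulVec v v)).PosSemidef →
      (1 + t * (v ⬝ᵥ (B i)⁻¹ *ᵥ v)) ^ q i ≤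
        1 + t * (q i * (((C i)ᵀ *ᵥ v) ⬝ᵥ M⁻¹ *ᵥ ((C i)ᵀ *ᵥ v))) := fun v t h1 h2 => by
    have h3 := hmax (Function.update B i (B i + t • vecMulVec v v)) (fun j => by
      by_cases hj : j = i
      · subst hj; rw [Function.update_self]; exact ⟨h1, h2⟩
      · rw [Function.update_of_ne hj]; exact ⟨hB j, hBQ j⟩)
    have hdet := det_add_smul_vecMulVec (hB i).det_pos.ne' t v
    have hpos : 0 ≤ 1 + t * (v ⬝ᵥ (B i)⁻¹ *ᵥ v) := by
      have := h1.det_pos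
      rw [hdet] at this
      exact (pos_of_mul_pos_right this (hB i).det_pos.le).le
    rw [prod_det_rpow_update, blMatrix_update_add, det_add_smul_vecMulVec hM.det_pos.ne', hdet,
      Real.mul_rpow (hB i).det_pos.le hpos,
      ← Finset.mul_prod_erase Finset.univ (fun j => (B j).det ^ q j) (Finset.mem_univ i)] at h3
    set P := (B i).det ^ q i * ∏ j ∈ Finset.univ.erase i, (B j).det ^ q j with hP
    have hP0 : 0 < P := mul_pos (Real.rpow_pos_of_pos (hB i).det_pos _)
      (Finset.prod_pos fun j _ => Real.rpow_pos_of_pos (hB j).det_pos _)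
    have h4 : P * M.det * (1 + t * (v ⬝ᵥ (B i)⁻¹ *ᵥ v)) ^ q i ≤ P * M.det *
        (1 + t * (q i * (((C i)ᵀ *ᵥ v) ⬝ᵥ M⁻¹ *ᵥ ((C i)ᵀ *ᵥ v)))) := by
      refine (le_of_eq ?_).trans (h3.trans (le_of_eq ?_)) <;> rw [hP] <;> ring
    exact le_of_mul_le_mul_left h4 (mul_pos hP0 hM.det_pos)
  have hinv : ∀ v, B i *ᵥ ((B i)⁻¹ *ᵥ v) = v := fun v => by
    rw [mulVec_mulVec, mul_nonsing_inv _ (hB i).det_pos.ne'.isUnit, one_mulVec]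
  have hrank : ∀ (v : Fin (k i) → ℝ), (vecMulVec v v).PosSemidef := fun v => by
    simpa using posSemidef_vecMulVec_self_star v
  have hsmall : ∀ c : ℝ, ∀ᶠ t in 𝓝 (0 : ℝ), t * c < 1 := fun c => by
    have : Tendsto (fun t : ℝ => t * c) (𝓝 0) (𝓝 (0 * c)) := tendsto_id.mul_const c
    rw [zero_mul] at this
    exact this.eventually (gt_mem_nhds one_pos)
  have hΛ : Λ.PosSemidef := by
    refine posSemidef_iff_dotProduct_mulVec.mpr ⟨?_, fun v => ?_⟩
    · refine (hB i).inv.1.sub ?_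
      have := isHermitian_mul_mul_conjTranspose (C i) hM.inv.1
      rwa [conjTranspose_eq_transpose_of_trivial] at this
    rw [star_trivial, hΛv, sub_nonneg]
    refine le_of_eventually_rpow_le_left (hq i) ?_
    have h5 : ∀ᶠ t in 𝓝[<] (0 : ℝ), -t * (v ⬝ᵥ (B i)⁻¹ *ᵥ v) < 1 := by
      filter_upwards [nhdsWithin_le_nhds (hsmall (-(v ⬝ᵥ (B i)⁻¹ *ᵥ v)))] with t ht
      linarith
    filter_upwards [h5, self_mem_nhdsWithin] with t ht ht0
    have ht0' : 0 ≤ -t := by have : t < 0 := ht0; linarith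
    refine hvar v t ?_ ?_
    · have h6 := posSemidef_sub_smul_vecMulVec (hB i).posSemidef ((B i)⁻¹ *ᵥ v) ht0' (by
        rw [hinv, dotProduct_comm]; exact ht.le)
      rw [hinv, neg_smul, sub_neg_eq_add] at h6
      rw [h6.posDef_iff_det_ne_zero, det_add_smul_vecMulVec (hB i).det_pos.ne']
      exact mul_ne_zero (hB i).det_pos.ne' (by linarith)
    · have : Q i - (B i + t • vecMulVec v v) = (Q i - B i) + (-t) • vecMulVec v v := by
        rw [neg_smul]; abel
      rw [this]
      exact (hBQ i).add ((hrank v).smul ht0')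
  refine ⟨hΛ, ?_⟩
  have hz : ∀ x, Λ *ᵥ ((Q i - B i) *ᵥ x) = 0 := fun x => by
    set v := (Q i - B i) *ᵥ x with hv
    rw [← hΛ.dotProduct_mulVec_zero_iff]
    refine le_antisymm ?_ (hΛ.dotProduct_mulVec_nonneg v)
    rw [star_trivial, hΛv, sub_nonpos]
    refine le_of_eventually_rpow_le_right (hq i) ?_
    filter_upwards [nhdsWithin_le_nhds (hsmall (x ⬝ᵥ (Q i - B i) *ᵥ x)), self_mem_nhdsWithin]
      with t ht ht0
    have ht0' : 0 ≤ t := le_of_lt ht0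
    refine hvar v t ((hB i).add_posSemidef ((hrank v).smul ht0')) ?_
    rw [← sub_sub]
    exact posSemidef_sub_smul_vecMulVec (hBQ i) x ht0' ht.le
  have hz' : Λ * (Q i - B i) = 0 := by
    refine ext_of_mulVec_single fun j => ?_
    rw [← mulVec_mulVec, hz, zero_mulVec]
  have h7 := congrArg conjTranspose hz'
  rwa [conjTranspose_mul, hΛ.1, (hBQ i).1, conjTranspose_zero] at h7

end Critical

section Maximizer

lemma isClosed_setOf_posSemidef {k : ℕ} : IsClosed {A : Matrix (Fin k) (Fin k) ℝ | A.PosSemidef} := by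
  simp only [posSemidef_iff_dotProduct_mulVec, Set.ofPred_and, Set.ofPred_forall]
  refine IsClosed.inter ?_ (isClosed_iInter fun x => ?_)
  · exact isClosed_eq (by fun_prop) continuous_id
  · exact isClosed_le continuous_const (by fun_prop)

lemma abs_apply_le_of_posSemidef {k : ℕ} {A Q : Matrix (Fin k) (Fin k) ℝ} (hA : A.PosSemidef)
    (hAQ : (Q - A).PosSemidef) (a b : Fin k) : |A a b| ≤ Q a a + Q b b := by
  have hs : A b a = A a b := by
    have := congrFun (congrFun hA.1 a) b
    simpa using this
  have hdiag : ∀ c, 0 ≤ A c c ∧ A c c ≤ Q c c := fun c => by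
    have h1 := hA.dotProduct_mulVec_nonneg (Pi.single c 1)
    have h2 := hAQ.dotProduct_mulVec_nonneg (Pi.single c 1)
    simp at h1 h2
    exact ⟨h1, h2⟩
  have h1 := hA.dotProduct_mulVec_nonneg (Pi.single a 1 + Pi.single b 1)
  have h2 := hA.dotProduct_mulVec_nonneg (Pi.single a 1 - Pi.single b 1)
  simp [mulVec_add, mulVec_sub, add_dotProduct, sub_dotProduct, hs] at h1 h2
  have ha := hdiag a
  have hb := hdiag b
  rw [abs_le]
  constructor <;> linarith

variable {ι : Type*} [Fintype ι] {n : ℕ} {k : ι → ℕ}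

/-- The families `0 ≤ B ≤ Q`. -/
def psdBox (Q : ∀ i, Matrix (Fin (k i)) (Fin (k i)) ℝ) :
    Set (∀ i, Matrix (Fin (k i)) (Fin (k i)) ℝ) :=
  {B | ∀ i, (B i).PosSemidef ∧ (Q i - B i).PosSemidef}

lemma isCompact_psdBox (Q : ∀ i, Matrix (Fin (k i)) (Fin (k i)) ℝ) : IsCompact (psdBox Q) := by
  have hc : IsCompact (Set.pi Set.univ fun i => {A : Matrix (Fin (k i)) (Fin (k i)) ℝ |
      A ∈ Set.pi Set.univ fun a => Set.pi Set.univ fun b =>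
        Set.Icc (-(Q i a a + Q i b b)) (Q i a a + Q i b b)}) :=
    isCompact_univ_pi fun i => isCompact_univ_pi fun a => isCompact_univ_pi fun b => isCompact_Icc
  refine hc.of_isClosed_subset ?_ fun B hB i _ a _ b _ =>
    abs_le.mp (abs_apply_le_of_posSemidef (hB i).1 (hB i).2 a b)
  rw [psdBox, Set.ofPred_forall]
  refine isClosed_iInter fun i => ?_
  rw [Set.ofPred_and]
  exact (isClosed_setOf_posSemidef.preimage (continuous_apply i)).inter
    (isClosed_setOf_posSemidef.preimage
      (f := fun B : ∀ i, Matrix (Fin (k i)) (Fin (k i)) ℝ => Q i - B i)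
      (continuous_const.sub (continuous_apply i)))

lemma posDef_blMatrix {C : ∀ i, Matrix (Fin (k i)) (Fin n) ℝ}
    (hker : ∀ x : Fin n → ℝ, (∀ i, C i *ᵥ x = 0) → x = 0) {p : ι → ℝ} (hp : ∀ i, 0 < p i)
    {B : ∀ i, Matrix (Fin (k i)) (Fin (k i)) ℝ} (hB : ∀ i, (B i).PosDef) :
    (blMatrix C p B).PosDef := by
  refine posDef_iff_dotProduct_mulVec.mpr ⟨?_, fun x hx => ?_⟩
  · unfold blMatrix IsHermitian
    rw [conjTranspose_sum]
    refine Finset.sum_congr rfl fun i _ => ?_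
    have := isHermitian_conjTranspose_mul_mul (C i) (hB i).1
    rw [conjTranspose_eq_transpose_of_trivial] at this
    rw [conjTranspose_smul, this, star_trivial]
  · rw [star_trivial, dotProduct_comm, blMatrix, dotProduct_sum_mulVec_eq]
    have hnn : ∀ i, 0 ≤ p i * (B i *ᵥ (C i *ᵥ x) ⬝ᵥ (C i *ᵥ x)) := fun i => by
      have := (hB i).posSemidef.dotProduct_mulVec_nonneg (C i *ᵥ x)
      rw [star_trivial, dotProduct_comm] at this
      exact mul_nonneg (hp i).le this
    obtain ⟨i, hi⟩ : ∃ i, C i *ᵥ x ≠ 0 := by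
      by_contra! h
      exact hx (hker x h)
    refine Finset.sum_pos' (fun i _ => hnn i) ⟨i, Finset.mem_univ i, mul_pos (hp i) ?_⟩
    have := (hB i).dotProduct_mulVec_pos hi
    rwa [star_trivial, dotProduct_comm] at this

lemma continuous_prod_det_rpow {q : ι → ℝ} (hq : ∀ i, 0 ≤ q i) :
    Continuous fun B : ∀ i, Matrix (Fin (k i)) (Fin (k i)) ℝ => ∏ i, (B i).det ^ q i :=
  continuous_finsetProd _ fun i _ =>
    ((continuous_apply i).matrix_det).rpow_const fun _ => Or.inr (hq i)

lemma continuous_det_blMatrix (C : ∀ i, Matrix (Fin (k i)) (Fin n) ℝ) (p : ι → ℝ) :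
    Continuous fun B : ∀ i, Matrix (Fin (k i)) (Fin (k i)) ℝ => (blMatrix C p B).det := by
  unfold blMatrix
  refine Continuous.matrix_det (continuous_finsetSum _ fun i _ => ?_)
  have := continuous_apply (A := fun i => Matrix (Fin (k i)) (Fin (k i)) ℝ) i
  fun_prop

/-- The penalized Gaussian functional attains its maximum over `0 < B ≤ Q`. -/
lemma exists_maximizer {C : ∀ i, Matrix (Fin (k i)) (Fin n) ℝ}
    (hker : ∀ x : Fin n → ℝ, (∀ i, C i *ᵥ x = 0) → x = 0) {p : ι → ℝ} (hp : ∀ i, 0 < p i)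
    {Q : ∀ i, Matrix (Fin (k i)) (Fin (k i)) ℝ} (hQ : ∀ i, (Q i).PosDef) {β : ℝ}
    (hβ : ∀ B : ∀ i, Matrix (Fin (k i)) (Fin (k i)) ℝ,
      (∀ i, (B i).PosDef ∧ (Q i - B i).PosSemidef) →
      ∏ i, (B i).det ^ p i ≤ β * (blMatrix C p B).det) {ε : ℝ} (hε : 0 < ε) :
    ∃ B : ∀ i, Matrix (Fin (k i)) (Fin (k i)) ℝ,
      (∀ i, (B i).PosDef ∧ (Q i - B i).PosSemidef) ∧
      ∀ B' : ∀ i, Matrix (Fin (k i)) (Fin (k i)) ℝ,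
        (∀ i, (B' i).PosDef ∧ (Q i - B' i).PosSemidef) →
        (∏ i, (B' i).det ^ ((1 + ε) * p i)) * (blMatrix C p B).det ≤
          (∏ i, (B i).det ^ ((1 + ε) * p i)) * (blMatrix C p B').det := by
  set q : ι → ℝ := fun i => (1 + ε) * p i with hqdef
  have hq : ∀ i, 0 < q i := fun i => mul_pos (by linarith) (hp i)
  have hεp : ∀ i, 0 < ε * p i := fun i => mul_pos hε (hp i)
  have hQQ : ∀ i, (Q i).PosDef ∧ (Q i - Q i).PosSemidef := fun i =>
    ⟨hQ i, by rw [sub_self]; exact PosSemidef.zero⟩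
  set Φ : (∀ i, Matrix (Fin (k i)) (Fin (k i)) ℝ) → ℝ := fun B =>
    (∏ i, (B i).det ^ q i) / (blMatrix C p B).det with hΦ
  have hβ0 : 0 ≤ β := by
    have h1 := hβ Q hQQ
    have h2 : 0 < ∏ i, (Q i).det ^ p i :=
      Finset.prod_pos fun i _ => Real.rpow_pos_of_pos (hQ i).det_pos _
    exact (pos_of_mul_pos_left (h2.trans_le h1) (posDef_blMatrix hker hp hQ).det_pos.le).le
  have hzero : ∀ B : ∀ i, Matrix (Fin (k i)) (Fin (k i)) ℝ, (∃ i, (B i).det = 0) →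
      Φ B = 0 ∧ ∏ i, (B i).det ^ (ε * p i) = 0 := fun B ⟨i, hi⟩ => by
    refine ⟨?_, Finset.prod_eq_zero (Finset.mem_univ i) (by rw [hi, Real.zero_rpow (hεp i).ne'])⟩
    have : ∏ i, (B i).det ^ q i = 0 :=
      Finset.prod_eq_zero (Finset.mem_univ i) (by rw [hi, Real.zero_rpow (hq i).ne'])
    simp only [hΦ, this, zero_div]
  have hpd : ∀ B ∈ psdBox Q, (¬ ∃ i, (B i).det = 0) → ∀ i, (B i).PosDef := fun B hB h i =>
    (hB i).1.posDef_iff_det_ne_zero.mpr fun hi => h ⟨i, hi⟩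
  have hbound : ∀ B ∈ psdBox Q, 0 ≤ Φ B ∧ Φ B ≤ β * ∏ i, (B i).det ^ (ε * p i) := fun B hB => by
    by_cases h : ∃ i, (B i).det = 0
    · rw [(hzero B h).1, (hzero B h).2]; simp
    · have hB' := hpd B hB h
      have hM := (posDef_blMatrix hker hp hB').det_pos
      refine ⟨div_nonneg (Finset.prod_nonneg fun i _ => (Real.rpow_pos_of_pos (hB' i).det_pos _).le)
        hM.le, ?_⟩
      simp only [hΦ]
      rw [div_le_iff₀ hM]
      have h1 : ∏ i, (B i).det ^ q i = (∏ i, (B i).det ^ p i) * ∏ i, (B i).det ^ (ε * p i) := by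
        rw [← Finset.prod_mul_distrib]
        refine Finset.prod_congr rfl fun i _ => ?_
        rw [← Real.rpow_add (hB' i).det_pos, hqdef]
        congr 1; ring
      rw [h1]
      have h2 := hβ B fun i => ⟨hB' i, (hB i).2⟩
      have h3 : 0 ≤ ∏ i, (B i).det ^ (ε * p i) :=
        Finset.prod_nonneg fun i _ => (Real.rpow_pos_of_pos (hB' i).det_pos _).le
      nlinarith [mul_le_mul_of_nonneg_right h2 h3]
  have hcont : ContinuousOn Φ (psdBox Q) := fun B hB => by
    by_cases h : ∃ i, (B i).det = 0
    · have h1 : Tendsto (fun B : ∀ i, Matrix (Fin (k i)) (Fin (k i)) ℝ =>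
          β * ∏ i, (B i).det ^ (ε * p i)) (𝓝[psdBox Q] B) (𝓝 0) := by
        have := ((continuous_prod_det_rpow (k := k) fun i => (hεp i).le).const_mul β).tendsto B
        rw [(hzero B h).2, mul_zero] at this
        exact this.mono_left nhdsWithin_le_nhds
      unfold ContinuousWithinAt
      rw [(hzero B h).1]
      refine tendsto_of_tendsto_of_tendsto_of_le_of_le' tendsto_const_nhds h1 ?_ ?_ <;>
        filter_upwards [self_mem_nhdsWithin] with B' hB'
      · exact (hbound B' hB').1
      · exact (hbound B' hB').2
    · exact (ContinuousAt.div (continuous_prod_det_rpow fun i => (hq i).le).continuousAt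
        (continuous_det_blMatrix C p).continuousAt
        (posDef_blMatrix hker hp (hpd B hB h)).det_pos.ne').continuousWithinAt
  have hQmem : Q ∈ psdBox Q := fun i => ⟨(hQ i).posSemidef, (hQQ i).2⟩
  obtain ⟨B, hB, hmax⟩ := (isCompact_psdBox Q).exists_isMaxOn ⟨Q, hQmem⟩ hcont
  have hΦQ : 0 < Φ Q := div_pos
    (Finset.prod_pos fun i _ => Real.rpow_pos_of_pos (hQ i).det_pos _)
    (posDef_blMatrix hker hp hQ).det_pos
  have hBpd := hpd B hB fun h => by
    have h1 := hmax hQmem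
    simp only [Set.mem_ofPred_eq, (hzero B h).1] at h1
    linarith
  refine ⟨B, fun i => ⟨hBpd i, (hB i).2⟩, fun B' hB' => ?_⟩
  have h1 : Φ B' ≤ Φ B := hmax (show B' ∈ psdBox Q from fun i => ⟨(hB' i).1.posSemidef, (hB' i).2⟩)
  simp only [hΦ] at h1
  rwa [div_le_div_iff₀ (posDef_blMatrix hker hp fun i => (hB' i).1).det_pos
    (posDef_blMatrix hker hp hBpd).det_pos] at h1

/-- The Brascamp–Lieb inequality for the exponents `(1 + ε) p`, with the constant attached to
some `0 < B ≤ Q`. -/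
lemma exists_gaussian_bound [DecidableEq ι] {C : ∀ i, Matrix (Fin (k i)) (Fin n) ℝ}
    (hker : ∀ x : Fin n → ℝ, (∀ i, C i *ᵥ x = 0) → x = 0) {p : ι → ℝ} (hp : ∀ i, 0 < p i)
    {Q : ∀ i, Matrix (Fin (k i)) (Fin (k i)) ℝ} (hQ : ∀ i, (Q i).PosDef) {β : ℝ}
    (hβ : ∀ B : ∀ i, Matrix (Fin (k i)) (Fin (k i)) ℝ,
      (∀ i, (B i).PosDef ∧ (Q i - B i).PosSemidef) →
      ∏ i, (B i).det ^ p i ≤ β * (blMatrix C p B).det) {ε : ℝ} (hε : 0 < ε) :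
    ∃ B : ∀ i, Matrix (Fin (k i)) (Fin (k i)) ℝ,
      (∀ i, (B i).PosDef ∧ (Q i - B i).PosSemidef) ∧
      ∀ f : ∀ i, (Fin (k i) → ℝ) → ℝ≥0∞, (∀ i, Measurable (f i)) →
        (∀ i, MidLogConvex (f i) (Q i)) → (∀ i, ∫⁻ y, f i y ≠ ⊤) →
        ENNReal.ofReal (√(blMatrix C p B).det) *
            ∫⁻ x, (∏ i, f i (C i *ᵥ x) ^ p i) ^ (1 + ε) ≤
          (∏ i, (ENNReal.ofReal (√(B i).det) * ∫⁻ y, f i y) ^ p i) ^ (1 + ε) := by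
  obtain ⟨B, hB, hmax⟩ := exists_maximizer hker hp hQ hβ hε
  have hε1 : 0 < 1 + ε := by linarith
  have hq : ∀ i, 0 < (1 + ε) * p i := fun i => mul_pos hε1 (hp i)
  have hMq : ∀ B : ∀ i, Matrix (Fin (k i)) (Fin (k i)) ℝ,
      (blMatrix C (fun i => (1 + ε) * p i) B).det = (1 + ε) ^ n * (blMatrix C p B).det :=
    fun B => by
      have : blMatrix C (fun i => (1 + ε) * p i) B = (1 + ε) • blMatrix C p B := by
        unfold blMatrix
        rw [Finset.smul_sum]
        exact Finset.sum_congr rfl fun i _ => by rw [smul_smul]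
      rw [this, det_smul, Fintype.card_fin]
  have hM := posDef_blMatrix hker hp fun i => (hB i).1
  have hMpd := posDef_blMatrix hker hq fun i => (hB i).1
  have hcrit := critical_of_maximizer C hq (fun i => (hB i).1) (fun i => (hB i).2) hMpd
    (fun B' hB' => by
      rw [hMq, hMq]
      nlinarith [mul_le_mul_of_nonneg_left (hmax B' hB') (pow_pos hε1 n).le])
  refine ⟨B, hB, fun f hf hfQ hfin => ?_⟩
  have key := lintegral_prod_rpow_le_of_critical C hq (fun i => (hB i).1) (M := _) rfl hMpd
    (fun i => (hcrit i).1) (fun i => (hcrit i).2) hf hfQ hfin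
  have hpow : ∀ t : ι → ℝ≥0∞, ∏ i, t i ^ ((1 + ε) * p i) = (∏ i, t i ^ p i) ^ (1 + ε) := fun t => by
    rw [← ENNReal.prod_rpow_of_nonneg hε1.le]
    exact Finset.prod_congr rfl fun i _ => by rw [← ENNReal.rpow_mul, mul_comm]
  rw [hpow] at key
  simp only [hpow] at key
  refine le_trans ?_ key
  gcongr
  change (blMatrix C p B).det ≤ (blMatrix C (fun i => (1 + ε) * p i) B).det
  rw [hMq]
  exact le_mul_of_one_le_left hM.det_pos.le (one_le_pow₀ (by linarith))

end Maximizer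

section Inequality

lemma ENNReal.tendsto_rpow_one_add {α : Type*} {l : Filter α} {u : α → ℝ} (hu : Tendsto u l (𝓝 0))
    (hu0 : ∀ a, 0 < u a) (x : ℝ≥0∞) : Tendsto (fun a => x ^ (1 + u a)) l (𝓝 x) := by
  have hpos : ∀ a, 0 < 1 + u a := fun a => by linarith [hu0 a]
  rcases eq_or_ne x 0 with rfl | h0
  · simp only [ENNReal.zero_rpow_of_pos (hpos _)]
    exact tendsto_const_nhds
  rcases eq_or_ne x ⊤ with rfl | ht
  · simp only [ENNReal.top_rpow_of_pos (hpos _)]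
    exact tendsto_const_nhds
  have hx : 0 < x.toReal := ENNReal.toReal_pos h0 ht
  have h1 : Tendsto (fun a => x.toReal ^ (1 + u a)) l (𝓝 (x.toReal ^ (1 + (0 : ℝ)))) :=
    (Real.continuousAt_const_rpow hx.ne').tendsto.comp (hu.const_add 1)
  have h2 := ENNReal.tendsto_ofReal h1
  rw [add_zero, Real.rpow_one, ENNReal.ofReal_toReal ht] at h2
  refine h2.congr fun a => ?_
  rw [← ENNReal.ofReal_rpow_of_pos hx, ENNReal.ofReal_toReal ht]

variable {ι : Type*} [Fintype ι] {n : ℕ} {k : ι → ℕ}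

lemma prod_ofReal_sqrt_det_mul_rpow {p : ι → ℝ} (hp : ∀ i, 0 < p i)
    {B : ∀ i, Matrix (Fin (k i)) (Fin (k i)) ℝ} (hB : ∀ i, (B i).PosDef) (I : ι → ℝ≥0∞) :
    ∏ i, (ENNReal.ofReal (√(B i).det) * I i) ^ p i =
      ENNReal.ofReal (√(∏ i, (B i).det ^ p i)) * ∏ i, I i ^ p i := by
  have h1 : √(∏ i, (B i).det ^ p i) = ∏ i, √(B i).det ^ p i := by
    rw [Real.sqrt_eq_iff_mul_self_eq_of_pos
      (Finset.prod_pos fun i _ => Real.rpow_pos_of_pos (Real.sqrt_pos.mpr (hB i).det_pos) _),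
      ← Finset.prod_mul_distrib]
    refine Finset.prod_congr rfl fun i _ => ?_
    rw [← Real.mul_rpow (Real.sqrt_nonneg _) (Real.sqrt_nonneg _),
      Real.mul_self_sqrt (hB i).det_pos.le]
  rw [h1, ENNReal.ofReal_prod_of_nonneg fun i _ => Real.rpow_nonneg (Real.sqrt_nonneg _) _,
    ← Finset.prod_mul_distrib]
  refine Finset.prod_congr rfl fun i _ => ?_
  rw [ENNReal.mul_rpow_of_nonneg _ _ (hp i).le, ENNReal.ofReal_rpow_of_nonneg (Real.sqrt_nonneg _)
    (hp i).le]

lemma prod_det_rpow_pos {p : ι → ℝ} {B : ∀ i, Matrix (Fin (k i)) (Fin (k i)) ℝ}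
    (hB : ∀ i, (B i).PosDef) : 0 < ∏ i, (B i).det ^ p i :=
  Finset.prod_pos fun i _ => Real.rpow_pos_of_pos (hB i).det_pos _

/-- The regularized Brascamp–Lieb inequality. -/
lemma lintegral_prod_rpow_le [DecidableEq ι] {C : ∀ i, Matrix (Fin (k i)) (Fin n) ℝ}
    (hker : ∀ x : Fin n → ℝ, (∀ i, C i *ᵥ x = 0) → x = 0) {p : ι → ℝ} (hp : ∀ i, 0 < p i)
    {Q : ∀ i, Matrix (Fin (k i)) (Fin (k i)) ℝ} (hQ : ∀ i, (Q i).PosDef) {β : ℝ} (hβ0 : 0 < β)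
    (hβ : ∀ B : ∀ i, Matrix (Fin (k i)) (Fin (k i)) ℝ,
      (∀ i, (B i).PosDef ∧ (Q i - B i).PosSemidef) →
      ∏ i, (B i).det ^ p i ≤ β * (blMatrix C p B).det)
    {f : ∀ i, (Fin (k i) → ℝ) → ℝ≥0∞} (hf : ∀ i, Measurable (f i))
    (hfQ : ∀ i, MidLogConvex (f i) (Q i)) (hpos : ∀ i, ∫⁻ y, f i y ≠ 0) :
    ∫⁻ x, ∏ i, f i (C i *ᵥ x) ^ p i ≤
      ENNReal.ofReal (√β) * ∏ i, (∫⁻ y, f i y) ^ p i := by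
  by_cases hfin : ∀ i, ∫⁻ y, f i y ≠ ⊤
  swap
  · push Not at hfin
    obtain ⟨i, hi⟩ := hfin
    have h1 : ∏ i, (∫⁻ y, f i y) ^ p i = ⊤ := by
      rw [← Finset.mul_prod_erase _ _ (Finset.mem_univ i), hi, ENNReal.top_rpow_of_pos (hp i)]
      refine ENNReal.top_mul (Finset.prod_ne_zero_iff.mpr fun j _ => ?_)
      simp [ENNReal.rpow_eq_zero_iff, hpos j, (hp j).le]
    rw [h1, ENNReal.mul_top (by simpa using hβ0)]
    exact le_top
  set F : (Fin n → ℝ) → ℝ≥0∞ := fun x => ∏ i, f i (C i *ᵥ x) ^ p i with hF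
  have hFm : Measurable F :=
    Finset.measurable_fun_prod _ fun i _ => ((hf i).comp (by fun_prop)).pow_const _
  set N := ∏ i, (∫⁻ y, f i y) ^ p i with hN
  have hNtop : N ≠ ⊤ := ENNReal.prod_ne_top fun i _ =>
    ENNReal.rpow_ne_top_of_nonneg (hp i).le (hfin i)
  obtain ⟨g, hg⟩ := (isCompact_psdBox Q).bddAbove_image
    (continuous_prod_det_rpow (k := k) fun i => (hp i).le).continuousOn
  have hg' : ∀ B : ∀ i, Matrix (Fin (k i)) (Fin (k i)) ℝ,
      (∀ i, (B i).PosDef ∧ (Q i - B i).PosSemidef) → ∏ i, (B i).det ^ p i ≤ g := fun B hB =>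
    hg ⟨B, fun i => ⟨(hB i).1.posSemidef, (hB i).2⟩, rfl⟩
  set u : ℕ → ℝ := fun j => 1 / ((j : ℝ) + 1) with hu
  have hu0 : ∀ j, 0 < u j := fun j => by positivity
  have hulim : Tendsto u atTop (𝓝 0) := tendsto_one_div_add_atTop_nhds_zero_nat
  have hstep : ∀ j, ∫⁻ x, F x ^ (1 + u j) ≤
      ENNReal.ofReal (√β) * (ENNReal.ofReal (√g) ^ u j * N ^ (1 + u j)) := fun j => by
    obtain ⟨B, hB, h⟩ := exists_gaussian_bound hker hp hQ hβ (hu0 j)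
    have h1 := h f hf hfQ hfin
    have hBpd := fun i => (hB i).1
    have hM := (posDef_blMatrix hker hp hBpd).det_pos
    rw [prod_ofReal_sqrt_det_mul_rpow hp hBpd, ENNReal.mul_rpow_of_nonneg _ _
      (by linarith [hu0 j]), ENNReal.rpow_add_of_nonneg _ _ zero_le_one (hu0 j).le,
      ENNReal.rpow_one] at h1
    set D := ENNReal.ofReal (√(blMatrix C p B).det) with hD
    have hD0 : D ≠ 0 := by simpa [hD] using hM
    have h2 : ENNReal.ofReal (√(∏ i, (B i).det ^ p i)) ≤ ENNReal.ofReal (√β) * D := by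
      rw [hD, ← ENNReal.ofReal_mul (Real.sqrt_nonneg _), ← Real.sqrt_mul hβ0.le]
      exact ENNReal.ofReal_le_ofReal (Real.sqrt_le_sqrt (hβ B hB))
    have h3 : ENNReal.ofReal (√(∏ i, (B i).det ^ p i)) ≤ ENNReal.ofReal (√g) :=
      ENNReal.ofReal_le_ofReal (Real.sqrt_le_sqrt (hg' B hB))
    rw [← ENNReal.mul_le_mul_iff_right hD0 ENNReal.ofReal_ne_top]
    calc D * ∫⁻ x, F x ^ (1 + u j) ≤ _ := h1
      _ ≤ (ENNReal.ofReal (√β) * D) * ENNReal.ofReal (√g) ^ u j * N ^ (1 + u j) := by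
        gcongr
      _ = _ := by ring
  have hgtop : Tendsto (fun j => ENNReal.ofReal (√β) *
      (ENNReal.ofReal (√g) ^ u j * N ^ (1 + u j))) atTop
      (𝓝 (ENNReal.ofReal (√β) * (1 * N))) := by
    have hgpos : 0 < g := (prod_det_rpow_pos hQ).trans_le
      (hg' Q fun i => ⟨hQ i, by rw [sub_self]; exact PosSemidef.zero⟩)
    have h1 : Tendsto (fun j => ENNReal.ofReal (√g) ^ u j) atTop (𝓝 1) := by
      have h2 := ENNReal.tendsto_ofReal
        ((Real.continuousAt_const_rpow (Real.sqrt_pos.mpr hgpos).ne').tendsto.comp hulim)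
      rw [Real.rpow_zero, ENNReal.ofReal_one] at h2
      exact h2.congr fun j => (ENNReal.ofReal_rpow_of_pos (Real.sqrt_pos.mpr hgpos)).symm
    exact ENNReal.Tendsto.const_mul (ENNReal.Tendsto.mul h1 (Or.inl one_ne_zero)
      (ENNReal.tendsto_rpow_one_add hulim hu0 N) (Or.inr ENNReal.one_ne_top))
      (Or.inr ENNReal.ofReal_ne_top)
  rw [one_mul] at hgtop
  calc ∫⁻ x, F x = ∫⁻ x, liminf (fun j => F x ^ (1 + u j)) atTop :=
        lintegral_congr fun x => ((ENNReal.tendsto_rpow_one_add hulim hu0 _).liminf_eq).symm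
    _ ≤ liminf (fun j => ∫⁻ x, F x ^ (1 + u j)) atTop :=
        lintegral_liminf_le fun j => hFm.pow_const _
    _ ≤ liminf (fun j => ENNReal.ofReal (√β) *
          (ENNReal.ofReal (√g) ^ u j * N ^ (1 + u j))) atTop :=
        liminf_le_liminf (Eventually.of_forall hstep)
    _ = _ := hgtop.liminf_eq

end Inequality

section Doubling

lemma lintegral_comp_add_smul {k : ℕ} {Φ : (Fin k → ℝ) → ℝ≥0∞} (hΦ : Measurable Φ)
    (a : Fin k → ℝ) {r : ℝ} (hr : r ≠ 0) :
    ∫⁻ y, Φ (a + r • y) = ENNReal.ofReal |(r ^ k)⁻¹| * ∫⁻ y, Φ y := by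
  have h1 := Measure.map_addHaar_smul (volume : Measure (Fin k → ℝ)) hr
  rw [Module.finrank_fin_fun] at h1
  calc ∫⁻ y, Φ (a + r • y) = ∫⁻ y, Φ (a + y) ∂(Measure.map (r • ·) volume) := by
        rw [lintegral_map (by fun_prop) (by fun_prop)]
    _ = ENNReal.ofReal |(r ^ k)⁻¹| * ∫⁻ y, Φ (a + y) := by
        rw [h1, lintegral_smul_measure, smul_eq_mul]
    _ = _ := by rw [lintegral_add_left_eq_self]

lemma lintegral_lintegral_rotate {k : ℕ} {Φ Ψ : (Fin k → ℝ) → ℝ≥0∞} (hΦ : Measurable Φ)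
    (hΨ : Measurable Ψ) {s : ℝ} (hs : 2 * s ^ 2 = 1) :
    ∫⁻ x, ∫⁻ y, Φ (s • (x + y)) * Ψ (s • (x - y)) = (∫⁻ x, Φ x) * ∫⁻ x, Ψ x := by
  have hs0 : s ≠ 0 := by
    rintro rfl
    norm_num at hs
  rw [lintegral_lintegral_swap (by fun_prop)]
  calc ∫⁻ y, ∫⁻ x, Φ (s • (x + y)) * Ψ (s • (x - y))
      = ∫⁻ y, ∫⁻ x, Φ (s • x + (2 * s) • y) * Ψ (s • x) := by
        refine lintegral_congr fun y => ?_
        rw [← lintegral_add_right_eq_self _ y]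
        refine lintegral_congr fun x => ?_
        rw [add_sub_cancel_right]
        congr 2
        module
    _ = ∫⁻ x, ∫⁻ y, Φ (s • x + (2 * s) • y) * Ψ (s • x) :=
        lintegral_lintegral_swap (by fun_prop)
    _ = ∫⁻ x, ENNReal.ofReal |((2 * s) ^ k)⁻¹| * (∫⁻ y, Φ y) * Ψ (s • x) := by
        refine lintegral_congr fun x => ?_
        rw [lintegral_mul_const _ (by fun_prop), lintegral_comp_add_smul hΦ _ (by simpa using hs0)]
    _ = ENNReal.ofReal |((2 * s) ^ k)⁻¹| * (∫⁻ y, Φ y) *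
        (ENNReal.ofReal |(s ^ k)⁻¹| * ∫⁻ x, Ψ x) := by
        rw [lintegral_const_mul _ (by fun_prop)]
        congr 1
        have := lintegral_comp_add_smul hΨ 0 hs0
        simpa using this
    _ = (ENNReal.ofReal |((2 * s) ^ k)⁻¹| * ENNReal.ofReal |(s ^ k)⁻¹|) *
        ((∫⁻ x, Φ x) * ∫⁻ x, Ψ x) := by ring
    _ = _ := by
        rw [← ENNReal.ofReal_mul (abs_nonneg _), ← abs_mul, ← mul_inv, ← mul_pow,
          show 2 * s * s = 1 by linarith]
        simp

/-- The slice `y ↦ f (s (z + y)) f (s (z - y))` of the rotated tensor square of `f`. -/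
def rotSlice {k : ℕ} (s : ℝ) (f : (Fin k → ℝ) → ℝ≥0∞) (z y : Fin k → ℝ) : ℝ≥0∞ :=
  f (s • (z + y)) * f (s • (z - y))

variable {k : ℕ} {f : (Fin k → ℝ) → ℝ≥0∞} {Q : Matrix (Fin k) (Fin k) ℝ} {s : ℝ}

@[fun_prop]
lemma measurable_rotSlice (hf : Measurable f) :
    Measurable fun q : (Fin k → ℝ) × (Fin k → ℝ) => rotSlice s f q.1 q.2 := by
  unfold rotSlice
  fun_prop

lemma MidLogConvex.sq_comp_smul_le (hf : MidLogConvex f Q) (hs : 2 * s ^ 2 = 1)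
    (u v : Fin k → ℝ) : f (s • u) ^ 2 ≤ f (s • (u + v)) * f (s • (u - v)) *
      ENNReal.ofReal (Real.exp (Real.pi * (Q *ᵥ v ⬝ᵥ v))) := by
  have h := hf (s • u) (s • v)
  rw [← smul_add, ← smul_sub, mulVec_smul, dotProduct_smul, smul_dotProduct] at h
  simp only [smul_eq_mul] at h
  rwa [show 2 * Real.pi * (s * (s * (Q *ᵥ v ⬝ᵥ v))) =
    (2 * s ^ 2) * (Real.pi * (Q *ᵥ v ⬝ᵥ v)) by ring, hs, one_mul] at h

lemma ofReal_exp_pi_sq (t : ℝ) : ENNReal.ofReal (Real.exp (Real.pi * t)) *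
    ENNReal.ofReal (Real.exp (Real.pi * t)) = ENNReal.ofReal (Real.exp (2 * Real.pi * t)) := by
  rw [← ENNReal.ofReal_mul (Real.exp_pos _).le, ← Real.exp_add]
  congr 2
  ring

lemma MidLogConvex.rotSlice_sq_le (hf : MidLogConvex f Q) (hs : 2 * s ^ 2 = 1)
    (z y v : Fin k → ℝ) : rotSlice s f z y ^ 2 ≤ rotSlice s f (z + v) y * rotSlice s f (z - v) y *
      ENNReal.ofReal (Real.exp (2 * Real.pi * (Q *ᵥ v ⬝ᵥ v))) := by
  rw [← ofReal_exp_pi_sq]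
  unfold rotSlice
  rw [mul_pow]
  refine (mul_le_mul' (hf.sq_comp_smul_le hs _ v) (hf.sq_comp_smul_le hs _ v)).trans_eq ?_
  rw [add_right_comm z y v, add_sub_right_comm z y v, sub_add_eq_add_sub z y v,
    sub_right_comm z y v]
  ring

lemma MidLogConvex.rotSlice (hf : MidLogConvex f Q) (hs : 2 * s ^ 2 = 1)
    (z : Fin k → ℝ) : MidLogConvex (rotSlice s f z) Q := fun y v => by
  rw [← ofReal_exp_pi_sq]
  unfold _root_.rotSlice
  rw [mul_pow]
  refine (mul_le_mul' (hf.sq_comp_smul_le hs _ v) (hf.sq_comp_smul_le hs _ v)).trans_eq ?_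
  rw [← add_assoc, ← add_sub_assoc, show z - y + v = z - (y - v) by abel,
    show z - y - v = z - (y + v) by abel]
  ring

/-- The marginal of the rotated tensor square of `f`. -/
def rotMarginal {k : ℕ} (s : ℝ) (f : (Fin k → ℝ) → ℝ≥0∞) (z : Fin k → ℝ) : ℝ≥0∞ :=
  ∫⁻ y, rotSlice s f z y

lemma measurable_rotMarginal (hf : Measurable f) : Measurable (rotMarginal s f) :=
  (measurable_rotSlice hf).lintegral_prod_right'

lemma lintegral_rotMarginal (hf : Measurable f) (hs : 2 * s ^ 2 = 1) :
    ∫⁻ z, rotMarginal s f z = (∫⁻ y, f y) * ∫⁻ y, f y :=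
  lintegral_lintegral_rotate hf hf hs

lemma rotMarginal_ne_zero (hf : Measurable f) (hpos : ∀ y, f y ≠ 0) (z : Fin k → ℝ) :
    rotMarginal s f z ≠ 0 := by
  refine (lintegral_pos_iff_support ?_).mpr ?_ |>.ne'
  · unfold rotSlice
    fun_prop
  · have : Function.support (rotSlice s f z) = Set.univ :=
      Set.eq_univ_of_forall fun y => mul_ne_zero (hpos _) (hpos _)
    rw [this]
    exact Measure.measure_univ_pos.mpr (NeZero.ne _)

lemma MidLogConvex.rotMarginal (hf : Measurable f) (hfQ : MidLogConvex f Q)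
    (hs : 2 * s ^ 2 = 1) : MidLogConvex (rotMarginal s f) Q := fun z v => by
  set e := ENNReal.ofReal (Real.exp (2 * Real.pi * (Q *ᵥ v ⬝ᵥ v)))
  have hm : ∀ z, Measurable (_root_.rotSlice s f z) := fun z => by
    unfold _root_.rotSlice
    fun_prop
  have h1 : _root_.rotMarginal s f z ≤ (_root_.rotMarginal s f (z + v)) ^ (1 / 2 : ℝ) *
      (_root_.rotMarginal s f (z - v)) ^ (1 / 2 : ℝ) * e ^ (1 / 2 : ℝ) := by
    calc _root_.rotMarginal s f z
        ≤ ∫⁻ y, _root_.rotSlice s f (z + v) y ^ (1 / 2 : ℝ) *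
          _root_.rotSlice s f (z - v) y ^ (1 / 2 : ℝ) * e ^ (1 / 2 : ℝ) := by
          refine lintegral_mono fun y => ?_
          have h := ENNReal.rpow_le_rpow (hfQ.rotSlice_sq_le hs z y v)
            (z := 1 / 2) (by norm_num)
          rwa [← ENNReal.rpow_natCast, ← ENNReal.rpow_mul,
            ENNReal.mul_rpow_of_nonneg _ _ (by norm_num),
            ENNReal.mul_rpow_of_nonneg _ _ (by norm_num), Nat.cast_two,
            show (2 : ℝ) * (1 / 2) = 1 by norm_num, ENNReal.rpow_one] at h
      _ = (∫⁻ y, _root_.rotSlice s f (z + v) y ^ (1 / 2 : ℝ) *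
          _root_.rotSlice s f (z - v) y ^ (1 / 2 : ℝ)) * e ^ (1 / 2 : ℝ) :=
          lintegral_mul_const _ (((hm _).pow_const _).mul ((hm _).pow_const _))
      _ ≤ _ := by
          gcongr
          exact ENNReal.lintegral_mul_norm_pow_le (hm _).aemeasurable (hm _).aemeasurable
            (by norm_num) (by norm_num) (by norm_num)
  calc _ ≤ ((_root_.rotMarginal s f (z + v)) ^ (1 / 2 : ℝ) *
      (_root_.rotMarginal s f (z - v)) ^ (1 / 2 : ℝ) * e ^ (1 / 2 : ℝ)) ^ 2 := by gcongr
    _ = _ := by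
      have h2 : ∀ x : ℝ≥0∞, (x ^ (1 / 2 : ℝ)) ^ 2 = x := fun x => by
        rw [← ENNReal.rpow_natCast, ← ENNReal.rpow_mul]
        norm_num
      rw [mul_pow, mul_pow, h2, h2, h2]

end Doubling

section Extremizer

variable {ι : Type*} [Fintype ι] {n : ℕ} {k : ι → ℕ}

lemma prod_rotSlice_rpow {C : ∀ i, Matrix (Fin (k i)) (Fin n) ℝ} {p : ι → ℝ} (hp : ∀ i, 0 < p i)
    (f : ∀ i, (Fin (k i) → ℝ) → ℝ≥0∞) (s : ℝ) (x y : Fin n → ℝ) :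
    ∏ i, rotSlice s (f i) (C i *ᵥ x) (C i *ᵥ y) ^ p i =
      (∏ i, f i (C i *ᵥ (s • (x + y))) ^ p i) * ∏ i, f i (C i *ᵥ (s • (x - y))) ^ p i := by
  rw [← Finset.prod_mul_distrib]
  refine Finset.prod_congr rfl fun i _ => ?_
  rw [rotSlice, ENNReal.mul_rpow_of_nonneg _ _ (hp i).le]
  simp only [mulVec_smul, mulVec_add, mulVec_sub]

/-- The rotated tensor square of an extremizer has extremizing slices. -/
lemma exists_extremizing_slice [DecidableEq ι] {C : ∀ i, Matrix (Fin (k i)) (Fin n) ℝ}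
    (hker : ∀ x : Fin n → ℝ, (∀ i, C i *ᵥ x = 0) → x = 0) {p : ι → ℝ} (hp : ∀ i, 0 < p i)
    {Q : ∀ i, Matrix (Fin (k i)) (Fin (k i)) ℝ} (hQ : ∀ i, (Q i).PosDef) {β : ℝ} (hβ0 : 0 < β)
    (hβ : ∀ B : ∀ i, Matrix (Fin (k i)) (Fin (k i)) ℝ,
      (∀ i, (B i).PosDef ∧ (Q i - B i).PosSemidef) →
      ∏ i, (B i).det ^ p i ≤ β * (blMatrix C p B).det)
    {f : ∀ i, (Fin (k i) → ℝ) → ℝ≥0∞} (hf : ∀ i, Measurable (f i))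
    (hfQ : ∀ i, MidLogConvex (f i) (Q i)) (hpos : ∀ i y, f i y ≠ 0)
    (hfin : ∀ i, ∫⁻ y, f i y ≠ ⊤)
    (hext : ∫⁻ x, ∏ i, f i (C i *ᵥ x) ^ p i =
      ENNReal.ofReal (√β) * ∏ i, (∫⁻ y, f i y) ^ p i) {s : ℝ} (hs : 2 * s ^ 2 = 1) :
    ∃ x, (∀ i, rotMarginal s (f i) (C i *ᵥ x) ≠ ⊤) ∧
      ∫⁻ y, ∏ i, rotSlice s (f i) (C i *ᵥ x) (C i *ᵥ y) ^ p i =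
        ENNReal.ofReal (√β) * ∏ i, rotMarginal s (f i) (C i *ᵥ x) ^ p i := by
  set b := ENNReal.ofReal (√β) with hb
  have hb0 : b ≠ 0 := by simpa [hb] using hβ0
  set F : (Fin n → ℝ) → ℝ≥0∞ := fun x => ∏ i, f i (C i *ᵥ x) ^ p i with hF
  have hFm : Measurable F :=
    Finset.measurable_fun_prod _ fun i _ => ((hf i).comp (by fun_prop)).pow_const _
  set J : (Fin n → ℝ) → ℝ≥0∞ := fun x =>
    ∫⁻ y, ∏ i, rotSlice s (f i) (C i *ᵥ x) (C i *ᵥ y) ^ p i with hJ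
  set R : (Fin n → ℝ) → ℝ≥0∞ := fun x =>
    b * ∏ i, rotMarginal s (f i) (C i *ᵥ x) ^ p i with hR
  have hRm : Measurable R := measurable_const.mul <|
    Finset.measurable_fun_prod _ fun i _ =>
      ((measurable_rotMarginal (hf i)).comp (by fun_prop)).pow_const _
  have hJR : ∀ x, J x ≤ R x := fun x =>
    lintegral_prod_rpow_le hker hp hQ hβ0 hβ
      (fun i => by unfold rotSlice; have := hf i; fun_prop) (fun i => (hfQ i).rotSlice hs _)
      fun i => rotMarginal_ne_zero (hf i) (hpos i) _
  have hJint : ∫⁻ x, J x = (∫⁻ x, F x) * ∫⁻ x, F x := by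
    rw [← lintegral_lintegral_rotate hFm hFm hs]
    exact lintegral_congr fun x => lintegral_congr fun y => prod_rotSlice_rpow hp f s x y
  have hRint : ∫⁻ x, R x ≤ (∫⁻ x, F x) * ∫⁻ x, F x := by
    rw [lintegral_const_mul' _ _ ENNReal.ofReal_ne_top, hext]
    have h1 := lintegral_prod_rpow_le hker hp hQ hβ0 hβ (fun i => measurable_rotMarginal (hf i))
      (fun i => MidLogConvex.rotMarginal (hf i) (hfQ i) hs) (fun i => by
        rw [lintegral_rotMarginal (hf i) hs]
        have : ∫⁻ y, f i y ≠ 0 := by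
          refine ((lintegral_pos_iff_support (hf i)).mpr ?_).ne'
          rw [show Function.support (f i) = Set.univ from Set.eq_univ_of_forall (hpos i)]
          exact Measure.measure_univ_pos.mpr (NeZero.ne _)
        exact mul_ne_zero this this)
    refine (mul_le_mul_right h1 b).trans_eq ?_
    simp only [lintegral_rotMarginal (hf _) hs, ENNReal.mul_rpow_of_nonneg _ _ (hp _).le,
      Finset.prod_mul_distrib]
    ring
  have hFtop : ∫⁻ x, F x ≠ ⊤ := by
    rw [hext]
    exact ENNReal.mul_ne_top ENNReal.ofReal_ne_top
      (ENNReal.prod_ne_top fun i _ => ENNReal.rpow_ne_top_of_nonneg (hp i).le (hfin i))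
  have hJtop : ∫⁻ x, J x ≠ ⊤ := by
    rw [hJint]
    exact ENNReal.mul_ne_top hFtop hFtop
  have hae := ae_eq_of_ae_le_of_lintegral_le (Eventually.of_forall hJR) hJtop hRm.aemeasurable
    (hRint.trans hJint.ge)
  have hRlt : ∀ᵐ x, R x < ⊤ := ae_lt_top hRm (hRint.trans_lt
    (ENNReal.mul_lt_top hFtop.lt_top hFtop.lt_top)).ne
  obtain ⟨x, hx, hxt⟩ := (hae.and hRlt).exists
  refine ⟨x, fun i hi => hxt.ne ?_, hx⟩
  have h1 : ∏ i, rotMarginal s (f i) (C i *ᵥ x) ^ p i = ⊤ := by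
    rw [← Finset.mul_prod_erase _ _ (Finset.mem_univ i), hi, ENNReal.top_rpow_of_pos (hp i)]
    refine ENNReal.top_mul (Finset.prod_ne_zero_iff.mpr fun j _ => ?_)
    simp [ENNReal.rpow_eq_zero_iff, rotMarginal_ne_zero (hf j) (hpos j), (hp j).le]
  simp only [hR, h1, ENNReal.mul_top hb0]

end Extremizer

section Limit

lemma mul_le_rpow_add {a c ε : ℝ} (ha : 0 ≤ a) (hc : 0 ≤ c) (hε : 0 < ε) :
    a * c ≤ (a * c) ^ (1 + ε) + ε * (a + c) := by
  rcases (mul_nonneg ha hc).eq_or_lt with h | h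
  · rw [← h, Real.zero_rpow (by linarith)]
    positivity
  set u := √(a * c) with hu
  have hu0 : 0 < u := Real.sqrt_pos.mpr h
  have hu2 : a * c = u ^ 2 := (Real.sq_sqrt h.le).symm
  have hlog : Real.log (a * c) = 2 * Real.log u := by rw [hu2, Real.log_pow]; norm_num
  have h1 : Real.log u⁻¹ ≤ u⁻¹ - 1 := Real.log_le_sub_one_of_pos (inv_pos.mpr hu0)
  rw [Real.log_inv] at h1
  have h2 : 1 + ε * Real.log (a * c) ≤ (a * c) ^ ε := by
    rw [Real.rpow_def_of_pos h]
    linarith [Real.add_one_le_exp (Real.log (a * c) * ε)]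
  have h3 : -(u ^ 2 * Real.log u) ≤ u - u ^ 2 := by
    have := mul_le_mul_of_nonneg_left h1 (sq_nonneg u)
    have e : u ^ 2 * (u⁻¹ - 1) = u - u ^ 2 := by field_simp
    linarith
  have h4 : 2 * u ≤ a + c := by
    refine abs_le_of_sq_le_sq' ?_ (by linarith) |>.2
    nlinarith [sq_nonneg (a - c)]
  have h5 : u ^ 2 * (1 + ε * (2 * Real.log u)) ≤ u ^ 2 * (a * c) ^ ε := by
    rw [← hlog]
    exact mul_le_mul_of_nonneg_left h2 (sq_nonneg u)
  rw [Real.rpow_add h, Real.rpow_one]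
  have h6 : ε * -(u ^ 2 * Real.log u) ≤ ε * (u - u ^ 2) := mul_le_mul_of_nonneg_left h3 hε.le
  have h7 : ε * (2 * u) ≤ ε * (a + c) := mul_le_mul_of_nonneg_left h4 hε.le
  have h8 : 0 ≤ ε * u ^ 2 := by positivity
  rw [hu2] at h5 ⊢
  nlinarith

lemma ENNReal.mul_le_rpow_add {a c : ℝ≥0∞} (ha : a ≠ ⊤) (hc : c ≠ ⊤) {ε : ℝ} (hε : 0 < ε) :
    a * c ≤ (a * c) ^ (1 + ε) + ENNReal.ofReal ε * (a + c) := by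
  have h := ENNReal.ofReal_le_ofReal
    (_root_.mul_le_rpow_add (a := a.toReal) (c := c.toReal) toReal_nonneg toReal_nonneg hε)
  rwa [ENNReal.ofReal_add (by positivity) (by positivity), ENNReal.ofReal_mul hε.le,
    ENNReal.ofReal_add toReal_nonneg toReal_nonneg, ← ENNReal.ofReal_rpow_of_nonneg
    (by positivity) (by linarith), ENNReal.ofReal_mul toReal_nonneg, ENNReal.ofReal_toReal ha,
    ENNReal.ofReal_toReal hc] at h

lemma exp_neg_two_mul_le {x c ε : ℝ} (hx : 0 < x) (hc : 0 ≤ c) (hε : 0 < ε) (hεc : ε * c ≤ 1 / 2)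
    (h : 1 - ε * c ≤ x ^ ε) : Real.exp (-(2 * c)) ≤ x := by
  rw [← Real.rpow_le_rpow_iff (Real.exp_pos _).le hx.le hε, ← Real.exp_mul]
  refine le_trans ?_ h
  have hu : 0 ≤ ε * c := by positivity
  have h1 := Real.add_one_le_exp (2 * (ε * c))
  rw [show -(2 * c) * ε = -(2 * (ε * c)) by ring, Real.exp_neg, inv_le_iff_one_le_mul₀ (Real.exp_pos _)]
  nlinarith

variable {ι : Type*} [Fintype ι] {n : ℕ} {k : ι → ℕ}

/-- A family of almost extremal Gaussians whose determinants stay bounded below subconverges to an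
extremal Gaussian. -/
lemma exists_extremal_of_forall_almost_extremal [DecidableEq ι]
    {C : ∀ i, Matrix (Fin (k i)) (Fin n) ℝ}
    (hker : ∀ x : Fin n → ℝ, (∀ i, C i *ᵥ x = 0) → x = 0) {p : ι → ℝ} (hp : ∀ i, 0 < p i)
    {Q : ∀ i, Matrix (Fin (k i)) (Fin (k i)) ℝ} (hQ : ∀ i, (Q i).PosDef) {β : ℝ} (hβ0 : 0 < β)
    (hβ : ∀ B : ∀ i, Matrix (Fin (k i)) (Fin (k i)) ℝ,
      (∀ i, (B i).PosDef ∧ (Q i - B i).PosSemidef) →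
      ∏ i, (B i).det ^ p i ≤ β * (blMatrix C p B).det) {N c : ℝ} (hN : 0 < N) (hc : 0 ≤ c)
    (h : ∀ ε : ℝ, 0 < ε → ∃ B : ∀ i, Matrix (Fin (k i)) (Fin (k i)) ℝ,
      (∀ i, (B i).PosDef ∧ (Q i - B i).PosSemidef) ∧
      √(blMatrix C p B).det * (√β * N) ≤ (√(∏ i, (B i).det ^ p i) * N) ^ (1 + ε) +
        ε * c * √(blMatrix C p B).det) :
    ∃ B : ∀ i, Matrix (Fin (k i)) (Fin (k i)) ℝ,
      (∀ i, (B i).PosDef ∧ (Q i - B i).PosSemidef) ∧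
      ∏ i, (B i).det ^ p i = β * (blMatrix C p B).det := by
  obtain ⟨g, hg⟩ := (isCompact_psdBox Q).bddAbove_image
    (continuous_prod_det_rpow (k := k) fun i => (hp i).le).continuousOn
  have hg' : ∀ B : ∀ i, Matrix (Fin (k i)) (Fin (k i)) ℝ,
      (∀ i, (B i).PosDef ∧ (Q i - B i).PosSemidef) → ∏ i, (B i).det ^ p i ≤ g := fun B hB =>
    hg ⟨B, fun i => ⟨(hB i).1.posSemidef, (hB i).2⟩, rfl⟩
  have hgpos : 0 < g := (prod_det_rpow_pos hQ).trans_le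
    (hg' Q fun i => ⟨hQ i, by rw [sub_self]; exact PosSemidef.zero⟩)
  have hb0 : 0 < √β := Real.sqrt_pos.mpr hβ0
  set u : ℕ → ℝ := fun j => 1 / ((j : ℝ) + 1) with hu
  have hu0 : ∀ j, 0 < u j := fun j => by positivity
  have hulim : Tendsto u atTop (𝓝 0) := tendsto_one_div_add_atTop_nhds_zero_nat
  choose B hB hBle using fun j => h (u j) (hu0 j)
  set G : (∀ i, Matrix (Fin (k i)) (Fin (k i)) ℝ) → ℝ := fun B => √(∏ i, (B i).det ^ p i) with hG
  set D : (∀ i, Matrix (Fin (k i)) (Fin (k i)) ℝ) → ℝ := fun B => √(blMatrix C p B).det with hD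
  have hGc : Continuous G := Real.continuous_sqrt.comp
    (continuous_prod_det_rpow (k := k) fun i => (hp i).le)
  have hDc : Continuous D := Real.continuous_sqrt.comp (continuous_det_blMatrix C p)
  have hG0 : ∀ j, 0 < G (B j) := fun j =>
    Real.sqrt_pos.mpr (prod_det_rpow_pos fun i => (hB j i).1)
  have hD0 : ∀ j, 0 < D (B j) := fun j =>
    Real.sqrt_pos.mpr (posDef_blMatrix hker hp fun i => (hB j i).1).det_pos
  have hle : ∀ j, D (B j) * (√β * N) ≤
      G (B j) * N * (G (B j) * N) ^ u j + u j * c * D (B j) := fun j => by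
    have h1 := hBle j
    rwa [Real.rpow_add (mul_pos (hG0 j) hN), Real.rpow_one] at h1
  have hlower : ∀ᶠ j in atTop, Real.exp (-(2 * (c / (√β * N)))) ≤ G (B j) * N := by
    have h1 : Tendsto (fun j => u j * (c / (√β * N))) atTop (𝓝 0) := by
      simpa using hulim.mul_const (c / (√β * N))
    filter_upwards [h1.eventually (ge_mem_nhds (show (0 : ℝ) < 1 / 2 by norm_num))] with j hj
    refine exp_neg_two_mul_le (mul_pos (hG0 j) hN) (by positivity) (hu0 j) hj ?_
    have h2 : G (B j) ≤ √β * D (B j) := by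
      rw [hG, hD, ← Real.sqrt_mul hβ0.le]
      exact Real.sqrt_le_sqrt (hβ _ (hB j))
    have h3 : G (B j) * N * (G (B j) * N) ^ u j ≤ √β * D (B j) * N * (G (B j) * N) ^ u j := by
      gcongr
    have h4 : D (B j) * (√β * N) * (1 - u j * (c / (√β * N))) ≤
        D (B j) * (√β * N) * (G (B j) * N) ^ u j := by
      have e : D (B j) * (√β * N) * (1 - u j * (c / (√β * N))) =
          D (B j) * (√β * N) - u j * c * D (B j) := by field_simp
      rw [e]
      linarith [hle j]
    exact le_of_mul_le_mul_left h4 (mul_pos (hD0 j) (mul_pos hb0 hN))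
  have hfc : ∀ i, FirstCountableTopology (Matrix (Fin (k i)) (Fin (k i)) ℝ) := fun i =>
    inferInstanceAs (FirstCountableTopology (Fin (k i) → Fin (k i) → ℝ))
  obtain ⟨B', hB', φ, hφ, hlim⟩ := (isCompact_psdBox Q).tendsto_subseq (x := B)
    fun j i => ⟨(hB j i).1.posSemidef, (hB j i).2⟩
  have hGlim : Tendsto (fun j => G (B (φ j))) atTop (𝓝 (G B')) := (hGc.tendsto B').comp hlim
  have hDlim : Tendsto (fun j => D (B (φ j))) atTop (𝓝 (D B')) := (hDc.tendsto B').comp hlim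
  have huφ : Tendsto (fun j => u (φ j)) atTop (𝓝 0) := hulim.comp hφ.tendsto_atTop
  have hGpos : 0 < G B' := by
    have h1 := ge_of_tendsto (hGlim.mul_const N) (hφ.tendsto_atTop.eventually hlower)
    exact pos_of_mul_pos_left ((Real.exp_pos _).trans_le h1) hN.le
  have hBpd : ∀ i, (B' i).PosDef ∧ (Q i - B' i).PosSemidef := fun i => by
    refine ⟨(hB' i).1.posDef_iff_det_ne_zero.mpr fun h0 => ?_, (hB' i).2⟩
    have : ∏ i, (B' i).det ^ p i = 0 :=
      Finset.prod_eq_zero (Finset.mem_univ i) (by rw [h0, Real.zero_rpow (hp i).ne'])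
    simp [hG, this] at hGpos
  refine ⟨B', hBpd, le_antisymm (hβ B' hBpd) ?_⟩
  have hkey : D B' * (√β * N) ≤ G B' * N * 1 + 0 * c * D B' := by
    have hr : Tendsto (fun j => (√g * N) ^ u (φ j)) atTop (𝓝 1) := by
      have h2 := (Real.continuousAt_const_rpow
        (mul_pos (Real.sqrt_pos.mpr hgpos) hN).ne').tendsto.comp huφ
      rwa [Real.rpow_zero] at h2
    refine le_of_tendsto_of_tendsto' (hDlim.mul_const _)
      (((hGlim.mul_const N).mul hr).add ((huφ.mul_const c).mul hDlim)) fun j => ?_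
    refine (hle (φ j)).trans ?_
    have h1 : G (B (φ j)) ≤ √g := Real.sqrt_le_sqrt (hg' _ (hB _))
    have h2 := hG0 (φ j)
    have h3 := (hu0 (φ j)).le
    gcongr
  have h1 : √β * D B' ≤ G B' := by
    refine le_of_mul_le_mul_right ?_ hN
    linarith
  rw [hG, hD, ← Real.sqrt_mul hβ0.le] at h1
  exact (Real.sqrt_le_sqrt_iff (prod_det_rpow_pos fun i => (hBpd i).1).le).mp h1

/-- An extremizer for the regularized Brascamp–Lieb inequality yields a Gaussian extremizer. -/
lemma exists_extremal_of_extremizer [DecidableEq ι] {C : ∀ i, Matrix (Fin (k i)) (Fin n) ℝ}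
    (hker : ∀ x : Fin n → ℝ, (∀ i, C i *ᵥ x = 0) → x = 0) {p : ι → ℝ} (hp : ∀ i, 0 < p i)
    {Q : ∀ i, Matrix (Fin (k i)) (Fin (k i)) ℝ} (hQ : ∀ i, (Q i).PosDef) {β : ℝ} (hβ0 : 0 < β)
    (hβ : ∀ B : ∀ i, Matrix (Fin (k i)) (Fin (k i)) ℝ,
      (∀ i, (B i).PosDef ∧ (Q i - B i).PosSemidef) →
      ∏ i, (B i).det ^ p i ≤ β * (blMatrix C p B).det)
    {f : ∀ i, (Fin (k i) → ℝ) → ℝ≥0∞} (hf : ∀ i, Measurable (f i))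
    (hfQ : ∀ i, MidLogConvex (f i) (Q i)) (hpos : ∀ i y, f i y ≠ 0) (htop : ∀ i y, f i y ≠ ⊤)
    (hfin : ∀ i, ∫⁻ y, f i y ≠ ⊤)
    (hext : ∫⁻ x, ∏ i, f i (C i *ᵥ x) ^ p i =
      ENNReal.ofReal (√β) * ∏ i, (∫⁻ y, f i y) ^ p i) :
    ∃ B : ∀ i, Matrix (Fin (k i)) (Fin (k i)) ℝ,
      (∀ i, (B i).PosDef ∧ (Q i - B i).PosSemidef) ∧
      ∏ i, (B i).det ^ p i = β * (blMatrix C p B).det := by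
  obtain ⟨s, hs⟩ : ∃ s : ℝ, 2 * s ^ 2 = 1 := ⟨√(1 / 2), by
    rw [Real.sq_sqrt (by norm_num)]; norm_num⟩
  have hs0 : s ≠ 0 := by
    rintro rfl
    norm_num at hs
  obtain ⟨x, hxtop, hx⟩ :=
    exists_extremizing_slice hker hp hQ hβ0 hβ hf hfQ hpos hfin hext hs
  set F : (Fin n → ℝ) → ℝ≥0∞ := fun x => ∏ i, f i (C i *ᵥ x) ^ p i with hF
  have hFm : Measurable F :=
    Finset.measurable_fun_prod _ fun i _ => ((hf i).comp (by fun_prop)).pow_const _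
  have hFtop : ∀ x, F x ≠ ⊤ := fun x =>
    ENNReal.prod_ne_top fun i _ => ENNReal.rpow_ne_top_of_nonneg (hp i).le (htop i _)
  have hFint : ∫⁻ x, F x ≠ ⊤ := by
    rw [hext]
    exact ENNReal.mul_ne_top ENNReal.ofReal_ne_top
      (ENNReal.prod_ne_top fun i _ => ENNReal.rpow_ne_top_of_nonneg (hp i).le (hfin i))
  set N := ∏ i, rotMarginal s (f i) (C i *ᵥ x) ^ p i with hN
  have hNtop : N ≠ ⊤ :=
    ENNReal.prod_ne_top fun i _ => ENNReal.rpow_ne_top_of_nonneg (hp i).le (hxtop i)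
  have hN0 : N ≠ 0 := Finset.prod_ne_zero_iff.mpr fun j _ => by
    simp [ENNReal.rpow_eq_zero_iff, rotMarginal_ne_zero (hf j) (hpos j), (hp j).le]
  have hplus : ∫⁻ y, F (s • (x + y)) ≠ ⊤ := by
    simp only [smul_add]
    rw [lintegral_comp_add_smul hFm _ hs0]
    exact ENNReal.mul_ne_top ENNReal.ofReal_ne_top hFint
  have hminus : ∫⁻ y, F (s • (x - y)) ≠ ⊤ := by
    have hneg : ∀ y, s • (x - y) = s • x + (-s) • y := fun y => by module
    simp only [hneg]
    rw [lintegral_comp_add_smul hFm _ (neg_ne_zero.mpr hs0)]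
    exact ENNReal.mul_ne_top ENNReal.ofReal_ne_top hFint
  set c := (∫⁻ y, F (s • (x + y))) + ∫⁻ y, F (s • (x - y)) with hc
  have hctop : c ≠ ⊤ := ENNReal.add_ne_top.mpr ⟨hplus, hminus⟩
  simp only [prod_rotSlice_rpow hp] at hx
  refine exists_extremal_of_forall_almost_extremal hker hp hQ hβ0 hβ (N := N.toReal)
    (c := c.toReal) (ENNReal.toReal_pos hN0 hNtop) ENNReal.toReal_nonneg fun ε hε => ?_
  obtain ⟨B, hB, h⟩ := exists_gaussian_bound hker hp hQ hβ hε
  refine ⟨B, hB, ?_⟩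
  have h1 := h (fun i => rotSlice s (f i) (C i *ᵥ x))
    (fun i => by unfold rotSlice; have := hf i; fun_prop) (fun i => (hfQ i).rotSlice hs _) hxtop
  simp only [prod_rotSlice_rpow hp] at h1
  rw [prod_ofReal_sqrt_det_mul_rpow hp fun i => (hB i).1] at h1
  have h2 : ENNReal.ofReal (√β) * N ≤
      (∫⁻ y, (F (s • (x + y)) * F (s • (x - y))) ^ (1 + ε)) + ENNReal.ofReal ε * c := by
    rw [← hx, hc, ← lintegral_add_left (by fun_prop), ← lintegral_const_mul _ (by fun_prop),
      ← lintegral_add_right _ (by fun_prop)]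
    exact lintegral_mono fun y => ENNReal.mul_le_rpow_add (hFtop _) (hFtop _) hε
  have h3 : ENNReal.ofReal (√(blMatrix C p B).det) * (ENNReal.ofReal (√β) * N) ≤
      (ENNReal.ofReal (√(∏ i, (B i).det ^ p i)) * N) ^ (1 + ε) +
        ENNReal.ofReal ε * c * ENNReal.ofReal (√(blMatrix C p B).det) := by
    refine (mul_le_mul_right h2 _).trans ?_
    rw [mul_add, mul_comm _ (ENNReal.ofReal ε * c)]
    exact add_le_add h1 le_rfl
  have h4 := ENNReal.toReal_mono (by
    refine ENNReal.add_ne_top.mpr ⟨ENNReal.rpow_ne_top_of_nonneg (by linarith) ?_, ?_⟩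
    · exact ENNReal.mul_ne_top ENNReal.ofReal_ne_top hNtop
    · exact ENNReal.mul_ne_top (ENNReal.mul_ne_top ENNReal.ofReal_ne_top hctop)
        ENNReal.ofReal_ne_top) h3
  rw [ENNReal.toReal_add (ENNReal.rpow_ne_top_of_nonneg (by linarith)
    (ENNReal.mul_ne_top ENNReal.ofReal_ne_top hNtop)) (ENNReal.mul_ne_top
    (ENNReal.mul_ne_top ENNReal.ofReal_ne_top hctop) ENNReal.ofReal_ne_top)] at h4
  simpa only [ENNReal.toReal_mul, ← ENNReal.toReal_rpow, ENNReal.toReal_ofReal hε.le,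
    ENNReal.toReal_ofReal (Real.sqrt_nonneg _)] using h4

end Limit

section LogConvex

variable {k : ℕ}

lemma LogConvexFun.continuous {h : (Fin k → ℝ) → ℝ} (hh : LogConvexFun h) : Continuous h := by
  have hconv : ConvexOn ℝ Set.univ h := ⟨convex_univ, fun x _ y _ a b ha hb hab =>
    (hh.2 x y a b ha hb hab).trans
      (Real.geom_mean_le_arith_mean2_weighted ha hb (hh.1 x) (hh.1 y) hab)⟩
  exact continuousOn_univ.mp (hconv.continuousOn isOpen_univ)

lemma LogConvexFun.eq_zero {h : (Fin k → ℝ) → ℝ} (hh : LogConvexFun h) {x : Fin k → ℝ}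
    (hx : h x = 0) (y : Fin k → ℝ) : h y = 0 := by
  refine le_antisymm ?_ (hh.1 y)
  have h1 := hh.2 x ((2 : ℝ) • y - x) (1 / 2) (1 / 2) (by norm_num) (by norm_num) (by norm_num)
  rw [hx, Real.zero_rpow (by norm_num), zero_mul] at h1
  rwa [show (1 / 2 : ℝ) • x + (1 / 2 : ℝ) • ((2 : ℝ) • y - x) = y by module] at h1

lemma LogConvexFun.sq_le {h : (Fin k → ℝ) → ℝ} (hh : LogConvexFun h) (y z : Fin k → ℝ) :
    h y ^ 2 ≤ h (y + z) * h (y - z) := by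
  have h1 := hh.2 (y + z) (y - z) (1 / 2) (1 / 2) (by norm_num) (by norm_num) (by norm_num)
  rw [show (1 / 2 : ℝ) • (y + z) + (1 / 2 : ℝ) • (y - z) = y by module,
    ← Real.mul_rpow (hh.1 _) (hh.1 _), ← Real.sqrt_eq_rpow] at h1
  exact (pow_le_pow_left₀ (hh.1 y) h1 2).trans_eq (Real.sq_sqrt (mul_nonneg (hh.1 _) (hh.1 _)))

lemma gaussFn_sq (Q : Matrix (Fin k) (Fin k) ℝ) (y z : Fin k → ℝ) :
    gaussFn Q y ^ 2 = gaussFn Q (y + z) * gaussFn Q (y - z) *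
      Real.exp (2 * Real.pi * (Q *ᵥ z ⬝ᵥ z)) := by
  unfold gaussFn
  rw [← Real.exp_add, ← Real.exp_add, ← Real.exp_nat_mul]
  congr 1
  simp only [mulVec_add, mulVec_sub, dotProduct_add, dotProduct_sub, add_dotProduct,
    sub_dotProduct]
  push_cast
  ring

variable {f : (Fin k → ℝ) → ℝ} {Q : Matrix (Fin k) (Fin k) ℝ}

lemma MoreLogConvex.measurable (hf : MoreLogConvex f Q) : Measurable f := by
  obtain ⟨h, hh, rfl⟩ := hf
  refine Measurable.mul ?_ hh.continuous.measurable
  exact ((measurable_dotProduct_mulVec Q).const_mul _).exp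

lemma MoreLogConvex.nonneg (hf : MoreLogConvex f Q) (y : Fin k → ℝ) : 0 ≤ f y := by
  obtain ⟨h, hh, rfl⟩ := hf
  exact mul_nonneg (Real.exp_pos _).le (hh.1 y)

lemma MoreLogConvex.pos (hf : MoreLogConvex f Q) (hne : ¬ f =ᵐ[volume] 0) (y : Fin k → ℝ) :
    0 < f y := by
  refine (hf.nonneg y).lt_of_ne' fun h0 => hne (Eventually.of_forall ?_)
  obtain ⟨h, hh, rfl⟩ := hf
  have hy : h y = 0 := (mul_eq_zero.mp h0).resolve_left (Real.exp_pos _).ne'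
  intro z
  simp [hh.eq_zero hy z]

lemma MoreLogConvex.midLogConvex (hf : MoreLogConvex f Q) :
    MidLogConvex (fun y => ENNReal.ofReal (f y)) Q := fun y z => by
  rw [← ENNReal.ofReal_pow (hf.nonneg _), ← ENNReal.ofReal_mul (hf.nonneg _),
    ← ENNReal.ofReal_mul (mul_nonneg (hf.nonneg _) (hf.nonneg _))]
  refine ENNReal.ofReal_le_ofReal ?_
  obtain ⟨h, hh, rfl⟩ := hf
  calc (gaussFn Q y * h y) ^ 2 = gaussFn Q y ^ 2 * h y ^ 2 := mul_pow _ _ _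
    _ ≤ gaussFn Q y ^ 2 * (h (y + z) * h (y - z)) := by
        gcongr
        exact hh.sq_le y z
    _ = _ := by
        rw [gaussFn_sq Q y z]
        ring

end LogConvex

lemma prod_ofReal_det_rpow_div {ι : Type*} [Fintype ι] {n : ℕ} {k : ι → ℕ}
    {C : ∀ i, Matrix (Fin (k i)) (Fin n) ℝ}
    (hker : ∀ x : Fin n → ℝ, (∀ i, C i *ᵥ x = 0) → x = 0) {p : ι → ℝ} (hp : ∀ i, 0 < p i)
    {B : ∀ i, Matrix (Fin (k i)) (Fin (k i)) ℝ} (hB : ∀ i, (B i).PosDef) :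
    (∏ i, ENNReal.ofReal ((B i).det) ^ p i) / ENNReal.ofReal ((blMatrix C p B).det) =
      ENNReal.ofReal ((∏ i, (B i).det ^ p i) / (blMatrix C p B).det) := by
  rw [ENNReal.ofReal_div_of_pos (posDef_blMatrix hker hp hB).det_pos,
    ENNReal.ofReal_prod_of_nonneg fun i _ => Real.rpow_nonneg (hB i).det_pos.le _]
  congr 1
  exact Finset.prod_congr rfl fun i _ => ENNReal.ofReal_rpow_of_pos (hB i).det_pos

/-- An extremizable regularized Brascamp–Lieb datum is Gaussian-extremizable. -/
theorem gaussian_extremizable_of_extremizable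
    {n m : ℕ} (hm : 1 ≤ m) {ni : Fin m → ℕ}
    (C : ∀ i, Matrix (Fin (ni i)) (Fin n) ℝ)
    (hCsurj : ∀ i, Function.Surjective (C i).mulVec)
    (hker : ∀ x : Fin n → ℝ, (∀ i, (C i).mulVec x = 0) → x = 0)
    (p : Fin m → ℝ) (hp : ∀ i, 0 < p i)
    (Q : ∀ i, Matrix (Fin (ni i)) (Fin (ni i)) ℝ) (hQ : ∀ i, (Q i).PosDef)
    (hBL : BLconst C p Q < ⊤)
    (f : ∀ i, (Fin (ni i) → ℝ) → ℝ)
    (hfint : ∀ i, Integrable (f i))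
    (hfne : ∀ i, ¬ (f i =ᵐ[volume] 0))
    (hflc : ∀ i, MoreLogConvex (f i) (Q i))
    (hext : (∫⁻ x : Fin n → ℝ, ENNReal.ofReal (∏ i, f i ((C i).mulVec x) ^ p i)) =
      BLconst C p Q * ∏ i, ENNReal.ofReal (∫ y, f i y) ^ p i) :
    ∃ B : ∀ i, Matrix (Fin (ni i)) (Fin (ni i)) ℝ,
      (∀ i, (B i).PosDef ∧ (Q i - B i).PosSemidef) ∧
        BLconst C p Q ^ (2 : ℕ) =
          (∏ i, ENNReal.ofReal ((B i).det) ^ p i) /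
            ENNReal.ofReal ((∑ i, p i • ((C i)ᵀ * B i * C i)).det) := by
  set β : ℝ := (BLconst C p Q).toReal ^ 2 with hβdef
  have hsqrt : ENNReal.ofReal (√β) = BLconst C p Q := by
    rw [hβdef, Real.sqrt_sq ENNReal.toReal_nonneg, ENNReal.ofReal_toReal hBL.ne]
  have hsq : BLconst C p Q ^ (2 : ℕ) = ENNReal.ofReal β := by
    rw [hβdef, ENNReal.ofReal_pow ENNReal.toReal_nonneg, ENNReal.ofReal_toReal hBL.ne]
  have hβ : ∀ B : ∀ i, Matrix (Fin (ni i)) (Fin (ni i)) ℝ,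
      (∀ i, (B i).PosDef ∧ (Q i - B i).PosSemidef) →
      ∏ i, (B i).det ^ p i ≤ β * (blMatrix C p B).det := fun B hB => by
    have h1 : ((∏ i, ENNReal.ofReal ((B i).det) ^ p i) /
        ENNReal.ofReal ((blMatrix C p B).det)) ^ ((2 : ℝ)⁻¹) ≤ BLconst C p Q :=
      le_iSup₂_of_le B hB le_rfl
    have h2 := pow_le_pow_left' h1 2
    rw [hsq, ← ENNReal.rpow_natCast, ← ENNReal.rpow_mul, Nat.cast_two,
      inv_mul_cancel₀ two_ne_zero, ENNReal.rpow_one,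
      prod_ofReal_det_rpow_div hker hp fun i => (hB i).1,
      ENNReal.ofReal_le_ofReal_iff (sq_nonneg _),
      div_le_iff₀ (posDef_blMatrix hker hp fun i => (hB i).1).det_pos] at h2
    exact h2
  have hβ0 : 0 < β := by
    have h1 := (prod_det_rpow_pos (p := p) hQ).trans_le
      (hβ Q fun i => ⟨hQ i, by rw [sub_self]; exact PosSemidef.zero⟩)
    exact pos_of_mul_pos_left h1 (posDef_blMatrix hker hp hQ).det_pos.le
  have hintegral : ∀ i, ∫⁻ y, ENNReal.ofReal (f i y) = ENNReal.ofReal (∫ y, f i y) := fun i =>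
    (ofReal_integral_eq_lintegral_ofReal (hfint i)
      (Eventually.of_forall (hflc i).nonneg)).symm
  obtain ⟨B, hB, hBeq⟩ := exists_extremal_of_extremizer hker hp hQ hβ0 hβ
    (f := fun i y => ENNReal.ofReal (f i y))
    (fun i => (hflc i).measurable.ennreal_ofReal) (fun i => (hflc i).midLogConvex)
    (fun i y => by simpa using (hflc i).pos (hfne i) y) (fun i y => ENNReal.ofReal_ne_top)
    (fun i => by rw [hintegral]; exact ENNReal.ofReal_ne_top) (by
      simp only [hintegral]
      rw [hsqrt, ← hext]
      refine lintegral_congr fun x => ?_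
      rw [ENNReal.ofReal_prod_of_nonneg fun i _ => Real.rpow_nonneg ((hflc i).nonneg _) _]
      exact Finset.prod_congr rfl fun i _ =>
        ENNReal.ofReal_rpow_of_nonneg ((hflc i).nonneg _) (hp i).le)
  refine ⟨B, hB, ?_⟩
  have hM := (posDef_blMatrix hker hp fun i => (hB i).1).det_pos
  refine Eq.trans ?_ (prod_ofReal_det_rpow_div hker hp fun i => (hB i).1).symm
  rw [hsq, hBeq, mul_div_cancel_right₀ _ hM.ne']
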